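/- In dimension 14, every finite set S of points on the unit sphere of EuclideanSpace ℝ (Fin 14) (i.e., ‖x‖ = 1 for all x ∈ S) such that any two distinct points of S are at Euclidean distance at least 1 has cardinality at most 3183; that is, the kissing number in dimension 14 is at most 3183. -/

import Mathlib

namespace Kiss

section PSD
open MvPolynomial

variable {m : ℕ}

noncomputable def fac (α : Fin m →₀ ℕ) : ℝ := ∏ i, ((α i).factorial : ℝ)

lemma fac_pos (α : Fin m →₀ ℕ) : 0 < fac α := by
  unfold fac; positivity

lemma fac_add_single (α : Fin m →₀ ℕ) (i : Fin m) :
    fac (α + Finsupp.single i 1) = fac α * ((α i : ℝ) + 1) := by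
  classical
  unfold fac
  rw [← Finset.mul_prod_erase _ _ (Finset.mem_univ i), ← Finset.mul_prod_erase Finset.univ
    (fun j => ((α j).factorial : ℝ)) (Finset.mem_univ i)]
  have h : ∏ x ∈ Finset.univ.erase i, (((α + Finsupp.single i 1 : Fin m →₀ ℕ) x).factorial : ℝ)
      = ∏ x ∈ Finset.univ.erase i, ((α x).factorial : ℝ) := by
    apply Finset.prod_congr rfl
    intro j hj
    have : i ≠ j := (Finset.ne_of_mem_erase hj).symm
    simp [Finsupp.single_apply, this]
  rw [h]
  simp only [Finsupp.add_apply, Finsupp.single_eq_same, Nat.factorial_succ]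
  push_cast; ring

/-- Fischer form -/
noncomputable def Bl (q : MvPolynomial (Fin m) ℝ) : MvPolynomial (Fin m) ℝ →ₗ[ℝ] ℝ :=
  (basisMonomials (Fin m) ℝ).constr ℝ (fun α => fac α * coeff α q)

lemma Bl_monomial (q : MvPolynomial (Fin m) ℝ) (α : Fin m →₀ ℕ) :
    Bl q (monomial α 1) = fac α * coeff α q := by
  have := (basisMonomials (Fin m) ℝ).constr_basis ℝ (fun α => fac α * coeff α q) α
  simpa [Bl] using this

lemma Bl_add (q q' p : MvPolynomial (Fin m) ℝ) : Bl (q + q') p = Bl q p + Bl q' p := by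
  have : Bl (q + q') = Bl q + Bl q' := by
    apply (basisMonomials (Fin m) ℝ).ext
    intro α
    simp only [coe_basisMonomials, LinearMap.add_apply, Bl_monomial, coeff_add]; ring
  rw [this]; rfl

lemma Bl_zero (p : MvPolynomial (Fin m) ℝ) : Bl 0 p = 0 := by
  have := Bl_add 0 0 p
  simp only [add_zero] at this; linarith

lemma Bl_smul (c : ℝ) (q p : MvPolynomial (Fin m) ℝ) : Bl (C c * q) p = c * Bl q p := by
  have : Bl (C c * q) = c • Bl q := by
    apply (basisMonomials (Fin m) ℝ).ext
    intro α
    simp only [coe_basisMonomials, LinearMap.smul_apply, Bl_monomial, coeff_C_mul, smul_eq_mul]; ring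
  rw [this]; rfl

lemma Bl_smul' (c : ℝ) (q p : MvPolynomial (Fin m) ℝ) : Bl q (C c * p) = c * Bl q p := by
  rw [← smul_eq_C_mul, map_smul]; rfl

lemma Bl_X (q p : MvPolynomial (Fin m) ℝ) (i : Fin m) : Bl q (X i * p) = Bl (pderiv i q) p := by
  have : (Bl q).comp (LinearMap.mulLeft ℝ (X i)) = Bl (pderiv i q) := by
    apply (basisMonomials (Fin m) ℝ).ext
    intro α
    simp only [coe_basisMonomials, LinearMap.comp_apply, LinearMap.mulLeft_apply]
    have h : (X i : MvPolynomial (Fin m) ℝ) * monomial α 1 = monomial (α + Finsupp.single i 1) 1 := by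
      rw [X, monomial_mul, add_comm]; simp
    rw [h, Bl_monomial, Bl_monomial, coeff_pderiv, fac_add_single]; ring
  rw [← this]; rfl

lemma Bl_self_nonneg (p : MvPolynomial (Fin m) ℝ) : 0 ≤ Bl p p := by
  have : Bl p p = ∑ α ∈ p.support, fac α * coeff α p ^ 2 := by
    have h0 : Bl p p = Bl p (∑ α ∈ p.support, monomial α (coeff α p)) := by rw [← p.as_sum]
    rw [h0, map_sum]
    apply Finset.sum_congr rfl
    intro α _
    have : monomial α (coeff α p) = C (coeff α p) * monomial α (1:ℝ) := by
      rw [C_mul_monomial, mul_one]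
    rw [this, Bl_smul', Bl_monomial]; ring
  rw [this]
  exact Finset.sum_nonneg fun α _ => mul_nonneg (fac_pos α).le (sq_nonneg _)

noncomputable def Lz (z : Fin m → ℝ) : MvPolynomial (Fin m) ℝ := ∑ i, C (z i) * X i
noncomputable def rho : MvPolynomial (Fin m) ℝ := ∑ i, X i * X i
noncomputable def Dz (z : Fin m → ℝ) (p : MvPolynomial (Fin m) ℝ) : MvPolynomial (Fin m) ℝ :=
  ∑ i, C (z i) * pderiv i p
noncomputable def Lap (p : MvPolynomial (Fin m) ℝ) : MvPolynomial (Fin m) ℝ :=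
  ∑ i, pderiv i (pderiv i p)

lemma Bl_L (z : Fin m → ℝ) (q p : MvPolynomial (Fin m) ℝ) :
    Bl q (Lz z * p) = Bl (Dz z q) p := by
  unfold Lz Dz
  rw [Finset.sum_mul, map_sum]
  have : ∀ s : Finset (Fin m), Bl (∑ i ∈ s, C (z i) * pderiv i q) p
      = ∑ i ∈ s, z i * Bl (pderiv i q) p := by
    classical
    intro s
    induction s using Finset.induction_on with
    | empty => simp [Bl_zero]
    | insert a s ha ih => rw [Finset.sum_insert ha, Finset.sum_insert ha, Bl_add, Bl_smul, ih]
  rw [this]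
  apply Finset.sum_congr rfl
  intro i _
  rw [mul_assoc, Bl_smul', Bl_X]

lemma Bl_rho (q p : MvPolynomial (Fin m) ℝ) :
    Bl q (rho * p) = Bl (Lap q) p := by
  unfold rho Lap
  rw [Finset.sum_mul, map_sum]
  have : ∀ s : Finset (Fin m), Bl (∑ i ∈ s, pderiv i (pderiv i q)) p
      = ∑ i ∈ s, Bl (pderiv i (pderiv i q)) p := by
    classical
    intro s
    induction s using Finset.induction_on with
    | empty => simp [Bl_zero]
    | insert a s ha ih => rw [Finset.sum_insert ha, Finset.sum_insert ha, Bl_add, ih]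
  rw [this]
  apply Finset.sum_congr rfl
  intro i _
  rw [mul_assoc, Bl_X, Bl_X]

lemma pderiv_L (z : Fin m → ℝ) (i : Fin m) : pderiv i (Lz z) = C (z i) := by
  classical
  unfold Lz
  simp [map_sum, pderiv_mul, pderiv_X, Pi.single_apply]

lemma pderiv_rho (i : Fin m) : pderiv i (rho : MvPolynomial (Fin m) ℝ) = 2 * X i := by
  classical
  unfold rho
  simp [map_sum, pderiv_mul, pderiv_X, Pi.single_apply, Finset.sum_add_distrib]
  ring

noncomputable def Nz (z : Fin m → ℝ) : ℝ := ∑ i, z i * z i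

lemma Dz_mul (z : Fin m → ℝ) (p q : MvPolynomial (Fin m) ℝ) :
    Dz z (p * q) = Dz z p * q + p * Dz z q := by
  unfold Dz
  rw [Finset.sum_mul, Finset.mul_sum, ← Finset.sum_add_distrib]
  apply Finset.sum_congr rfl
  intro i _
  rw [pderiv_mul]; ring

lemma Dz_sub (z : Fin m → ℝ) (p q : MvPolynomial (Fin m) ℝ) :
    Dz z (p - q) = Dz z p - Dz z q := by
  unfold Dz
  rw [← Finset.sum_sub_distrib]
  apply Finset.sum_congr rfl
  intro i _
  rw [map_sub]; ring

lemma Dz_C (z : Fin m → ℝ) (c : ℝ) : Dz z (C c) = 0 := by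
  simp [Dz]

lemma Dz_L (z : Fin m → ℝ) : Dz z (Lz z) = C (Nz z) := by
  unfold Dz Nz
  simp [pderiv_L, map_sum]

lemma Dz_rho (z : Fin m → ℝ) : Dz z rho = 2 * Lz z := by
  unfold Dz Lz
  simp only [pderiv_rho, Finset.mul_sum]
  apply Finset.sum_congr rfl
  intro i _; ring

lemma Lap_L (z : Fin m → ℝ) (p : MvPolynomial (Fin m) ℝ) :
    Lap (Lz z * p) = 2 * Dz z p + Lz z * Lap p := by
  unfold Lap Dz
  rw [Finset.mul_sum, Finset.mul_sum, ← Finset.sum_add_distrib]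
  apply Finset.sum_congr rfl
  intro i _
  simp only [pderiv_mul, map_add, pderiv_L, pderiv_C]; ring

lemma Lap_Cmul (c : ℝ) (p : MvPolynomial (Fin m) ℝ) : Lap (C c * p) = C c * Lap p := by
  unfold Lap
  rw [Finset.mul_sum]
  apply Finset.sum_congr rfl
  intro i _
  simp only [pderiv_mul, map_add, pderiv_C]; simp [pderiv_mul]

lemma Lap_sub (p q : MvPolynomial (Fin m) ℝ) : Lap (p - q) = Lap p - Lap q := by
  unfold Lap
  rw [← Finset.sum_sub_distrib]
  simp

lemma Lap_rho (p : MvPolynomial (Fin m) ℝ) (k : ℕ) (hp : p.IsHomogeneous k) :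
    Lap (rho * p) = C (2 * m + 4 * k : ℝ) * p + rho * Lap p := by
  have h1 : Lap (rho * p) = ∑ i : Fin m, (2 * p + 4 * (X i * pderiv i p)
      + rho * pderiv i (pderiv i p)) := by
    unfold Lap
    apply Finset.sum_congr rfl
    intro i _
    simp only [pderiv_mul, map_add, pderiv_rho]
    have : pderiv i (2 : MvPolynomial (Fin m) ℝ) = 0 := by
      have := pderiv_C (R := ℝ) (i := i) (a := 2)
      rwa [show (C (2:ℝ) : MvPolynomial (Fin m) ℝ) = 2 from map_ofNat C 2] at this
    simp [this]
    ring
  rw [h1, Finset.sum_add_distrib, Finset.sum_add_distrib, ← Finset.mul_sum, ← Finset.mul_sum,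
    hp.sum_X_mul_pderiv]
  simp only [Finset.sum_const, Finset.card_univ, Fintype.card_fin, nsmul_eq_mul, map_add, map_mul]
  have e2 : (C (2:ℝ) : MvPolynomial (Fin m) ℝ) = 2 := map_ofNat C 2
  have e4 : (C (4:ℝ) : MvPolynomial (Fin m) ℝ) = 4 := map_ofNat C 4
  rw [e2, e4, map_natCast, map_natCast]
  unfold Lap
  rw [← Finset.mul_sum]
  ring

/-- Gegenbauer-type kernel polynomials -/
noncomputable def GP (z : Fin m → ℝ) : ℕ → MvPolynomial (Fin m) ℝ
  | 0 => 1
  | 1 => C ((m:ℝ) - 2) * Lz z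
  | (k+2) => C (2 * k + m : ℝ) * (Lz z * GP z (k+1))
      - C ((k+1) * (k + m - 2) * Nz z : ℝ) * (rho * GP z k)

lemma GP_succ (z : Fin m → ℝ) (k : ℕ) :
    GP z (k+1) = C (2 * k + m - 2 : ℝ) * (Lz z * GP z k)
      - C (k * (k + m - 3) * Nz z : ℝ) * (rho * GP z (k-1)) := by
  cases k with
  | zero => simp [GP]
  | succ k =>
    rw [GP, show k + 1 - 1 = k from rfl,
      show (2 * ((k+1:ℕ):ℝ) + m - 2) = 2 * k + m by push_cast; ring,
      show (((k+1:ℕ):ℝ) * (((k+1:ℕ):ℝ) + m - 3) * Nz z) = (k+1) * (k + m - 2) * Nz z by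
        push_cast; ring]

lemma L_hom (z : Fin m → ℝ) : (Lz z).IsHomogeneous 1 := by
  unfold Lz
  apply IsHomogeneous.sum
  intro i _
  simpa using (isHomogeneous_C (Fin m) (z i)).mul (isHomogeneous_X ℝ i)

lemma rho_hom : (rho : MvPolynomial (Fin m) ℝ).IsHomogeneous 2 := by
  unfold rho
  apply IsHomogeneous.sum
  intro i _
  exact (isHomogeneous_X ℝ i).mul (isHomogeneous_X ℝ i)

lemma Cmul_hom {p : MvPolynomial (Fin m) ℝ} {k : ℕ} (c : ℝ) (h : p.IsHomogeneous k) :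
    (C c * p).IsHomogeneous k := by
  simpa using (isHomogeneous_C (Fin m) c).mul h

lemma GP_hom (z : Fin m → ℝ) (k : ℕ) : (GP z k).IsHomogeneous k := by
  induction k using Nat.strong_induction_on with
  | _ k ih =>
    match k with
    | 0 => simpa [GP] using isHomogeneous_one (Fin m) ℝ
    | 1 => exact Cmul_hom _ (L_hom z)
    | (k+2) =>
      rw [GP]
      apply IsHomogeneous.sub
      · apply Cmul_hom
        have := (L_hom z).mul (ih (k+1) (by omega))
        rwa [show 1 + (k+1) = k+2 by ring] at this
      · apply Cmul_hom
        have := rho_hom.mul (ih k (by omega))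
        rwa [show 2 + k = k+2 by ring] at this

lemma GP_D (z : Fin m → ℝ) (k : ℕ) :
    Dz z (GP z k) = C (k * (k + m - 3) * Nz z : ℝ) * GP z (k-1) := by
  induction k using Nat.strong_induction_on with
  | _ k ih =>
    match k with
    | 0 => simpa [GP] using Dz_C z 1
    | 1 =>
      rw [show GP z 1 = C ((m:ℝ) - 2) * Lz z from rfl, show GP z (1-1) = 1 from rfl,
        Dz_mul, Dz_C, Dz_L]
      simp only [zero_mul, zero_add, mul_one, ← map_mul]
      congr 1; push_cast; ring
    | (k+2) =>
      have h1 := ih (k+1) (by omega)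
      have h0 := ih k (by omega)
      have hs := GP_succ z k
      rw [GP, Dz_sub, Dz_mul, Dz_mul, Dz_mul, Dz_mul, Dz_C, Dz_C, Dz_L, Dz_rho, h1, h0]
      simp only [Nat.add_sub_cancel, show k + 2 - 1 = k + 1 from rfl]
      have : ((k+2:ℕ):ℝ) * (((k+2:ℕ):ℝ) + m - 3) * Nz z
          = (2 * k + m) * Nz z + (k+1) * (k+m-2) * Nz z := by push_cast; ring
      rw [this]
      have e : C ((k + 1) * (k + m - 2) * Nz z : ℝ) * GP z (k+1) =
        C ((k + 1) * (k + m - 2) * Nz z : ℝ) * (C (2 * k + m - 2 : ℝ) * (Lz z * GP z k)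
          - C (k * (k + m - 3) * Nz z : ℝ) * (rho * GP z (k-1))) := by rw [hs]
      rw [C_add (a := (2 * k + m : ℝ) * Nz z), add_mul (C ((2 * k + m : ℝ) * Nz z)), e]
      have e2 : (C (2 * k + m - 2:ℝ) : MvPolynomial (Fin m) ℝ) = C (2 * k + m : ℝ) - 2 := by
        rw [map_sub]; congr 1
      rw [e2]
      push_cast
      have e3 : ((k:ℝ) + 1 + m - 3) = k + m - 2 := by ring
      rw [e3]
      simp only [map_mul]
      ring

lemma GP_Lap (z : Fin m → ℝ) (k : ℕ) : Lap (GP z k) = 0 := by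
  induction k using Nat.strong_induction_on with
  | _ k ih =>
    match k with
    | 0 => simp [GP, Lap]
    | 1 => simp [GP, Lap, pderiv_mul, pderiv_L]
    | (k+2) =>
      rw [GP, Lap_sub, Lap_Cmul, Lap_Cmul, Lap_L, Lap_rho _ k (GP_hom z k), ih (k+1) (by omega),
        ih k (by omega), GP_D]
      simp only [Nat.add_sub_cancel]
      have e1 : (C (2 * m + 4 * k : ℝ) : MvPolynomial (Fin m) ℝ) = 2 * C (2 * k + m : ℝ) := by
        have : (2 : MvPolynomial (Fin m) ℝ) = C 2 := (map_ofNat C 2).symm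
        rw [this, ← map_mul]; congr 1; ring
      rw [e1]
      push_cast
      have e3 : ((k:ℝ) + 1 + m - 3) = k + m - 2 := by ring
      rw [e3]
      ring

noncomputable def Ak (m : ℕ) : ℕ → ℝ
  | 0 => 1
  | (k+1) => (2 * k + m - 2) * Ak m k

lemma Ak_pos (hm : 3 ≤ m) (k : ℕ) : 0 < Ak m k := by
  have : (3:ℝ) ≤ m := by exact_mod_cast hm
  induction k with
  | zero => simp [Ak]
  | succ k ih => rw [Ak]; have : (0:ℝ) ≤ k := by positivity
                 exact mul_pos (by linarith) ih

lemma GP_decomp (z : Fin m → ℝ) (k : ℕ) :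
    ∃ Q, GP z k = C (Ak m k) * Lz z ^ k + rho * Q := by
  induction k with
  | zero => exact ⟨0, by simp [GP, Ak]⟩
  | succ k ih =>
    obtain ⟨Q, hQ⟩ := ih
    refine ⟨C (2 * k + m - 2 : ℝ) * (Lz z * Q) - C (k * (k + m - 3) * Nz z : ℝ) * GP z (k-1), ?_⟩
    rw [GP_succ, hQ, Ak, C_mul (a := (2 * k + m - 2 : ℝ)) (a' := Ak m k)]
    ring

lemma eval_hom (z : Fin m → ℝ) (k : ℕ) (q : MvPolynomial (Fin m) ℝ) (hq : q.IsHomogeneous k) :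
    Bl q (Lz z ^ k) = k.factorial * eval z q := by
  induction k generalizing q with
  | zero =>
    have h := (totalDegree_eq_zero_iff_eq_C).1 (Nat.le_zero.1 hq.totalDegree_le)
    rw [h]
    have := Bl_monomial (C (coeff 0 q)) (0 : Fin m →₀ ℕ)
    simp only [pow_zero]
    rw [show (1 : MvPolynomial (Fin m) ℝ) = monomial 0 1 from rfl, this]
    simp [fac]
  | succ k ih =>
    rw [pow_succ', Bl_L, ih]
    · have := congrArg (eval z) hq.sum_X_mul_pderiv
      simp only [map_sum, map_mul, eval_X, map_nsmul] at this
      unfold Dz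
      simp only [map_sum, map_mul, eval_C]
      rw [this, Nat.factorial_succ]
      simp only [nsmul_eq_mul]
      push_cast; ring
    · unfold Dz
      apply IsHomogeneous.sum
      intro i _
      apply Cmul_hom
      exact hq.pderiv

lemma GP_repr (y z : Fin m → ℝ) (k : ℕ) :
    Bl (GP y k) (GP z k) = Ak m k * k.factorial * eval z (GP y k) := by
  obtain ⟨Q, hQ⟩ := GP_decomp z k
  rw [hQ, map_add, Bl_smul', Bl_rho, GP_Lap, Bl_zero, eval_hom z k _ (GP_hom y k)]
  ring

/-- scalar recursion -/
noncomputable def RR (m : ℕ) (s w : ℝ) : ℕ → ℝ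
  | 0 => 1
  | 1 => ((m:ℝ) - 2) * s
  | (k+2) => (2 * k + m : ℝ) * s * RR m s w (k+1) - (k+1) * (k + m - 2) * w * RR m s w k

lemma eval_GP (y z : Fin m → ℝ) (k : ℕ) :
    eval z (GP y k) = RR m (∑ i, y i * z i) (Nz y * Nz z) k := by
  have hL : eval z (Lz y) = ∑ i, y i * z i := by simp [Lz]
  have hr : eval z (rho : MvPolynomial (Fin m) ℝ) = Nz z := by simp [rho, Nz]
  induction k using Nat.strong_induction_on with
  | _ k ih =>
    match k with
    | 0 => simp [GP, RR]
    | 1 => simp only [GP, RR, map_mul, eval_C, hL]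
    | (k+2) =>
      simp only [GP, RR, map_mul, eval_C, hL, hr, map_sub, ih (k+1) (by omega), ih k (by omega)]
      ring

theorem RR_psd (hm : 3 ≤ m) {ι : Type*} (S : Finset ι) (c : ι → ℝ) (y : ι → Fin m → ℝ) (k : ℕ) :
    0 ≤ ∑ i ∈ S, ∑ j ∈ S, c i * c j * RR m (∑ a, y i a * y j a) (Nz (y i) * Nz (y j)) k := by
  set V : MvPolynomial (Fin m) ℝ := ∑ i ∈ S, C (c i) * GP (y i) k with hV
  have h := Bl_self_nonneg V
  have hleft : ∀ p, Bl V p = ∑ i ∈ S, c i * Bl (GP (y i) k) p := by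
    intro p
    rw [hV]
    classical
    induction S using Finset.induction_on with
    | empty => simp [Bl_zero]
    | insert a s ha ih => rw [Finset.sum_insert ha, Finset.sum_insert ha, Bl_add, Bl_smul, ih rfl]
                          exact Bl_self_nonneg _
  have hright : ∀ q, Bl q V = ∑ j ∈ S, c j * Bl q (GP (y j) k) := by
    intro q
    rw [hV, map_sum]
    exact Finset.sum_congr rfl fun j _ => Bl_smul' _ _ _
  rw [hleft] at h
  have e : ∑ i ∈ S, c i * Bl (GP (y i) k) V = (Ak m k * k.factorial) *
      ∑ i ∈ S, ∑ j ∈ S, c i * c j * RR m (∑ a, y i a * y j a) (Nz (y i) * Nz (y j)) k := by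
    rw [Finset.mul_sum]
    apply Finset.sum_congr rfl
    intro i _
    rw [hright, Finset.mul_sum, Finset.mul_sum]
    apply Finset.sum_congr rfl
    intro j _
    rw [GP_repr, eval_GP]; ring
  rw [e] at h
  have hp : 0 < Ak m k * k.factorial := mul_pos (Ak_pos hm k) (by positivity)
  exact nonneg_of_mul_nonneg_right h hp

end PSD
end Kiss

namespace Kiss
section Three
open RealInnerProductSpace

lemma RR_scale (m : ℕ) (c s w : ℝ) (k : ℕ) : RR m (c * s) (c ^ 2 * w) k = c ^ k * RR m s w k := by
  induction k using Nat.strong_induction_on with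
  | _ k ih =>
    match k with
    | 0 => simp [RR]
    | 1 => simp only [RR]; ring
    | (k+2) => simp only [RR, ih (k+1) (by omega), ih k (by omega)]; ring

lemma proj_exists (x : EuclideanSpace ℝ (Fin 14)) (hx : ‖x‖ = 1) :
    ∃ Y : EuclideanSpace ℝ (Fin 14) → Fin 13 → ℝ, ∀ y z,
      ∑ a, Y y a * Y z a = ⟪y, z⟫ - ⟪x, y⟫ * ⟪x, z⟫ := by
  have hx0 : x ≠ 0 := by intro h; simp [h] at hx
  have : Fact (Module.finrank ℝ (EuclideanSpace ℝ (Fin 14)) = 13 + 1) := ⟨by simp⟩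
  have hxx : ⟪x, x⟫ = 1 := by rw [real_inner_self_eq_norm_sq, hx]; norm_num
  let b := OrthonormalBasis.fromOrthogonalSpanSingleton (𝕜 := ℝ) 13 hx0
  have hmem : ∀ y, y - ⟪x, y⟫ • x ∈ (Submodule.span ℝ {x})ᗮ := by
    intro y
    rw [Submodule.mem_orthogonal_singleton_iff_inner_right, inner_sub_right, inner_smul_right, hxx]
    ring
  let P : EuclideanSpace ℝ (Fin 14) → (Submodule.span ℝ {x})ᗮ := fun y => ⟨_, hmem y⟩
  refine ⟨fun y a => ⟪P y, b a⟫, fun y z => ?_⟩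
  have h := b.sum_inner_mul_inner (P y) (P z)
  have e : ∀ a, ⟪P z, b a⟫ = ⟪b a, P z⟫ := fun a => real_inner_comm _ _
  simp only [e]
  rw [h]
  simp only [P, Submodule.coe_inner]
  rw [inner_sub_left, inner_sub_right, inner_sub_right, inner_smul_left, inner_smul_left,
    inner_smul_right, inner_smul_right, hxx, real_inner_comm x y]
  simp
  ring

lemma Nz_eq {m : ℕ} (y : Fin m → ℝ) : Nz y = ∑ a, y a * y a := rfl

lemma det_nonneg (x y z : EuclideanSpace ℝ (Fin 14)) (hx : ‖x‖ = 1) (hy : ‖y‖ = 1) (hz : ‖z‖ = 1) :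
    0 ≤ 1 + 2 * ⟪x, y⟫ * ⟪x, z⟫ * ⟪y, z⟫ - ⟪x, y⟫ ^ 2 - ⟪x, z⟫ ^ 2 - ⟪y, z⟫ ^ 2 := by
  obtain ⟨Y, hY⟩ := proj_exists x hx
  have h := Finset.sum_mul_sq_le_sq_mul_sq Finset.univ (Y y) (Y z)
  have e1 := hY y y
  have e2 := hY z z
  rw [real_inner_self_eq_norm_sq, hy] at e1
  rw [real_inner_self_eq_norm_sq, hz] at e2
  simp only [pow_two (Y y _), pow_two (Y z _)] at h
  rw [hY, e1, e2] at h
  nlinarith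

/-! real programs -/
noncomputable def decR (a : ℕ) : ℝ := ((a / 2 * (1 - a % 2) : ℕ) : ℝ) - ((a / 2 * (a % 2) : ℕ) : ℝ)

noncomputable def hpR (z x : ℝ) : List ℕ → ℝ
  | [] => 0
  | (a :: l) => decR a * z ^ l.length + x * hpR z x l

noncomputable def MR (z1 x1 z2 x2 : ℝ) : List (List ℕ) → ℝ
  | [] => 0
  | (l :: ls) => hpR z1 x1 l * hpR z2 x2 l + x1 * x2 * MR z1 x1 z2 x2 ls

noncomputable def sR (z1 x1 z2 x2 z3 x3 : ℝ) : ℝ :=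
  2 * ((x3 - 2 * z3) * ((z1 + x1) * (z2 + x2))) - (x1 - 2 * z1) * ((x2 - 2 * z2) * (z3 + x3))

noncomputable def wR (z1 x1 z2 x2 z3 x3 : ℝ) : ℝ :=
  9 * ((4 * z1 + x1) * (x1 * ((4 * z2 + x2) * (x2 * ((z3 + x3) * (z3 + x3))))))

noncomputable def fR (z1 x1 z2 x2 z3 x3 : ℝ) : ℕ → List (ℕ × List (List ℕ)) → ℝ
  | _, [] => 0
  | k, (d :: rest) => 2 ^ d.1 * (MR z1 x1 z2 x2 d.2 * (z3 + x3) ^ rest.length)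
      * RR 13 (sR z1 x1 z2 x2 z3 x3) (wR z1 x1 z2 x2 z3 x3) k + fR z1 x1 z2 x2 z3 x3 (k+1) rest

noncomputable def aR (z x : ℝ) : ℕ → List ℕ → ℝ
  | _, [] => 0
  | k, (a :: rest) => a * (z + x) ^ (16 + rest.length) * RR 14 (x - 2 * z) (4 * ((z + x) * (z + x))) k
      + aR z x (k+1) rest

noncomputable def f3 (D : List (ℕ × List (List ℕ))) (u v t : ℝ) : ℝ :=
  fR (1 - 2 * u) (2 + 2 * u) (1 - 2 * v) (2 + 2 * v) (1 - 2 * t) (2 + 2 * t) 0 D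

noncomputable def a2 (L : List ℕ) (u : ℝ) : ℝ := aR (1 - 2 * u) (2 + 2 * u) 0 L

lemma MR_psd {ι : Type*} (S : Finset ι) (z x : ι → ℝ) (y : ι → Fin 13 → ℝ) (k : ℕ)
    (ls : List (List ℕ)) (g : ι → ℝ) :
    0 ≤ ∑ i ∈ S, ∑ j ∈ S, g i * g j * MR (z i) (x i) (z j) (x j) ls *
      RR 13 (∑ a, y i a * y j a) (Nz (y i) * Nz (y j)) k := by
  induction ls generalizing g with
  | nil => simp [MR]
  | cons l ls ih =>
    have h1 := RR_psd (m := 13) (by norm_num) S (fun i => g i * hpR (z i) (x i) l) y k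
    have h2 := ih (fun i => g i * x i)
    have := add_nonneg h1 h2
    rw [← Finset.sum_add_distrib] at this
    refine this.trans_eq ?_
    apply Finset.sum_congr rfl
    intro i _
    rw [← Finset.sum_add_distrib]
    apply Finset.sum_congr rfl
    intro j _
    rw [MR]; ring

lemma fR_psd (x : EuclideanSpace ℝ (Fin 14)) (hx : ‖x‖ = 1)
    (S : Finset (EuclideanSpace ℝ (Fin 14))) (hS : ∀ y ∈ S, ‖y‖ = 1) (k : ℕ)
    (D : List (ℕ × List (List ℕ))) :
    0 ≤ ∑ y ∈ S, ∑ z ∈ S, fR (1 - 2 * ⟪x, y⟫) (2 + 2 * ⟪x, y⟫) (1 - 2 * ⟪x, z⟫) (2 + 2 * ⟪x, z⟫)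
      (1 - 2 * ⟪y, z⟫) (2 + 2 * ⟪y, z⟫) k D := by
  induction D generalizing k with
  | nil => simp [fR]
  | cons d rest ih =>
    obtain ⟨Y, hY⟩ := proj_exists x hx
    have h1 := MR_psd S (fun y => 1 - 2 * ⟪x, y⟫) (fun y => 2 + 2 * ⟪x, y⟫) Y k d.2 (fun _ => 1)
    have h2 := ih (k+1)
    have h3 : (0:ℝ) ≤ 2 ^ d.1 * 3 ^ rest.length * 108 ^ k := by positivity
    have := add_nonneg (mul_nonneg h3 h1) h2
    rw [Finset.mul_sum, ← Finset.sum_add_distrib] at this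
    refine this.trans_eq ?_
    apply Finset.sum_congr rfl
    intro y hy
    rw [Finset.mul_sum, ← Finset.sum_add_distrib]
    apply Finset.sum_congr rfl
    intro z hz
    have ey : ⟪y, y⟫ = 1 := by rw [real_inner_self_eq_norm_sq, hS y hy]; norm_num
    have ez : ⟪z, z⟫ = 1 := by rw [real_inner_self_eq_norm_sq, hS z hz]; norm_num
    rw [fR, Nz_eq, Nz_eq, hY, hY, hY, ey, ez]
    congr 1
    have e1 : sR (1 - 2 * ⟪x, y⟫) (2 + 2 * ⟪x, y⟫) (1 - 2 * ⟪x, z⟫) (2 + 2 * ⟪x, z⟫)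
      (1 - 2 * ⟪y, z⟫) (2 + 2 * ⟪y, z⟫) = 108 * (⟪y, z⟫ - ⟪x, y⟫ * ⟪x, z⟫) := by
      unfold sR; ring
    have e2 : wR (1 - 2 * ⟪x, y⟫) (2 + 2 * ⟪x, y⟫) (1 - 2 * ⟪x, z⟫) (2 + 2 * ⟪x, z⟫)
      (1 - 2 * ⟪y, z⟫) (2 + 2 * ⟪y, z⟫) = 108 ^ 2 * ((1 - ⟪x, y⟫ * ⟪x, y⟫) * (1 - ⟪x, z⟫ * ⟪x, z⟫)) := by
      unfold wR; ring
    have e3 : (1 - 2 * ⟪y, z⟫) + (2 + 2 * ⟪y, z⟫) = 3 := by ring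
    rw [e1, e2, e3, RR_scale]
    ring

lemma aR_psd (S : Finset (EuclideanSpace ℝ (Fin 14))) (hS : ∀ y ∈ S, ‖y‖ = 1) (k : ℕ)
    (L : List ℕ) :
    0 ≤ ∑ y ∈ S, ∑ z ∈ S, aR (1 - 2 * ⟪y, z⟫) (2 + 2 * ⟪y, z⟫) k L := by
  induction L generalizing k with
  | nil => simp [aR]
  | cons a rest ih =>
    have h1 := RR_psd (m := 14) (by norm_num) S (fun _ => 1) (fun y i => y i) k
    have h2 := ih (k+1)
    have h3 : (0:ℝ) ≤ a * 3 ^ (16 + rest.length) * 6 ^ k := by positivity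
    have := add_nonneg (mul_nonneg h3 h1) h2
    rw [Finset.mul_sum, ← Finset.sum_add_distrib] at this
    refine this.trans_eq ?_
    apply Finset.sum_congr rfl
    intro y hy
    rw [Finset.mul_sum, ← Finset.sum_add_distrib]
    apply Finset.sum_congr rfl
    intro z hz
    have ey : ∀ w z : EuclideanSpace ℝ (Fin 14), ∑ i, w i * z i = ⟪w, z⟫ := by
      intro w z
      rw [PiLp.inner_apply]
      apply Finset.sum_congr rfl
      intro i _
      simp [mul_comm]
    have e1 : ⟪y, y⟫ = 1 := by rw [real_inner_self_eq_norm_sq, hS y hy]; norm_num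
    have e2 : ⟪z, z⟫ = 1 := by rw [real_inner_self_eq_norm_sq, hS z hz]; norm_num
    rw [aR, Nz_eq, Nz_eq, ey, ey, ey, e1, e2]
    congr 1
    have e3 : (1 - 2 * ⟪y, z⟫) + (2 + 2 * ⟪y, z⟫) = 3 := by ring
    have e4 : 2 + 2 * ⟪y, z⟫ - 2 * (1 - 2 * ⟪y, z⟫) = 6 * ⟪y, z⟫ := by ring
    have e5 : (4 * (3 * 3) : ℝ) = 6 ^ 2 * (1 * 1) := by norm_num
    rw [e3, e4, e5, RR_scale]
    ring

lemma combine {ι : Type*} (S : Finset ι) (u : ι → ι → ℝ) (us : ∀ x y, u x y = u y x)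
    (u1 : ∀ x ∈ S, u x x = 1) (f : ℝ → ℝ → ℝ → ℝ) (fs : ∀ a b t, f a b t = f b a t)
    (A : ℝ → ℝ) (B G : ℝ)
    (h3 : 0 ≤ ∑ x ∈ S, ∑ y ∈ S, ∑ z ∈ S, f (u x y) (u x z) (u y z))
    (hA : 0 ≤ ∑ x ∈ S, ∑ y ∈ S, A (u x y))
    (hii : ∀ x ∈ S, ∀ y ∈ S, ∀ z ∈ S, x ≠ y → x ≠ z → y ≠ z →
      f (u x y) (u x z) (u y z) + f (u x y) (u y z) (u x z) + f (u x z) (u y z) (u x y) ≤ -B)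
    (hi : ∀ x ∈ S, ∀ z ∈ S, x ≠ z →
      f (u x z) (u x z) 1 + 2 * f (u x z) 1 (u x z) + A (u x z) ≤ -G) :
    0 ≤ (S.card : ℝ) * (3 * (f 1 1 1 + A 1) - 3 * (S.card - 1) * G
      - B * (S.card - 1) * (S.card - 2)) := by
  classical
  set g : ι → ι → ι → ℝ := fun x y z =>
    f (u x y) (u x z) (u y z) + f (u x y) (u y z) (u x z) + f (u x z) (u y z) (u x y) with hg
  set c := 3 * f 1 1 1 - 2 * B + 3 * G + 3 * A 1 with hc
  have hsum : 0 ≤ ∑ x ∈ S, ∑ y ∈ S, ∑ z ∈ S, g x y z := by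
    simp only [hg, Finset.sum_add_distrib]
    have e1 : ∑ x ∈ S, ∑ y ∈ S, ∑ z ∈ S, f (u x y) (u y z) (u x z)
        = ∑ x ∈ S, ∑ y ∈ S, ∑ z ∈ S, f (u x y) (u x z) (u y z) := by
      rw [Finset.sum_comm]
      refine Finset.sum_congr rfl fun x _ => Finset.sum_congr rfl fun y _ =>
        Finset.sum_congr rfl fun z _ => ?_
      rw [us y x]
    have e2 : ∑ x ∈ S, ∑ y ∈ S, ∑ z ∈ S, f (u x z) (u y z) (u x y)
        = ∑ x ∈ S, ∑ y ∈ S, ∑ z ∈ S, f (u x y) (u x z) (u y z) := by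
      have : ∀ x ∈ S, ∑ y ∈ S, ∑ z ∈ S, f (u x z) (u y z) (u x y)
        = ∑ z ∈ S, ∑ y ∈ S, f (u x z) (u y z) (u x y) := fun x _ => Finset.sum_comm
      rw [Finset.sum_congr rfl this, Finset.sum_comm]
      refine Finset.sum_congr rfl fun x _ => Finset.sum_congr rfl fun y _ =>
        Finset.sum_congr rfl fun z _ => ?_
      rw [us y x, us z x]
    rw [e1, e2]; linarith
  have hpt : ∀ x ∈ S, ∀ y ∈ S, ∀ z ∈ S, g x y z ≤ -B
      + (if x = y then B - G - A (u x z) else 0)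
      + (if x = z then B - G - A (u x y) else 0)
      + (if y = z then B - G - A (u x y) else 0)
      + (if x = y then (if x = z then c else 0) else 0) := by
    intro x hx y hy z hz
    by_cases hxy : x = y
    · subst hxy
      by_cases hxz : x = z
      · subst hxz
        simp only [hg, if_true, u1 x hx, hc]; linarith
      · have h := hi x hx z hz hxz
        simp only [hg, if_true, if_neg hxz, u1 x hx]
        rw [fs 1 (u x z)]; linarith
    · by_cases hxz : x = z
      · subst hxz
        have h := hi x hx y hy hxy
        have hyx : ¬ y = x := fun h => hxy h.symm
        simp only [hg, if_neg hxy, if_neg hyx, if_true, u1 x hx, us y x]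
        rw [fs 1 (u x y)]; linarith
      · by_cases hyz : y = z
        · subst hyz
          have h := hi x hx y hy hxy
          simp only [hg, if_neg hxy, if_true, u1 y hy]
          linarith
        · have h := hii x hx y hy z hz hxy hxz hyz
          simp only [hg, if_neg hxy, if_neg hxz, if_neg hyz]
          linarith
  have hle : ∑ x ∈ S, ∑ y ∈ S, ∑ z ∈ S, g x y z ≤ ∑ x ∈ S, ∑ y ∈ S, ∑ z ∈ S, (-B
      + (if x = y then B - G - A (u x z) else 0)
      + (if x = z then B - G - A (u x y) else 0)
      + (if y = z then B - G - A (u x y) else 0)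
      + (if x = y then (if x = z then c else 0) else 0)) :=
    Finset.sum_le_sum fun x hx => Finset.sum_le_sum fun y hy => Finset.sum_le_sum fun z hz =>
      hpt x hx y hy z hz
  simp only [Finset.sum_add_distrib] at hle
  have s1 : ∑ x ∈ S, ∑ y ∈ S, ∑ z ∈ S, (if x = y then B - G - A (u x z) else 0)
      = ∑ x ∈ S, ∑ z ∈ S, (B - G - A (u x z)) := by
    refine Finset.sum_congr rfl fun x hx => ?_
    rw [Finset.sum_comm]
    refine Finset.sum_congr rfl fun z hz => ?_
    rw [Finset.sum_ite_eq]; simp [hx]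
  have s2 : ∑ x ∈ S, ∑ y ∈ S, ∑ z ∈ S, (if x = z then B - G - A (u x y) else 0)
      = ∑ x ∈ S, ∑ z ∈ S, (B - G - A (u x z)) := by
    refine Finset.sum_congr rfl fun x hx => Finset.sum_congr rfl fun y hy => ?_
    rw [Finset.sum_ite_eq]; simp [hx]
  have s3 : ∑ x ∈ S, ∑ y ∈ S, ∑ z ∈ S, (if y = z then B - G - A (u x y) else 0)
      = ∑ x ∈ S, ∑ z ∈ S, (B - G - A (u x z)) := by
    refine Finset.sum_congr rfl fun x hx => Finset.sum_congr rfl fun y hy => ?_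
    rw [Finset.sum_ite_eq]; simp [hy]
  have s4 : ∑ x ∈ S, ∑ y ∈ S, ∑ z ∈ S, (if x = y then (if x = z then c else 0) else 0)
      = S.card * c := by
    rw [← nsmul_eq_mul, ← Finset.sum_const]
    refine Finset.sum_congr rfl fun x hx => ?_
    rw [Finset.sum_comm]
    have : ∀ z ∈ S, ∑ y ∈ S, (if x = y then (if x = z then c else 0) else 0)
        = (if x = z then c else 0) := by
      intro z hz
      rw [Finset.sum_ite_eq]; simp [hx]
    rw [Finset.sum_congr rfl this, Finset.sum_ite_eq]; simp [hx]
  have s5 : ∑ x ∈ S, ∑ z ∈ S, (B - G - A (u x z)) = S.card * (S.card * (B - G))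
      - ∑ x ∈ S, ∑ y ∈ S, A (u x y) := by
    simp only [Finset.sum_sub_distrib, Finset.sum_const, nsmul_eq_mul]; ring
  rw [s1, s2, s3, s4, s5] at hle
  simp only [Finset.sum_const, nsmul_eq_mul] at hle
  have := hsum.trans hle
  rw [hc] at this
  nlinarith

end Three
end Kiss

namespace Kiss
section Machine

/-! digits -/
lemma land_digit (b d d' m m' : ℕ) (hd : d < 2 ^ b) (hm : m < 2 ^ b) :
    (d + 2 ^ b * d') &&& (m + 2 ^ b * m') = (d &&& m) + 2 ^ b * (d' &&& m') := by
  have hdm : d &&& m < 2 ^ b := lt_of_le_of_lt Nat.and_le_left hd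
  apply Nat.eq_of_testBit_eq
  intro i
  rw [Nat.testBit_and, add_comm d, add_comm m, add_comm (d &&& m),
    Nat.testBit_two_pow_mul_add _ hd, Nat.testBit_two_pow_mul_add _ hm,
    Nat.testBit_two_pow_mul_add _ hdm]
  split <;> simp

lemma land_sum (b N : ℕ) (d m : Fin N → ℕ) (hd : ∀ j, d j < 2 ^ b) (hm : ∀ j, m j < 2 ^ b) :
    (∑ j, d j * 2 ^ (b * (j:ℕ))) &&& (∑ j, m j * 2 ^ (b * (j:ℕ)))
      = ∑ j, (d j &&& m j) * 2 ^ (b * (j:ℕ)) := by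
  induction N with
  | zero => simp
  | succ N ih =>
    have key : ∀ f : Fin (N+1) → ℕ, ∑ j, f j * 2 ^ (b * (j:ℕ))
        = f 0 + 2 ^ b * ∑ j : Fin N, f j.succ * 2 ^ (b * (j:ℕ)) := by
      intro f
      rw [Fin.sum_univ_succ, Finset.mul_sum]
      congr 1
      · simp
      · refine Finset.sum_congr rfl fun j _ => ?_
        rw [Fin.val_succ, mul_add, pow_add, mul_one]; ring
    rw [key, key, key, land_digit b _ _ _ _ (hd 0) (hm 0), ih _ _ (fun j => hd _) (fun j => hm _)]

variable {A n : ℕ}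

def ev {R : Type*} [CommSemiring R] (c : (Fin A → Fin (n+1)) → ℕ) (z x : Fin A → R) : R :=
  ∑ e, (c e : R) * ∏ a, (z a ^ (n - (e a : ℕ)) * x a ^ (e a : ℕ))

def sg (b n : ℕ) (a : ℕ) : ℕ := b * (n+1) ^ a

def pk (b : ℕ) (c : (Fin A → Fin (n+1)) → ℕ) : ℕ :=
  ∑ e, c e * ∏ a : Fin A, (2 ^ sg b n (a:ℕ)) ^ (e a : ℕ)

lemma pk_ev (b : ℕ) (c : (Fin A → Fin (n+1)) → ℕ) :
    pk b c = ev c (fun _ => 1) (fun a => 2 ^ sg b n (a:ℕ)) := by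
  simp [pk, ev]

lemma pk_digits (b : ℕ) (c : (Fin A → Fin (n+1)) → ℕ) :
    pk b c = ∑ j : Fin ((n+1)^A), c (finFunctionFinEquiv.symm j) * 2 ^ (b * (j:ℕ)) := by
  rw [pk, ← Equiv.sum_comp finFunctionFinEquiv.symm]
  refine Finset.sum_congr rfl fun j _ => ?_
  congr 1
  obtain ⟨e, rfl⟩ := finFunctionFinEquiv.surjective j
  rw [Equiv.symm_apply_apply, finFunctionFinEquiv_apply, Finset.mul_sum, ← Finset.prod_pow_eq_pow_sum]
  refine Finset.prod_congr rfl fun a _ => ?_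
  rw [← pow_mul, sg]; congr 1; ring

lemma pk_land (b : ℕ) (c m : (Fin A → Fin (n+1)) → ℕ) (hc : ∀ e, c e < 2 ^ b)
    (hm : ∀ e, m e < 2 ^ b) : pk b c &&& pk b m = pk b (fun e => c e &&& m e) := by
  rw [pk_digits, pk_digits, pk_digits, land_sum _ _ _ _ (fun j => hc _) (fun j => hm _)]

lemma pk_add (b : ℕ) (c m : (Fin A → Fin (n+1)) → ℕ) :
    pk b (fun e => c e + m e) = pk b c + pk b m := by
  simp only [pk, add_mul, Finset.sum_add_distrib]

lemma pk_mul (b k : ℕ) (c : (Fin A → Fin (n+1)) → ℕ) :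
    pk b (fun e => k * c e) = k * pk b c := by
  simp only [pk, Finset.mul_sum, mul_assoc]

def Hc (e : Fin A → Fin (n+1)) : ℕ := ∏ a, n.choose (e a)

lemma Hc_le (e : Fin A → Fin (n+1)) : Hc e ≤ 2 ^ (n * A) := by
  unfold Hc
  calc ∏ a, n.choose (e a) ≤ ∏ _a : Fin A, 2 ^ n :=
        Finset.prod_le_prod' fun a _ => Nat.choose_le_two_pow _ _
    _ = 2 ^ (n * A) := by simp [pow_mul]

lemma ev_Hc {R : Type*} [CommSemiring R] (z x : Fin A → R) :
    ev (Hc : (Fin A → Fin (n+1)) → ℕ) z x = ∏ a, (z a + x a) ^ n := by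
  have : ∀ a, (z a + x a) ^ n = ∑ i : Fin (n+1), (n.choose i : R) * (z a ^ (n - (i:ℕ)) * x a ^ (i:ℕ)) := by
    intro a
    rw [add_comm, add_pow, Finset.sum_range]
    refine Finset.sum_congr rfl fun i _ => ?_
    ring
  simp only [this]
  rw [Finset.prod_univ_sum, Fintype.piFinset_univ]
  refine Finset.sum_congr rfl fun e _ => ?_
  rw [Hc, Nat.cast_prod, ← Finset.prod_mul_distrib]

/-- leaf soundness -/
lemma leaf_sound (b k M : ℕ) (hb : 1 ≤ b) (c : (Fin A → Fin (n+1)) → ℕ) (hc : ∀ e, c e ≤ M * Hc e)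
    (hM : M * 2 ^ (n * A) < 2 ^ (b-1)) (hk : k ≤ M) (TOP HP : ℕ)
    (hT : TOP = pk b (fun _ : Fin A → Fin (n+1) => 2 ^ (b-1)))
    (hH : HP = pk b (Hc : (Fin A → Fin (n+1)) → ℕ))
    (h : (pk b c + TOP - k * HP) &&& TOP = TOP) (e : Fin A → Fin (n+1)) : k * Hc e ≤ c e := by
  have hbb : 2 ^ b = 2 * 2 ^ (b-1) := by rw [← pow_succ']; congr 1; omega
  have hkH : ∀ e : Fin A → Fin (n+1), k * Hc e ≤ 2 ^ (b-1) := fun e =>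
    ((Nat.mul_le_mul hk (Hc_le e)).trans hM.le)
  have hcb : ∀ e, c e < 2 ^ (b-1) := fun e =>
    lt_of_le_of_lt ((hc e).trans (Nat.mul_le_mul_left _ (Hc_le e))) hM
  set d : (Fin A → Fin (n+1)) → ℕ := fun e => c e + 2 ^ (b-1) - k * Hc e with hd
  have e1 : pk b c + TOP - k * HP = pk b d := by
    have : pk b d + k * HP = pk b c + TOP := by
      rw [hH, hT, ← pk_mul, ← pk_add, ← pk_add]
      congr 1; funext e; have := hkH e; simp only [hd]; omega
    omega
  have hdl : ∀ e, d e < 2 ^ b := by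
    intro e; have := hcb e; simp only [hd]; omega
  have hp : 0 < 2 ^ (b-1) := by positivity
  rw [e1, hT, pk_land b d _ hdl (fun _ => by omega)] at h
  have hle : ∀ e ∈ (Finset.univ : Finset (Fin A → Fin (n+1))),
      (d e &&& 2 ^ (b-1)) * ∏ a : Fin A, (2 ^ sg b n (a:ℕ)) ^ (e a : ℕ)
        ≤ 2 ^ (b-1) * ∏ a : Fin A, (2 ^ sg b n (a:ℕ)) ^ (e a : ℕ) :=
    fun e _ => Nat.mul_le_mul_right _ Nat.and_le_right
  have := (Finset.sum_eq_sum_iff_of_le hle).1 h e (Finset.mem_univ _)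
  have h2 : d e &&& 2 ^ (b-1) = 2 ^ (b-1) :=
    Nat.eq_of_mul_eq_mul_right (by positivity) this
  have h3 : 2 ^ (b-1) ≤ d e := h2 ▸ Nat.and_le_left
  have := hkH e
  simp only [hd] at h3; omega

lemma ev_mono (c c' : (Fin A → Fin (n+1)) → ℕ) (h : ∀ e, c e ≤ c' e) (z x : Fin A → ℝ)
    (hz : ∀ a, 0 ≤ z a) (hx : ∀ a, 0 ≤ x a) : ev c z x ≤ ev c' z x := by
  unfold ev
  refine Finset.sum_le_sum fun e _ => mul_le_mul_of_nonneg_right (by exact_mod_cast h e) ?_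
  exact Finset.prod_nonneg fun a _ => mul_nonneg (pow_nonneg (hz a) _) (pow_nonneg (hx a) _)

lemma ev_smul {R : Type*} [CommSemiring R] (k : ℕ) (c : (Fin A → Fin (n+1)) → ℕ) (z x : Fin A → R) :
    ev (fun e => k * c e) z x = k * ev c z x := by
  unfold ev
  rw [Finset.mul_sum]
  refine Finset.sum_congr rfl fun e _ => ?_
  push_cast; ring

end Machine

section Split
variable {q n : ℕ}

def TT (k : ℕ → ℕ → ℕ) (a : Fin (q+1)) (c : (Fin (q+1) → Fin (n+1)) → ℕ)
    (e : Fin (q+1) → Fin (n+1)) : ℕ :=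
  ∑ i : Fin (n+1), c (a.insertNth i (a.removeNth e)) * k i (e a)

lemma sum_ins {R : Type*} [AddCommMonoid R] (a : Fin (q+1)) (F : (Fin (q+1) → Fin (n+1)) → R) :
    ∑ e, F e = ∑ i, ∑ e' : Fin q → Fin (n+1), F (a.insertNth i e') := by
  rw [← Fintype.sum_prod_type']
  exact (Equiv.sum_comp (Fin.insertNthEquiv (fun _ => Fin (n+1)) a) F).symm

lemma ev_ins {R : Type*} [CommSemiring R] (a : Fin (q+1)) (c : (Fin (q+1) → Fin (n+1)) → ℕ)
    (z x : Fin (q+1) → R) :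
    ev c z x = ∑ i : Fin (n+1), (z a ^ (n - (i:ℕ)) * x a ^ (i:ℕ)) * ∑ e' : Fin q → Fin (n+1),
      (c (a.insertNth i e') : R) * ∏ j, (z (a.succAbove j) ^ (n - (e' j : ℕ)) *
        x (a.succAbove j) ^ (e' j : ℕ)) := by
  unfold ev
  rw [sum_ins a]
  refine Finset.sum_congr rfl fun i _ => ?_
  rw [Finset.mul_sum]
  refine Finset.sum_congr rfl fun e' _ => ?_
  rw [Fin.prod_univ_succAbove _ a]
  simp only [Fin.insertNth_apply_same, Fin.insertNth_apply_succAbove]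
  ring

lemma ev_TT {R : Type*} [CommSemiring R] (k : ℕ → ℕ → ℕ) (a : Fin (q+1))
    (c : (Fin (q+1) → Fin (n+1)) → ℕ) (z x : Fin (q+1) → R) (al be : R)
    (hk : ∀ i : Fin (n+1), al ^ (n - (i:ℕ)) * be ^ (i:ℕ) =
      ∑ j : Fin (n+1), (k i j : R) * (z a ^ (n - (j:ℕ)) * x a ^ (j:ℕ))) :
    ev (TT k a c) z x = ev c (Function.update z a al) (Function.update x a be) := by
  rw [ev_ins a, ev_ins a]
  simp only [Function.update_self, hk]
  have hne : ∀ j, a.succAbove j ≠ a := fun j => Fin.succAbove_ne a j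
  simp only [Function.update_of_ne (hne _)]
  simp only [TT, Fin.removeNth_insertNth, Fin.insertNth_apply_same]
  push_cast
  have hA : ∀ F : Fin (n+1) → (Fin q → Fin (n+1)) → Fin (n+1) → R,
      ∑ j, ∑ e', ∑ i, F j e' i = ∑ i, ∑ j, ∑ e', F j e' i := by
    intro F
    rw [Finset.sum_comm' (s := Finset.univ) (t := fun _ => Finset.univ) (t' := Finset.univ)
      (s' := fun _ => Finset.univ) (f := fun i j => ∑ e', F j e' i) (by simp)]
    exact Finset.sum_congr rfl fun j _ => Finset.sum_comm
  calc _ = ∑ j : Fin (n+1), ∑ e' : Fin q → Fin (n+1), ∑ i : Fin (n+1),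
        (z a ^ (n - (j:ℕ)) * x a ^ (j:ℕ)) * ((c (a.insertNth i e') : R) * (k i j : R) *
        ∏ l, (z (a.succAbove l) ^ (n - (e' l : ℕ)) * x (a.succAbove l) ^ (e' l : ℕ))) := by
        simp only [Finset.sum_mul, Finset.mul_sum]
    _ = _ := by
        rw [hA]
        simp only [Finset.sum_mul, Finset.mul_sum]
        refine Finset.sum_congr rfl fun i _ => ?_
        rw [Finset.sum_comm]
        refine Finset.sum_congr rfl fun e' _ => Finset.sum_congr rfl fun j _ => ?_
        ring

lemma Hc_ins (a : Fin (q+1)) (i : Fin (n+1)) (e' : Fin q → Fin (n+1)) :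
    Hc (a.insertNth i e' : Fin (q+1) → Fin (n+1)) = n.choose i * Hc e' := by
  unfold Hc
  rw [Fin.prod_univ_succAbove _ a]
  simp only [Fin.insertNth_apply_same, Fin.insertNth_apply_succAbove]

lemma TT_bound (k : ℕ → ℕ → ℕ) (a : Fin (q+1)) (c : (Fin (q+1) → Fin (n+1)) → ℕ) (M : ℕ)
    (hc : ∀ e, c e ≤ M * Hc e)
    (hk : ∀ j : Fin (n+1), ∑ i : Fin (n+1), n.choose i * k i j = 2 ^ n * n.choose j) (e) :
    TT k a c e ≤ (2 ^ n * M) * Hc e := by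
  have he : Hc e = n.choose (e a) * Hc (a.removeNth e) := by
    conv_lhs => rw [← Fin.insertNth_self_removeNth a e]
    rw [Hc_ins]
  unfold TT
  calc _ ≤ ∑ i : Fin (n+1), M * (n.choose i * Hc (a.removeNth e)) * k i (e a) :=
        Finset.sum_le_sum fun i _ => Nat.mul_le_mul_right _ ((hc _).trans_eq (by rw [Hc_ins]))
    _ = M * Hc (a.removeNth e) * ∑ i : Fin (n+1), n.choose i * k i (e a) := by
        rw [Finset.mul_sum]; refine Finset.sum_congr rfl fun i _ => ?_; ring
    _ = _ := by rw [hk, he]; ring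

def kL (n i j : ℕ) : ℕ := if i ≤ j then (n - i).choose (j - i) * 2 ^ (n - j) else 0
def kR (i j : ℕ) : ℕ := i.choose j * 2 ^ j

lemma kL_poly {R : Type*} [CommSemiring R] (z x : R) (i : Fin (n+1)) :
    (2 * z + x) ^ (n - (i:ℕ)) * x ^ (i:ℕ) =
      ∑ j : Fin (n+1), (kL n i j : R) * (z ^ (n - (j:ℕ)) * x ^ (j:ℕ)) := by
  obtain ⟨i, hi⟩ := i
  simp only
  rw [← Finset.sum_range (fun j => (kL n i j : R) * (z ^ (n - j) * x ^ j))]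
  obtain ⟨r, rfl⟩ : ∃ r, n = i + r := ⟨n - i, by omega⟩
  rw [show i + r + 1 = i + (r + 1) by ring, Finset.sum_range_add]
  rw [Finset.sum_eq_zero (s := Finset.range i), zero_add]
  · rw [show i + r - i = r by omega, add_comm (2*z), add_pow, Finset.sum_mul]
    refine Finset.sum_congr rfl fun t ht => ?_
    rw [kL, if_pos (by omega), show i + r - i = r by omega, show i + t - i = t by omega,
      show i + r - (i + t) = r - t by omega]
    push_cast
    rw [mul_pow, pow_add]; ring
  · intro j hj
    rw [kL, if_neg (by have := Finset.mem_range.1 hj; omega)]; simp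

lemma kR_poly {R : Type*} [CommSemiring R] (z x : R) (i : Fin (n+1)) :
    z ^ (n - (i:ℕ)) * (2 * x + z) ^ (i:ℕ) =
      ∑ j : Fin (n+1), (kR i j : R) * (z ^ (n - (j:ℕ)) * x ^ (j:ℕ)) := by
  obtain ⟨i, hi⟩ := i
  simp only
  rw [← Finset.sum_range (fun j => (kR i j : R) * (z ^ (n - j) * x ^ j))]
  obtain ⟨r, rfl⟩ : ∃ r, n = i + r := ⟨n - i, by omega⟩
  rw [show i + r + 1 = (i + 1) + r by ring, Finset.sum_range_add,
    Finset.sum_eq_zero (s := Finset.range r), add_zero]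
  · rw [show i + r - i = r by omega, add_pow, Finset.mul_sum]
    refine Finset.sum_congr rfl fun t ht => ?_
    have := Finset.mem_range.1 ht
    rw [kR, show i + r - t = r + (i - t) by omega, pow_add]
    push_cast
    rw [mul_pow]; ring
  · intro j hj
    rw [kR, Nat.choose_eq_zero_of_lt (by omega)]; simp

lemma kL_sum (j : Fin (n+1)) : ∑ i : Fin (n+1), n.choose i * kL n i j = 2 ^ n * n.choose j := by
  obtain ⟨j, hj⟩ := j
  simp only
  rw [← Finset.sum_range (fun i => n.choose i * kL n i j)]
  obtain ⟨r, rfl⟩ : ∃ r, n = j + r := ⟨n - j, by omega⟩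
  rw [show j + r + 1 = (j + 1) + r by ring, Finset.sum_range_add,
    Finset.sum_eq_zero (s := Finset.range r), add_zero]
  · have h : ∀ i ∈ Finset.range (j+1), (j+r).choose i * kL (j+r) i j
        = j.choose i * ((j+r).choose j * 2 ^ r) := by
      intro i hi
      have := Finset.mem_range.1 hi
      rw [kL, if_pos (by omega), show j + r - j = r by omega]
      have h := Nat.choose_mul (n := j + r) (k := j) (s := i) (by omega)
      calc _ = ((j+r).choose i * (j+r-i).choose (j-i)) * 2 ^ r := by ring
        _ = _ := by rw [← h]; ring
    rw [Finset.sum_congr rfl h, ← Finset.sum_mul, Nat.sum_range_choose, pow_add]; ring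
  · intro i _
    rw [kL, if_neg (by omega)]; simp

lemma kR_sum (j : Fin (n+1)) : ∑ i : Fin (n+1), n.choose i * kR i j = 2 ^ n * n.choose j := by
  obtain ⟨j, hj⟩ := j
  simp only
  rw [← Finset.sum_range (fun i => n.choose i * kR i j)]
  obtain ⟨r, rfl⟩ : ∃ r, n = j + r := ⟨n - j, by omega⟩
  rw [show j + r + 1 = j + (r + 1) by ring, Finset.sum_range_add]
  rw [Finset.sum_eq_zero (s := Finset.range j), zero_add]
  · have h : ∀ t ∈ Finset.range (r+1), (j+r).choose (j+t) * kR (j+t) j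
        = r.choose t * ((j+r).choose j * 2 ^ j) := by
      intro t ht
      have := Finset.mem_range.1 ht
      have h := Nat.choose_mul (n := j + r) (k := j + t) (s := j) (by omega)
      rw [show j + r - j = r by omega, show j + t - j = t by omega] at h
      rw [kR]
      calc _ = ((j+r).choose (j+t) * (j+t).choose j) * 2 ^ j := by ring
        _ = _ := by rw [h]; ring
    rw [Finset.sum_congr rfl h, ← Finset.sum_mul, Nat.sum_range_choose, pow_add]; ring
  · intro i hi
    have := Finset.mem_range.1 hi
    rw [kR, Nat.choose_eq_zero_of_lt (show i < j by omega)]; simp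

/-! kernel split operations -/
def SL (s mask W : ℕ) (i : ℕ) : ℕ :=
  Nat.rec (W &&& mask) (fun i r => 2 * r + r <<< s + (W &&& (mask <<< (s * (i+1))))) i
def SR (s mask W n : ℕ) (t : ℕ) : ℕ :=
  Nat.rec ((W &&& (mask <<< (s * n))) >>> (s * n))
    (fun t r => r + r <<< (s+1) + (W &&& (mask <<< (s * (n - (t+1))))) >>> (s * (n - (t+1)))) t

def slc (b : ℕ) (a : Fin (q+1)) (c : (Fin (q+1) → Fin (n+1)) → ℕ) (i : Fin (n+1)) : ℕ :=
  ∑ e' : Fin q → Fin (n+1), c (a.insertNth i e') *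
    ∏ j, (2 ^ sg b n (a.succAbove j : ℕ)) ^ (e' j : ℕ)

lemma pk_slc (b : ℕ) (a : Fin (q+1)) (c : (Fin (q+1) → Fin (n+1)) → ℕ) :
    pk b c = ∑ i : Fin (n+1), (2 ^ sg b n (a:ℕ)) ^ (i:ℕ) * slc b a c i := by
  rw [pk_ev, ev_ins a]
  simp [slc]

def maskSpec (b n : ℕ) (a : Fin (q+1)) : ℕ :=
  (2 ^ b - 1) * ∏ j : Fin q, ∑ t : Fin (n+1), (2 ^ sg b n (a.succAbove j : ℕ)) ^ (t:ℕ)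

lemma mask_pk (b : ℕ) (a : Fin (q+1)) (i : Fin (n+1)) :
    maskSpec b n a <<< (sg b n (a:ℕ) * (i:ℕ)) =
      pk b (fun e : Fin (q+1) → Fin (n+1) => if e a = i then 2 ^ b - 1 else 0) := by
  rw [pk_slc b a, Finset.sum_eq_single i]
  · simp only [slc, Fin.insertNth_apply_same, if_true]
    rw [maskSpec, Nat.shiftLeft_eq, Finset.prod_univ_sum, Fintype.piFinset_univ, Finset.mul_sum,
      pow_mul]
    ring
  · intro i' _ hi
    simp [slc, hi]
  · simp

lemma land_mask (b : ℕ) (a : Fin (q+1)) (c : (Fin (q+1) → Fin (n+1)) → ℕ) (hc : ∀ e, c e < 2 ^ b)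
    (i : Fin (n+1)) :
    pk b c &&& (maskSpec b n a <<< (sg b n (a:ℕ) * (i:ℕ))) =
      (2 ^ sg b n (a:ℕ)) ^ (i:ℕ) * slc b a c i := by
  have hp : 0 < 2 ^ b := by positivity
  rw [mask_pk, pk_land b c _ hc (fun e => by split <;> omega), pk_slc b a, Finset.sum_eq_single i]
  · congr 1
    unfold slc
    refine Finset.sum_congr rfl fun e' _ => ?_
    simp only [Fin.insertNth_apply_same, if_true, Nat.and_two_pow_sub_one_eq_mod,
      Nat.mod_eq_of_lt (hc _)]
  · intro i' _ hi
    simp [slc, hi]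
  · simp

lemma SL_eq (s mask W i : ℕ) :
    SL s mask W i = ∑ t ∈ Finset.range (i+1), (2 + 2 ^ s) ^ (i - t) * (W &&& (mask <<< (s * t))) := by
  induction i with
  | zero => simp [SL]
  | succ i ih =>
    have : SL s mask W (i+1) = 2 * SL s mask W i + SL s mask W i <<< s
      + (W &&& (mask <<< (s * (i+1)))) := rfl
    rw [this, Finset.sum_range_succ, Nat.sub_self, pow_zero, one_mul, Nat.shiftLeft_eq]
    congr 1
    have h : ∑ t ∈ Finset.range (i+1), (2 + 2 ^ s) ^ (i + 1 - t) * (W &&& (mask <<< (s * t)))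
        = (2 + 2 ^ s) * SL s mask W i := by
      rw [ih, Finset.mul_sum]
      refine Finset.sum_congr rfl fun t ht => ?_
      have := Finset.mem_range.1 ht
      rw [show i + 1 - t = (i - t) + 1 by omega, pow_succ]; ring
    rw [h]; ring

lemma SR_eq (s mask W n t : ℕ) (ht : t ≤ n) :
    SR s mask W n t = ∑ r ∈ Finset.range (t+1), (1 + 2 ^ (s+1)) ^ r *
      ((W &&& (mask <<< (s * (n - t + r)))) >>> (s * (n - t + r))) := by
  induction t with
  | zero => simp [SR]
  | succ t ih =>
    have : SR s mask W n (t+1) = SR s mask W n t + SR s mask W n t <<< (s+1)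
      + (W &&& (mask <<< (s * (n - (t+1))))) >>> (s * (n - (t+1))) := rfl
    rw [this, Finset.sum_range_succ', pow_zero, one_mul, Nat.shiftLeft_eq, add_zero]
    congr 1
    rw [ih (by omega)]
    have h : ∑ r ∈ Finset.range (t+1), (1 + 2 ^ (s+1)) ^ (r+1) *
      ((W &&& (mask <<< (s * (n - (t+1) + (r+1))))) >>> (s * (n - (t+1) + (r+1))))
        = (1 + 2 ^ (s+1)) * ∑ r ∈ Finset.range (t+1), (1 + 2 ^ (s+1)) ^ r *
      ((W &&& (mask <<< (s * (n - t + r)))) >>> (s * (n - t + r))) := by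
      rw [Finset.mul_sum]
      refine Finset.sum_congr rfl fun r _ => ?_
      rw [show n - (t+1) + (r+1) = n - t + r by omega, pow_succ]; ring
    rw [h]; ring

lemma SL_sound (b : ℕ) (a : Fin (q+1)) (c : (Fin (q+1) → Fin (n+1)) → ℕ) (hc : ∀ e, c e < 2 ^ b) :
    SL (sg b n (a:ℕ)) (maskSpec b n a) (pk b c) n = pk b (TT (kL n) a c) := by
  rw [pk_ev b (TT _ _ _), ev_TT (kL n) a c _ _ _ _ (fun i => kL_poly _ _ i), ev_ins a, SL_eq,
    Finset.sum_range]
  refine Finset.sum_congr rfl fun i _ => ?_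
  rw [land_mask b a c hc]
  have hne : ∀ j, a.succAbove j ≠ a := fun j => Fin.succAbove_ne a j
  simp only [Function.update_self, Function.update_of_ne (hne _), slc, one_pow, one_mul, mul_one,
    Nat.cast_id]
  ring

lemma SR_sound (b : ℕ) (a : Fin (q+1)) (c : (Fin (q+1) → Fin (n+1)) → ℕ) (hc : ∀ e, c e < 2 ^ b) :
    SR (sg b n (a:ℕ)) (maskSpec b n a) (pk b c) n n = pk b (TT kR a c) := by
  rw [pk_ev b (TT _ _ _), ev_TT kR a c _ _ _ _ (fun i => kR_poly _ _ i), ev_ins a,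
    SR_eq _ _ _ _ _ le_rfl, Finset.sum_range]
  refine Finset.sum_congr rfl fun i _ => ?_
  rw [Nat.sub_self, zero_add, land_mask b a c hc, ← pow_mul, mul_comm (2 ^ _) (slc b a c i),
    Nat.shiftRight_eq_div_pow, Nat.mul_div_cancel _ (by positivity)]
  have hne : ∀ j, a.succAbove j ≠ a := fun j => Fin.succAbove_ne a j
  simp only [Function.update_self, Function.update_of_ne (hne _), slc, one_pow, one_mul, mul_one,
    Nat.cast_id]
  rw [pow_succ]; ring

end Split
end Kiss

namespace Kiss
section Link
open MvPolynomial
variable {A n : ℕ}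

noncomputable def wt (A : ℕ) : (Fin A ⊕ Fin A) → (Fin A → ℕ) :=
  Sum.elim (fun a => Pi.single a 1) (fun a => Pi.single a 1)

noncomputable def mono (e : Fin A → Fin (n+1)) : (Fin A ⊕ Fin A) →₀ ℕ :=
  Finsupp.equivFunOnFinite.symm (Sum.elim (fun a => n - (e a : ℕ)) (fun a => (e a : ℕ)))

noncomputable def cf (P : MvPolynomial (Fin A ⊕ Fin A) ℕ) (e : Fin A → Fin (n+1)) : ℕ :=
  coeff (mono e) P

lemma wt_apply (d : (Fin A ⊕ Fin A) →₀ ℕ) (a : Fin A) :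
    Finsupp.weight (wt A) d a = d (Sum.inl a) + d (Sum.inr a) := by
  rw [Finsupp.weight_apply, Finsupp.sum_fintype _ _ (by simp), Fintype.sum_sum_type]
  simp only [wt, Sum.elim_inl, Sum.elim_inr, Pi.add_apply, Finset.sum_apply, Pi.smul_apply]
  simp [Pi.single_apply]

lemma mono_inj : Function.Injective (mono : (Fin A → Fin (n+1)) → _) := by
  intro e e' h
  funext a
  have := DFunLike.congr_fun h (Sum.inr a)
  simpa [mono, Fin.ext_iff] using this

lemma cf_ev {R : Type*} [CommSemiring R] (P : MvPolynomial (Fin A ⊕ Fin A) ℕ)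
    (hP : IsWeightedHomogeneous (wt A) P (fun _ => n)) (z x : Fin A → R) :
    aeval (Sum.elim z x) P = ev (cf P : (Fin A → Fin (n+1)) → ℕ) z x := by
  classical
  have hsub : P.support ⊆ Finset.univ.image (mono : (Fin A → Fin (n+1)) → _) := by
    intro d hd
    have h := hP (mem_support_iff.1 hd)
    have h' : ∀ a, d (Sum.inl a) + d (Sum.inr a) = n := fun a => by rw [← wt_apply, h]
    refine Finset.mem_image.2 ⟨fun a => ⟨d (Sum.inr a), by have := h' a; omega⟩, Finset.mem_univ _, ?_⟩
    ext i
    rcases i with a | a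
    · have := h' a; simp [mono]; omega
    · simp [mono]
  rw [aeval_def, eval₂_eq', ev, Finset.sum_subset hsub, Finset.sum_image (mono_inj.injOn)]
  · refine Finset.sum_congr rfl fun e _ => ?_
    rw [Fintype.prod_sum_type, ← Finset.prod_mul_distrib]
    simp [cf, mono]
  · intro d _ hd
    rw [notMem_support_iff.1 hd]; simp

lemma cf_le (P : MvPolynomial (Fin A ⊕ Fin A) ℕ)
    (hP : IsWeightedHomogeneous (wt A) P (fun _ => n)) (e : Fin A → Fin (n+1)) :
    cf P e ≤ aeval (Sum.elim (fun _ => 1) (fun _ => 1) : Fin A ⊕ Fin A → ℕ) P := by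
  rw [cf_ev (n := n) P hP, ev]
  simp only [one_pow, mul_one, Finset.prod_const_one, Nat.cast_id]
  exact Finset.single_le_sum (f := cf P) (fun _ _ => Nat.zero_le _) (Finset.mem_univ e)

variable (z x : Fin A → ℝ)

def Rel (d : Fin A → ℕ) (v : ℝ) (w : (Fin A → ℕ) → ℕ × ℕ) : Prop :=
  ∃ P N : MvPolynomial (Fin A ⊕ Fin A) ℕ, IsWeightedHomogeneous (wt A) P d ∧
    IsWeightedHomogeneous (wt A) N d ∧
    v = aeval (Sum.elim z x) P - aeval (Sum.elim z x) N ∧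
    ∀ s : Fin A → ℕ, w s = (aeval (Sum.elim (fun _ => 1) (fun a => 2 ^ s a) : Fin A ⊕ Fin A → ℕ) P,
      aeval (Sum.elim (fun _ => 1) (fun a => 2 ^ s a) : Fin A ⊕ Fin A → ℕ) N)

lemma Rel.root {v : ℝ} {w : (Fin A → ℕ) → ℕ × ℕ} (h : Rel z x (fun _ => n) v w) (K : ℕ)
    (h1 : (w fun _ => 0).1 ≤ K) (h2 : (w fun _ => 0).2 ≤ K) (b : ℕ) :
    ∃ c : (Fin A → Fin (n+1)) → ℕ, (∀ e, c e ≤ 2 * K * Hc e) ∧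
      pk b c = K * pk b (Hc : (Fin A → Fin (n+1)) → ℕ) + (w fun a => sg b n a).2
        - (w fun a => sg b n a).1 ∧
      ev c z x = K * ∏ a, (z a + x a) ^ n - v := by
  obtain ⟨P, N, hP, hN, hv, hw⟩ := h
  have w0 := hw fun _ => 0
  have w1 := hw fun a => sg b n a
  simp only [pow_zero] at w0
  rw [w0] at h1 h2
  simp only at h1 h2
  have p1 : ∀ e : Fin A → Fin (n+1), cf P e ≤ K := fun e => (cf_le P hP e).trans h1
  have p2 : ∀ e : Fin A → Fin (n+1), cf N e ≤ K := fun e => (cf_le N hN e).trans h2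
  have hH : ∀ e : Fin A → Fin (n+1), 1 ≤ Hc e := fun e =>
    Finset.prod_pos fun a _ => Nat.choose_pos (by omega)
  have hKH : ∀ e : Fin A → Fin (n+1), K ≤ K * Hc e := fun e => Nat.le_mul_of_pos_right _ (hH e)
  refine ⟨fun e => K * Hc e + cf N e - cf P e, fun e => ?_, ?_, ?_⟩
  · have := p2 e; have := hKH e
    have : 2 * K * Hc e = K * Hc e + K * Hc e := by ring
    beta_reduce
    omega
  · rw [w1]
    simp only
    rw [cf_ev (n := n) P hP, cf_ev (n := n) N hN, ← pk_ev, ← pk_ev, ← pk_mul, ← pk_add]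
    have : pk b (fun e : Fin A → Fin (n+1) => K * Hc e + cf N e - cf P e) + pk b (cf P : (Fin A → Fin (n+1)) → ℕ)
      = pk b (fun e : Fin A → Fin (n+1) => K * Hc e + cf N e) := by
      rw [← pk_add]; congr 1; funext e
      have := p1 e; have := hKH e
      omega
    omega
  · rw [hv, cf_ev (n := n) P hP, cf_ev (n := n) N hN, ← ev_Hc, ← ev_smul]
    unfold ev
    rw [sub_eq_add_neg, neg_sub, ← Finset.sum_sub_distrib, ← Finset.sum_add_distrib]
    refine Finset.sum_congr rfl fun e _ => ?_
    have := p1 e; have := hKH e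
    rw [Nat.cast_sub (by omega)]
    push_cast; ring

variable {z x} {d d' : Fin A → ℕ} {v v' : ℝ} {w w' : (Fin A → ℕ) → ℕ × ℕ}

def dA (p q : ℕ × ℕ) : ℕ × ℕ := (p.1 + q.1, p.2 + q.2)
def dN (p : ℕ × ℕ) : ℕ × ℕ := (p.2, p.1)
def dM (p q : ℕ × ℕ) : ℕ × ℕ := (p.1 * q.1 + p.2 * q.2, p.1 * q.2 + p.2 * q.1)
def dS (k : ℕ) (p : ℕ × ℕ) : ℕ × ℕ := (k * p.1, k * p.2)
def dX (s : ℕ) (p : ℕ × ℕ) : ℕ × ℕ := (p.1 <<< s, p.2 <<< s)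

lemma Rel.add (h : Rel z x d v w) (h' : Rel z x d v' w') :
    Rel z x d (v + v') (fun s => dA (w s) (w' s)) := by
  obtain ⟨P, N, hP, hN, hv, hw⟩ := h
  obtain ⟨P', N', hP', hN', hv', hw'⟩ := h'
  refine ⟨P + P', N + N', hP.add hP', hN.add hN', ?_, fun s => ?_⟩
  · rw [hv, hv', map_add, map_add]; ring
  · beta_reduce; rw [hw, hw', map_add, map_add]; rfl

lemma Rel.neg (h : Rel z x d v w) : Rel z x d (-v) (fun s => dN (w s)) := by
  obtain ⟨P, N, hP, hN, hv, hw⟩ := h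
  refine ⟨N, P, hN, hP, ?_, fun s => ?_⟩
  · rw [hv]; ring
  · beta_reduce; rw [hw]; rfl

lemma Rel.mul (h : Rel z x d v w) (h' : Rel z x d' v' w') :
    Rel z x (d + d') (v * v') (fun s => dM (w s) (w' s)) := by
  obtain ⟨P, N, hP, hN, hv, hw⟩ := h
  obtain ⟨P', N', hP', hN', hv', hw'⟩ := h'
  refine ⟨P * P' + N * N', P * N' + N * P', (hP.mul hP').add (hN.mul hN'),
    (hP.mul hN').add (hN.mul hP'), ?_, fun s => ?_⟩
  · rw [hv, hv']; simp only [map_add, map_mul]; ring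
  · beta_reduce; rw [hw, hw']; simp only [map_add, map_mul]; rfl

lemma Rel.smul (k : ℕ) (h : Rel z x d v w) : Rel z x d (k * v) (fun s => dS k (w s)) := by
  obtain ⟨P, N, hP, hN, hv, hw⟩ := h
  refine ⟨C k * P, C k * N, hP.C_mul k, hN.C_mul k, ?_, fun s => ?_⟩
  · rw [hv]; simp only [map_mul, eq_natCast, map_natCast]; ring
  · beta_reduce; rw [hw]; simp only [map_mul, eq_natCast, map_natCast]; rfl

lemma Rel.shl (k : ℕ) (h : Rel z x d v w) : Rel z x d (2 ^ k * v) (fun s => dX k (w s)) := by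
  have := h.smul (2 ^ k)
  have e : (fun s => dX k (w s)) = (fun s => dS (2 ^ k) (w s)) := by
    funext s; simp [dX, dS, Nat.shiftLeft_eq, mul_comm]
  rw [e]; push_cast at this; exact this

lemma Rel.zero (d : Fin A → ℕ) : Rel z x d 0 (fun _ => (0, 0)) :=
  ⟨0, 0, isWeightedHomogeneous_zero _ _ _, isWeightedHomogeneous_zero _ _ _, by simp, by simp⟩

lemma Rel.const (p : ℕ × ℕ) : Rel z x 0 ((p.1 : ℝ) - p.2) (fun _ => p) :=
  ⟨C p.1, C p.2, isWeightedHomogeneous_C _ _, isWeightedHomogeneous_C _ _, by simp, by simp⟩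

lemma Rel.mz (a : Fin A) (h : Rel z x d v w) : Rel z x (Pi.single a 1 + d) (z a * v) w := by
  obtain ⟨P, N, hP, hN, hv, hw⟩ := h
  refine ⟨X (Sum.inl a) * P, X (Sum.inl a) * N, (isWeightedHomogeneous_X _ (wt A) _).mul hP,
    (isWeightedHomogeneous_X _ (wt A) _).mul hN, ?_, fun s => ?_⟩
  · rw [hv]; simp only [map_mul, aeval_X, Sum.elim_inl]; ring
  · beta_reduce; rw [hw]; simp only [map_mul, aeval_X, Sum.elim_inl, one_mul]

lemma Rel.mx (a : Fin A) (h : Rel z x d v w) :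
    Rel z x (Pi.single a 1 + d) (x a * v) (fun s => dX (s a) (w s)) := by
  obtain ⟨P, N, hP, hN, hv, hw⟩ := h
  refine ⟨X (Sum.inr a) * P, X (Sum.inr a) * N, (isWeightedHomogeneous_X _ (wt A) _).mul hP,
    (isWeightedHomogeneous_X _ (wt A) _).mul hN, ?_, fun s => ?_⟩
  · rw [hv]; simp only [map_mul, aeval_X, Sum.elim_inr]; ring
  · beta_reduce; rw [hw]; simp only [map_mul, aeval_X, Sum.elim_inr, dX, Nat.shiftLeft_eq, mul_comm]

lemma Rel.cast (h : Rel z x d v w) (hd : d = d') (hv : v = v') : Rel z x d' v' w := by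
  rw [← hd, ← hv]; exact h

end Link
end Kiss

namespace Kiss
section Prog
variable {A : ℕ} {z x : Fin A → ℝ} {d : Fin A → ℕ} {v : ℝ} {w : (Fin A → ℕ) → ℕ × ℕ}

def dH (s : ℕ) (p : ℕ × ℕ) : ℕ × ℕ := dA p (dX s p)
def dP (s : ℕ) (p : ℕ × ℕ) : ℕ × ℕ := dA (dX s p) (dN (dS 2 p))
def dQ (s : ℕ) (p : ℕ × ℕ) : ℕ × ℕ := dX s (dA (dS 4 p) (dX s p))

abbrev sing (a : Fin A) : Fin A → ℕ := Pi.single a 1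

lemma Rel.mh (a : Fin A) (h : Rel z x d v w) :
    Rel z x (sing a + d) ((z a + x a) * v) (fun s => dH (s a) (w s)) :=
  ((h.mz a).add (h.mx a)).cast rfl (by ring)

lemma Rel.mp (a : Fin A) (h : Rel z x d v w) :
    Rel z x (sing a + d) ((x a - 2 * z a) * v) (fun s => dP (s a) (w s)) :=
  ((h.mx a).add ((h.smul 2).mz a).neg).cast rfl (by push_cast; ring)

lemma Rel.mq (a : Fin A) (h : Rel z x d v w) :
    Rel z x (2 • sing a + d) ((4 * z a + x a) * x a * v) (fun s => dQ (s a) (w s)) :=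
  ((((h.smul 4).mz a).add (h.mx a)).mx a).cast (by rw [two_nsmul, add_assoc]) (by push_cast; ring)

def dHn (s : ℕ) (p : ℕ × ℕ) (n : ℕ) : ℕ × ℕ := Nat.rec p (fun _ r => dH s r) n

lemma Rel.mhn (a : Fin A) (h : Rel z x d v w) (n : ℕ) :
    Rel z x (n • sing a + d) ((z a + x a) ^ n * v) (fun s => dHn (s a) (w s) n) := by
  induction n with
  | zero => exact h.cast (by simp) (by simp)
  | succ n ih => exact (ih.mh a).cast (by rw [succ_nsmul]; abel) (by ring)

def decD (a : ℕ) : ℕ × ℕ := (a / 2 * (1 - a % 2), a / 2 * (a % 2))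

def hpD (s : ℕ) (l : List ℕ) : ℕ × ℕ := List.rec (0, 0) (fun a _ r => dA (decD a) (dX s r)) l
def MD (s1 s2 : ℕ) (l : List (List ℕ)) : ℕ × ℕ :=
  List.rec (0, 0) (fun l _ r => dA (dM (hpD s1 l) (hpD s2 l)) (dX s1 (dX s2 r))) l

lemma Rel.const_z (a : Fin A) (p : ℕ × ℕ) (n : ℕ) :
    Rel z x (n • sing a) (((p.1 : ℝ) - p.2) * z a ^ n) (fun _ => p) := by
  induction n with
  | zero => exact (Rel.const p).cast (by simp) (by simp)
  | succ n ih => exact (ih.mz a).cast (by rw [succ_nsmul]; abel) (by ring)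

lemma Rel.hp (a : Fin A) (l : List ℕ) (m : ℕ) (hm : l = [] ∨ l.length = m + 1) :
    Rel z x (m • sing a) (hpR (z a) (x a) l) (fun s => hpD (s a) l) := by
  induction l generalizing m with
  | nil => exact Rel.zero _
  | cons b l ih =>
    have hm' : l.length = m := by simpa using hm
    have h1 := Rel.const_z (z := z) (x := x) a (decD b) m
    have h2 : Rel z x (m • sing a) (x a * hpR (z a) (x a) l) (fun s => dX (s a) (hpD (s a) l)) := by
      cases m with
      | zero =>
        have : l = [] := List.length_eq_zero_iff.1 hm'
        subst this
        have e : (fun s : Fin A → ℕ => dX (s a) (hpD (s a) [])) = fun _ => (0, 0) := by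
          funext s; simp [dX, hpD]
        rw [e]
        exact (Rel.zero _).cast rfl (by simp only [hpR, mul_zero])
      | succ m =>
        exact ((ih m (Or.inr hm')).mx a).cast (by rw [succ_nsmul]; abel) rfl
    exact (h1.add h2).cast rfl (by rw [hpR, hm', decR]; simp [decD])

def rowsOK : List (List ℕ) → ℕ → Bool
  | [], _ => true
  | (l :: ls), m => l.length == m + 1 && (match m with
    | 0 => ls.isEmpty
    | m+1 => rowsOK ls m)

lemma Rel.M (a1 a2 : Fin A) (ls : List (List ℕ)) (m : ℕ) (hm : rowsOK ls m = true) :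
    Rel z x (m • (sing a1 + sing a2)) (MR (z a1) (x a1) (z a2) (x a2) ls)
      (fun s => MD (s a1) (s a2) ls) := by
  induction ls generalizing m with
  | nil => exact Rel.zero _
  | cons l ls ih =>
    simp only [rowsOK, Bool.and_eq_true, beq_iff_eq] at hm
    have h1 := (Rel.hp (z := z) (x := x) a1 l m (Or.inr hm.1)).mul (Rel.hp (z := z) (x := x) a2 l m (Or.inr hm.1))
    have h2 : Rel z x (m • (sing a1 + sing a2))
        (x a1 * (x a2 * MR (z a1) (x a1) (z a2) (x a2) ls))
        (fun s => dX (s a1) (dX (s a2) (MD (s a1) (s a2) ls))) := by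
      cases m with
      | zero =>
        have : ls = [] := by simpa using hm.2
        subst this
        have e : (fun s : Fin A → ℕ => dX (s a1) (dX (s a2) (MD (s a1) (s a2) []))) = fun _ => (0, 0) := by
          funext s; simp [dX, MD]
        rw [e]
        exact (Rel.zero _).cast rfl (by simp [MR])
      | succ m =>
        exact (((ih m hm.2).mx a2).mx a1).cast (by rw [succ_nsmul]; abel) rfl
    exact ((h1.cast (nsmul_add _ _ _).symm rfl).add h2).cast rfl (by rw [MR]; ring)

def sD (s1 s2 s3 : ℕ) (p : ℕ × ℕ) : ℕ × ℕ :=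
  dA (dS 2 (dP s3 (dH s1 (dH s2 p)))) (dN (dP s1 (dP s2 (dH s3 p))))
def wD (s1 s2 s3 : ℕ) (p : ℕ × ℕ) : ℕ × ℕ :=
  dS 9 (dQ s1 (dQ s2 (dH s3 (dH s3 p))))

abbrev EE (a1 a2 a3 : Fin A) : Fin A → ℕ := sing a1 + sing a2 + sing a3

lemma Rel.ss (a1 a2 a3 : Fin A) (h : Rel z x d v w) :
    Rel z x (EE a1 a2 a3 + d) (sR (z a1) (x a1) (z a2) (x a2) (z a3) (x a3) * v)
      (fun s => sD (s a1) (s a2) (s a3) (w s)) :=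
  ((((((h.mh a2).mh a1).mp a3).smul 2).cast (by unfold EE; abel) rfl).add
    ((((h.mh a3).mp a2).mp a1).neg.cast (by unfold EE; abel) rfl)).cast rfl
    (by rw [sR]; push_cast; ring)

lemma Rel.ww (a1 a2 a3 : Fin A) (h : Rel z x d v w) :
    Rel z x (2 • EE a1 a2 a3 + d) (wR (z a1) (x a1) (z a2) (x a2) (z a3) (x a3) * v)
      (fun s => wD (s a1) (s a2) (s a3) (w s)) :=
  (((((h.mh a3).mh a3).mq a2).mq a1).smul 9).cast (by unfold EE; simp only [two_nsmul]; abel)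
    (by rw [wR]; push_cast; ring)

def fD (s1 s2 s3 : ℕ) (l : List (ℕ × List (List ℕ))) : (ℕ × ℕ) × (ℕ × ℕ) :=
  List.rec ((0, 0), (0, 0)) (fun d rest r =>
    (dA (dX d.1 (dHn s3 (MD s1 s2 d.2) rest.length))
      (dA (dS (2 * (16 - rest.length) + 11) (sD s1 s2 s3 r.1))
        (dN (dS ((16 - rest.length + 1) * (16 - rest.length + 11)) (wD s1 s2 s3 r.2)))), r.1)) l

noncomputable def BR (z1 x1 z2 x2 z3 x3 : ℝ) : List (ℕ × List (List ℕ)) → ℝ × ℝ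
  | [] => (0, 0)
  | (d :: rest) =>
    (2 ^ d.1 * ((z3 + x3) ^ rest.length * MR z1 x1 z2 x2 d.2) +
      (((2 * (16 - rest.length) + 11 : ℕ) : ℝ) * (sR z1 x1 z2 x2 z3 x3 * (BR z1 x1 z2 x2 z3 x3 rest).1) +
       -((((16 - rest.length + 1) * (16 - rest.length + 11) : ℕ) : ℝ)
          * (wR z1 x1 z2 x2 z3 x3 * (BR z1 x1 z2 x2 z3 x3 rest).2))),
      (BR z1 x1 z2 x2 z3 x3 rest).1)

def DOK : List (ℕ × List (List ℕ)) → Bool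
  | [] => true
  | (d :: rest) => rowsOK d.2 rest.length && DOK rest

def QQ (z x : Fin A → ℝ) (E : Fin A → ℕ) (L j : ℕ) (v : ℝ) (w : (Fin A → ℕ) → ℕ × ℕ) : Prop :=
  (v = 0 ∧ w = fun _ => (0, 0)) ∨ ∃ N, N + j = L ∧ Rel z x (N • E) v w

lemma Rel.BQ (a1 a2 a3 : Fin A) (D : List (ℕ × List (List ℕ))) (hD : DOK D = true) :
    QQ z x (EE a1 a2 a3) D.length 1 (BR (z a1) (x a1) (z a2) (x a2) (z a3) (x a3) D).1
      (fun s => (fD (s a1) (s a2) (s a3) D).1) ∧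
    QQ z x (EE a1 a2 a3) D.length 2 (BR (z a1) (x a1) (z a2) (x a2) (z a3) (x a3) D).2
      (fun s => (fD (s a1) (s a2) (s a3) D).2) := by
  induction D with
  | nil => exact ⟨Or.inl ⟨rfl, rfl⟩, Or.inl ⟨rfl, rfl⟩⟩
  | cons d rest ih =>
    simp only [DOK, Bool.and_eq_true] at hD
    obtain ⟨i1, i2⟩ := ih hD.2
    refine ⟨Or.inr ⟨rest.length, rfl, ?_⟩, ?_⟩
    · have h0 := (((Rel.M (z := z) (x := x) a1 a2 d.2 _ hD.1).mhn a3 rest.length).shl d.1).cast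
        (show _ = rest.length • EE a1 a2 a3 by unfold EE; simp only [nsmul_add]; abel) rfl
      have h1 : Rel z x (rest.length • EE a1 a2 a3)
          (sR (z a1) (x a1) (z a2) (x a2) (z a3) (x a3) *
            (BR (z a1) (x a1) (z a2) (x a2) (z a3) (x a3) rest).1)
          (fun s => sD (s a1) (s a2) (s a3) (fD (s a1) (s a2) (s a3) rest).1) := by
        rcases i1 with ⟨e1, e2⟩ | ⟨N, hN, h⟩
        · have e : (fun s : Fin A → ℕ => sD (s a1) (s a2) (s a3) (fD (s a1) (s a2) (s a3) rest).1)
              = fun _ => (0, 0) := by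
            funext s
            have := congrFun e2 s
            beta_reduce at this
            rw [this]; simp [sD, dA, dS, dP, dH, dN, dX]
          rw [e, e1, mul_zero]; exact Rel.zero _
        · exact (h.ss a1 a2 a3).cast (by rw [← hN, succ_nsmul]; abel) rfl
      have h2 : Rel z x (rest.length • EE a1 a2 a3)
          (wR (z a1) (x a1) (z a2) (x a2) (z a3) (x a3) *
            (BR (z a1) (x a1) (z a2) (x a2) (z a3) (x a3) rest).2)
          (fun s => wD (s a1) (s a2) (s a3) (fD (s a1) (s a2) (s a3) rest).2) := by
        rcases i2 with ⟨e1, e2⟩ | ⟨N, hN, h⟩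
        · have e : (fun s : Fin A → ℕ => wD (s a1) (s a2) (s a3) (fD (s a1) (s a2) (s a3) rest).2)
              = fun _ => (0, 0) := by
            funext s
            have := congrFun e2 s
            beta_reduce at this
            rw [this]; simp [wD, dA, dS, dQ, dH, dX]
          rw [e, e1, mul_zero]; exact Rel.zero _
        · exact (h.ww a1 a2 a3).cast (by rw [← hN, add_nsmul]; abel) rfl
      exact h0.add ((h1.smul _).add (h2.smul _).neg)
    · rcases i1 with h | ⟨N, hN, h⟩
      · exact Or.inl h
      · exact Or.inr ⟨N, by rw [List.length_cons, ← hN], h⟩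

lemma Rel.f (a1 a2 a3 : Fin A) (D : List (ℕ × List (List ℕ))) (hD : DOK D = true)
    (hL : D.length = 17) :
    Rel z x (16 • EE a1 a2 a3) (BR (z a1) (x a1) (z a2) (x a2) (z a3) (x a3) D).1
      (fun s => (fD (s a1) (s a2) (s a3) D).1) := by
  rcases (Rel.BQ (z := z) (x := x) a1 a2 a3 D hD).1 with ⟨e1, e2⟩ | ⟨N, hN, h⟩
  · rw [e1, e2]; exact Rel.zero _
  · exact h.cast (by rw [show N = 16 by omega]) rfl

lemma RR_step (m : ℕ) (s w : ℝ) (k : ℕ) :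
    RR m s w (k+1) = (2 * k + m - 2) * s * RR m s w k - k * (k + m - 3) * w * RR m s w (k - 1) := by
  cases k with
  | zero => simp [RR]
  | succ k => simp only [RR, Nat.add_sub_cancel]; push_cast; ring

lemma fR_BR (z1 x1 z2 x2 z3 x3 : ℝ) (D : List (ℕ × List (List ℕ))) (k : ℕ) (hk : k + D.length = 17) :
    fR z1 x1 z2 x2 z3 x3 k D = (BR z1 x1 z2 x2 z3 x3 D).1 * RR 13 (sR z1 x1 z2 x2 z3 x3) (wR z1 x1 z2 x2 z3 x3) k
      - k * (k + 10) * wR z1 x1 z2 x2 z3 x3 * (BR z1 x1 z2 x2 z3 x3 D).2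
        * RR 13 (sR z1 x1 z2 x2 z3 x3) (wR z1 x1 z2 x2 z3 x3) (k - 1) := by
  induction D generalizing k with
  | nil => simp [fR, BR]
  | cons d rest ih =>
    have hk' : 16 - rest.length = k := by simp at hk; omega
    rw [fR, ih (k+1) (by simp at hk; omega), RR_step, BR, hk']
    push_cast
    ring

lemma fR_eq (z1 x1 z2 x2 z3 x3 : ℝ) (D : List (ℕ × List (List ℕ))) (hL : D.length = 17) :
    fR z1 x1 z2 x2 z3 x3 0 D = (BR z1 x1 z2 x2 z3 x3 D).1 := by
  rw [fR_BR _ _ _ _ _ _ D 0 (by omega)]; simp [RR]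

/-- the symmetrised sum -/
def FD (D : List (ℕ × List (List ℕ))) (s0 s1 s2 : ℕ) : ℕ × ℕ :=
  dA (fD s0 s1 s2 D).1 (dA (fD s0 s2 s1 D).1 (fD s1 s2 s0 D).1)

noncomputable def FRs (D : List (ℕ × List (List ℕ))) (z x : Fin 3 → ℝ) : ℝ :=
  fR (z 0) (x 0) (z 1) (x 1) (z 2) (x 2) 0 D + (fR (z 0) (x 0) (z 2) (x 2) (z 1) (x 1) 0 D +
    fR (z 1) (x 1) (z 2) (x 2) (z 0) (x 0) 0 D)

lemma Rel.F (z x : Fin 3 → ℝ) (D : List (ℕ × List (List ℕ))) (hD : DOK D = true)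
    (hL : D.length = 17) :
    Rel z x (fun _ => 16) (FRs D z x) (fun s => FD D (s 0) (s 1) (s 2)) := by
  unfold FRs
  rw [fR_eq _ _ _ _ _ _ _ hL, fR_eq _ _ _ _ _ _ _ hL, fR_eq _ _ _ _ _ _ _ hL]
  have e : ∀ a1 a2 a3 : Fin 3, ({a1, a2, a3} : Finset (Fin 3)).card = 3 →
      16 • EE a1 a2 a3 = fun _ => 16 := by decide
  exact ((Rel.f 0 1 2 D hD hL).cast (e _ _ _ rfl) rfl).add
    (((Rel.f 0 2 1 D hD hL).cast (e _ _ _ rfl) rfl).add ((Rel.f 1 2 0 D hD hL).cast (e _ _ _ rfl) rfl))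

/-- determinant -/
def hhD (s1 s2 : ℕ) (p : ℕ × ℕ) : ℕ × ℕ := dH s1 (dH s1 (dH s2 (dH s2 p)))
def detD (s0 s1 s2 : ℕ) : ℕ × ℕ :=
  dA (dS 4 (dH s0 (dH s0 (hhD s1 s2 (1, 0)))))
  (dA (dP s0 (dP s1 (dP s2 (dH s0 (dH s1 (dH s2 (1, 0)))))))
    (dN (dA (dP s0 (dP s0 (hhD s1 s2 (1, 0)))) (dA (dP s1 (dP s1 (hhD s0 s2 (1, 0))))
      (dP s2 (dP s2 (hhD s0 s1 (1, 0))))))))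

noncomputable def detR (z x : Fin 3 → ℝ) : ℝ :=
  4 * ((z 0 + x 0) * (z 1 + x 1) * (z 2 + x 2)) ^ 2
  + (x 0 - 2 * z 0) * (x 1 - 2 * z 1) * (x 2 - 2 * z 2) * ((z 0 + x 0) * (z 1 + x 1) * (z 2 + x 2))
  - ((x 0 - 2 * z 0) * ((z 1 + x 1) * (z 2 + x 2))) ^ 2
  - ((x 1 - 2 * z 1) * ((z 0 + x 0) * (z 2 + x 2))) ^ 2
  - ((x 2 - 2 * z 2) * ((z 0 + x 0) * (z 1 + x 1))) ^ 2

lemma Rel.hh (a b : Fin A) (h : Rel z x d v w) :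
    Rel z x (2 • sing a + 2 • sing b + d) (((z a + x a) * (z b + x b)) ^ 2 * v)
      (fun s => hhD (s a) (s b) (w s)) :=
  ((((h.mh b).mh b).mh a).mh a).cast (by simp only [two_nsmul]; abel) (by ring)

lemma Rel.det (z x : Fin 3 → ℝ) :
    Rel z x (fun _ => 2) (detR z x) (fun s => detD (s 0) (s 1) (s 2)) := by
  have one : Rel z x 0 1 (fun _ => (1, 0)) := (Rel.const (1, 0)).cast rfl (by simp)
  have h1 := ((((one.hh 1 2).mh 0).mh 0).smul 4).cast (show _ = (fun _ => 2) by decide) rfl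
  have h2 := ((((((one.mh 2).mh 1).mh 0).mp 2).mp 1).mp 0).cast (show _ = (fun _ => 2) by decide) rfl
  have h3 := (((one.hh 1 2).mp 0).mp 0).cast (show _ = (fun _ => 2) by decide) rfl
  have h4 := (((one.hh 0 2).mp 1).mp 1).cast (show _ = (fun _ => 2) by decide) rfl
  have h5 := (((one.hh 0 1).mp 2).mp 2).cast (show _ = (fun _ => 2) by decide) rfl
  exact (h1.add (h2.add (h3.add (h4.add h5)).neg)).cast rfl (by unfold detR; push_cast; ring)

end Prog
end Kiss

namespace Kiss
section Tree

def rep (W s N : ℕ) : ℕ := Nat.rec 0 (fun i r => r + W <<< (s * i)) N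
def hpw (s r n : ℕ) : ℕ := Nat.rec r (fun _ r => r + r <<< s) n
def mk0 (b n : ℕ) : ℕ := rep (rep (2 ^ b - 1) (sg b n 1) (n+1)) (sg b n 2) (n+1)
def mk1 (b n : ℕ) : ℕ := rep (rep (2 ^ b - 1) (sg b n 0) (n+1)) (sg b n 2) (n+1)
def mk2 (b n : ℕ) : ℕ := rep (rep (2 ^ b - 1) (sg b n 0) (n+1)) (sg b n 1) (n+1)
def tp (b n : ℕ) : ℕ := rep (rep (rep (2 ^ (b-1)) (sg b n 0) (n+1)) (sg b n 1) (n+1)) (sg b n 2) (n+1)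
def hP (b n : ℕ) : ℕ := hpw (sg b n 2) (hpw (sg b n 1) (hpw (sg b n 0) 1 n) n) n

noncomputable def mp (f : ℕ → ℕ) (l : List ℕ) : List ℕ := List.rec [] (fun a _ r => f a :: r) l
noncomputable def stp (l : List ℕ) : ℕ → List ℕ :=
  List.rec (fun c => [c]) (fun r _ f c => (c + r) :: f (2 * r)) l
noncomputable def TR (l : List ℕ) : List ℕ := List.rec [] (fun c _ r => stp r c) l
noncomputable def rv (l : List ℕ) : List ℕ → List ℕ := List.rec (fun a => a) (fun c _ f a => f (c :: a)) l
noncomputable def TL (l : List ℕ) : List ℕ := rv (TR (rv l [])) []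
noncomputable def pkl (s : ℕ) (l : List ℕ) : ℕ := List.rec 0 (fun a _ r => a + r <<< s) l
noncomputable def unp (s m W : ℕ) (l : List ℕ) : List ℕ :=
  mp (fun i => (W &&& (m <<< (s * i))) >>> (s * i)) l

def KK : ℕ := 2 ^ 261
def KB : ℕ := 556129836047910131733661839150682557440501156413440000

def A0 : ℕ := rep (2 ^ 665 - 1) (sg 665 16 1) (16+1)
def A1 : ℕ := rep (2 ^ 665 - 1) (sg 665 16 0) (16+1)
def A2 : ℕ := mk2 665 16
def AT : ℕ := tp 665 16
def AH : ℕ := hP 665 16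
def B0 : ℕ := mk0 63 2
def B1 : ℕ := mk1 63 2
def B2 : ℕ := mk2 63 2
def BT : ℕ := tp 63 2
def BH : ℕ := hP 63 2

structure St where
  W : List ℕ
  V : ℕ
  l0 : ℕ
  j0 : ℕ
  l1 : ℕ
  j1 : ℕ
  l2 : ℕ
  j2 : ℕ

noncomputable def L0 (s : St) : St := ⟨mp (fun w => SL (sg 665 16 0) A0 w 16) s.W, SL (sg 63 2 0) B0 s.V 2,
  2 * s.l0, s.j0 + 1, s.l1, s.j1, s.l2, s.j2⟩
noncomputable def L1 (s : St) : St := ⟨mp (fun w => SL (sg 665 16 1) A1 w 16) s.W, SL (sg 63 2 1) B1 s.V 2,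
  s.l0, s.j0, 2 * s.l1, s.j1 + 1, s.l2, s.j2⟩
noncomputable def L2 (s : St) : St := ⟨TL s.W, SL (sg 63 2 2) B2 s.V 2,
  s.l0, s.j0, s.l1, s.j1, 2 * s.l2, s.j2 + 1⟩
noncomputable def R0 (s : St) : St := ⟨mp (fun w => SR (sg 665 16 0) A0 w 16 16) s.W, SR (sg 63 2 0) B0 s.V 2 2,
  2 * s.l0 + 1, s.j0 + 1, s.l1, s.j1, s.l2, s.j2⟩
noncomputable def R1 (s : St) : St := ⟨mp (fun w => SR (sg 665 16 1) A1 w 16 16) s.W, SR (sg 63 2 1) B1 s.V 2 2,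
  s.l0, s.j0, 2 * s.l1 + 1, s.j1 + 1, s.l2, s.j2⟩
noncomputable def R2 (s : St) : St := ⟨TR s.W, SR (sg 63 2 2) B2 s.V 2 2,
  s.l0, s.j0, s.l1, s.j1, 2 * s.l2 + 1, s.j2 + 1⟩

inductive Tr where
  | g | d | k
  | a (l r : Tr) | b (l r : Tr) | c (l r : Tr)

def dep (s : St) : ℕ := s.j0 + s.j1 + s.j2

noncomputable def okG (s : St) : Bool :=
  Nat.ble (dep s) 22 && Nat.beq ((pkl (sg 665 16 2) s.W + AT - (3 * KK + KB) * 2 ^ (16 * dep s) * AH) &&& AT) AT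
def okD (s : St) : Bool :=
  Nat.ble (dep s) 22 && Nat.beq ((s.V + BT - (2 ^ 10 * 2 ^ (2 * dep s) + 1) * BH) &&& BT) BT
def okK (s : St) : Bool :=
  Nat.ble ((s.l0 + 1) * 2 ^ s.j1) (s.l1 * 2 ^ s.j0) || Nat.ble ((s.l1 + 1) * 2 ^ s.j2) (s.l2 * 2 ^ s.j1)

noncomputable def chk (t : Tr) : St → Bool :=
  Tr.rec (motive := fun _ => St → Bool) okG okD okK
    (fun _ _ l r s => Nat.ble (dep s) 21 && (l (L0 s) && r (R0 s)))
    (fun _ _ l r s => Nat.ble (dep s) 21 && (l (L1 s) && r (R1 s)))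
    (fun _ _ l r s => Nat.ble (dep s) 21 && (l (L2 s) && r (R2 s))) t

def wf (p : ℕ × ℕ) : ℕ := 3 * KK * AH + p.2 - p.1
noncomputable def root (D : List (ℕ × List (List ℕ))) : St :=
  ⟨unp (sg 665 16 2) A2 (wf (FD D (sg 665 16 0) (sg 665 16 1) (sg 665 16 2)))
      [0, 1, 2, 3, 4, 5, 6, 7, 8, 9, 10, 11, 12, 13, 14, 15, 16],
    2 ^ 10 * BH + (detD (sg 63 2 0) (sg 63 2 1) (sg 63 2 2)).2
    - (detD (sg 63 2 0) (sg 63 2 1) (sg 63 2 2)).1, 0, 0, 0, 0, 0, 0⟩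

end Tree
end Kiss

namespace Kiss
set_option maxRecDepth 100000 in
def DD : List (ℕ × List (List ℕ)) := [(149, [[3741656,79812043,3975609500,36102175149,156242448298,385198293273,572976199528,529868912209,288956509976,69652618755,6868243577,9137375526,2309415021,136369411,90243672,1962061,7932],
 [243231168,6975945783,70699125374,343254910903,951519631384,1628081149557,1771031563288,1201579936043,461051110616,69058391263,15158026657,8213183728,1234203287,88859776,860997,52133],
 [2577211354,35225444393,181873839942,483111624397,731236441482,626775455497,270379855668,24287727087,26814780637,8791682512,16380627,238360095,34026856,1874923,28174],
 [7199118710,88619259591,416014786658,991246923899,1324735210960,1009296471877,406022336642,53133087261,18145192725,7247935352,808683945,13420842,1399322,76990],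
 [21245683354,115709921725,278333028544,366275505563,253423019086,77866491135,1851988515,6926511012,1110381127,107102347,135816,2765962,170982],
 [17386805382,88493655753,188817062328,218473464375,138288828414,42669722253,1920737656,2559794598,689299743,62881480,582545,17474],
 [20605788584,71316506909,106696145170,85504562819,33627527934,5136867939,936579911,594103274,108259417,3533822,161386],
 [4892844926,10885358107,9124872572,4203563799,539627956,240889908,59720651,5007468,417423,1822],
 [3029450052,6639780403,4672582470,1191009451,88266957,97996796,12309175,425160,5253],
 [992668046,1088141583,421652820,26642691,30086733,5182086,205383,3221],
 [536832284,400184115,62984660,13079796,7143955,472448,1512],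
 [219619134,125965603,3008213,8989900,474755,15917],
 [21711298,5929927,2429287,169314,10262],
 [7052528,1471756,186635,19895],
 [1025780,200082,10817],
 [15618,692],
 [122]]),
(140, [[51655016,3367139585,68807497506,531278090815,2051909594762,4444200680197,5610327582036,3953795168091,1116437596594,370375401546,411542346359,139616875722,22361308781,1534074738,34985335,96678],
 [1611104652,29265778443,224280330900,808615118049,1626613767884,2059400868595,1802641113248,1179655610429,554366221860,177538926023,32322210330,3139738181,12801088,13822502,600030],
 [17750152010,191597537057,947792695804,2686744659725,4705611089002,5286056344035,3769639348008,1686739281351,479513745176,88281066453,11341811530,781747269,8133237,390171],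
 [93020339232,915552027975,3591437698518,7528162857335,9323511109360,7117584059889,3404276076064,1011320608195,179297249998,17374276037,577008408,11593166,129547],
 [76684222370,377671345567,793826976980,885409027161,556134010616,224046138433,79793319162,24610548683,6182103662,841450529,13072436,443574],
 [164878022044,786940120873,1634089257732,1913786710467,1303643803092,522983147417,120502882028,14225957841,860501210,5017113,590997],
 [162364304046,601687616911,893460211060,712992088263,311158989054,72136652009,7580232402,116900363,3140008,567145],
 [76509124342,274749890063,360849061618,236527874553,84839443714,14288665195,550432636,30304494,108131],
 [36200823268,65593983733,45510145558,14789070893,2036125648,134859695,8282975,406668],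
 [9614962404,17287676171,10418034770,2845520813,244396502,4259526,79912],
 [8413901724,5272575101,2127231430,414477409,9872284,119668],
 [1998335940,635641511,2426336,7566833,118746],
 [480110674,246086073,23553722,39498],
 [40028828,2598627,51201],
 [3630874,30729],
 [48188]]),
(131, [[1022479458,40699151009,535610459932,3106424718651,9626187622490,17537100143887,19484177092912,13117839318243,4834446028024,596142495567,184268664599,70983504218,7347734055,159417880,3525883],
 [16412391108,281598851645,1732092169470,5573318259571,10486441006754,12353619585147,9243454626662,4377150531005,1244569783974,192972708677,17142257010,2200123687,164860154,2332481],
 [57252640922,759818813807,4119650392156,11051147447937,16715760793162,14948224808063,7942271033638,2505002044831,456425278346,49616884409,3903604292,72900557,6997243],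
 [318822389246,2363469990463,7314845870922,12007298457915,11134056201770,5803081275469,1558624418468,125161205495,31593167153,6686136502,308929741,3104557],
 [421527110222,2174740459975,4838049027082,5890526178823,4173521917578,1736992491459,390615983000,36104531299,1579732666,181848213,453368],
 [754626491038,3061675029429,5395852269538,5044504294935,2601365068234,743455436785,109863034824,6135137481,9699930,4925719],
 [507360433462,1416298904859,1625714971312,998290944497,333888297944,61533199157,4055318346,180383002,5240219],
 [75803633642,130058737801,91258694362,63241728145,19571690212,2996471319,119173522,4589418],
 [74373896474,115079706899,40812160816,6597831067,153868487,37081780,4403120],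
 [8955731660,3681781839,642404714,257351140,55782403,89338],
 [12828183288,7152772155,1429536062,82921839,983599],
 [1287123580,160945597,11624539,220597],
 [289317442,61464091,124190],
 [19303378,124645],
 [640622]]),
(123, [[7029375858,217640644905,2178371213626,10217384604465,26467488257352,41094364920015,39969047723694,24529422869355,9179910782976,1927986285533,183203221212,2867312257,567626963,1309693],
 [36817542590,639198937643,4243895779702,14265805889979,26927058907598,29742434562903,19464231386018,7541909806319,1668622130610,199491202379,13453037510,894966669,5827913],
 [172173992162,1767876683575,7123126065292,15299046034117,19411472052378,14990644081981,6955938249260,1892781779489,284826232526,20078881701,80344832,21939148],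
 [852361058174,5370372193137,13661069712910,18342660852319,13960763367326,6232770407805,1678145956288,256652616623,21793320780,644266933,16145612],
 [1042990831616,4378168224465,7910617222894,7560206416957,4043772383580,1155348395505,130323464106,4394756078,422282155,19048787],
 [991213077390,3218045571601,4685209643456,3584871150617,1452799777360,290182820109,22102141884,134135998,8678951],
 [406532157642,966773058629,1020317610118,549056683199,138754653078,15111576811,474352672,16130308],
 [332151050564,592385320029,384862004198,117069607325,11154266530,32617429,29999114],
 [164726302844,104957899529,35516339254,5640431269,210163319,7951214],
 [26766127256,2778609828,1286364777,296904769,15722177],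
 [19894201744,5995758105,395566258,10294171],
 [320322174,16620777,348584],
 [59040772,324791],
 [2995810]]),
(114, [[43833364718,977763037079,7790581332978,30426894610651,65816870276026,84818171146313,67450598349598,32790836371563,9181615883700,1296716769433,72133268870,680231483,60265518],
 [140159541886,1891187375401,10852006626512,32481092158715,54166444365504,52026903950901,29114244654210,9411042660747,1619974499852,113561565993,462464142,80764684],
 [374020997284,3540528337913,11821105258720,19818112842275,18334071460196,9277596742925,2376068011172,269196258071,9933152210,981339957,149461584],
 [461039408960,2248325602773,5455254127464,7491673088549,6054739012674,2643956542061,568122929674,25192037895,2948227119,40652913],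
 [1530194891406,5954955826445,9991458712268,8612267817709,4059105476166,1043667583479,129710137830,6173796987,36231955],
 [1204052908706,3473319987761,4136825378938,2373898631149,617494249622,69511953741,1118943976,63865400],
 [322915914614,396498519697,87575534766,11222203439,10640690903,631594976,91462422],
 [114174628536,133710081299,50369723436,5524336269,175944887,15577304],
 [31857522848,19356867539,6771660278,626898371,8891005],
 [6406874846,2752036369,310205066,11600771],
 [536619484,125658265,2894067],
 [80156092,7152182],
 [2186414]]),
(105, [[159789699420,2590485777461,16124719291772,50074324315723,85966295459462,87251692209509,54038891046280,19915779371501,3984203156050,356147462951,11839660486,43408005],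
 [688034063774,7194892323037,29657694010088,62414921425097,73382134648350,48662108727495,17804059868366,3316317195973,264531644736,5994611889,65852710],
 [1168375691066,7116721210435,18225805717286,24146083430223,18415200463504,7722484163537,1708843690980,183008567555,13460700144,20807877],
 [2660477317094,12133185991335,21800498712036,19924393888689,10315905605474,2858734372471,338578106906,1915486997,585962975],
 [1922954850836,5965194401337,7117722504192,3872199216805,1002467941702,112464826587,2665436312,254435993],
 [1082450897854,3145251432933,3186202020026,1292354028981,233799045848,12862267921,132489333],
 [153855782796,276948350023,160447072008,38664673289,2978361840,46006826],
 [81536875638,62985590567,21126767678,1867314731,10255347],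
 [21162986938,8849857307,1540633644,3783079],
 [2454689930,117362237,29393726],
 [192143008,14670792],
 [4234316]]),
(95, [[523875735794,7235412736837,38623484227604,101729847279267,146913385922302,122587271783609,58366186695714,14910315674601,1726798346190,69308451907,920044899],
 [1271279763154,11234760374099,37929991716632,64916311524183,61764261199090,33225938016355,9573379009014,1311629547457,56781354584,52397585],
 [1409261989222,3955100866977,3214557461966,166348282178,1139684085711,950027428840,223406898729,8769336382,1026488629],
 [2075593726652,6608150684595,5709223815582,128247675095,1507208478243,456791378274,36789271401,523822987],
 [285513642298,875964925425,1186760446672,685332096943,170378538294,13387491009,22567884],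
 [541896077976,871161579143,540416908998,114842357999,7336158374,15011208],
 [100681413358,107401884787,40344659652,4007868067,23535150],
 [20750026218,12040407689,2667045050,33591976],
 [5482656666,976279473,22643014],
 [160809006,10934714],
 [6648856]]),
(86, [[604597419060,7018144683117,29950816489764,64937057489321,77687656377710,50830551762935,16843803707594,2337318166319,74654267970,380617808],
 [2457936057742,10194628615655,16008186747992,13488893899685,5568079199912,466286563947,555844891131,75809950532,2382848979],
 [565466087906,2585032466083,4301715186516,3451811803241,1360444691642,260242049291,15141471430,181339213],
 [179491762260,510787742633,461563186066,115239931745,17091546125,6900038234,452716],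
 [157659233050,419547215687,407852059112,156423292129,20891854190,17344304],
 [102121328106,118905437569,58630577836,7451566851,69607362],
 [8685960982,6032257915,1242165414,6381270],
 [1458737964,312365059,5334526],
 [151626658,4548532],
 [6135506]]),
(77, [[73907566824,575823797463,1690559946198,2450062982859,1895616982178,780974181781,158370408838,12326140365,7199528],
 [47528101774,292212942753,647517148212,670532961037,345025781854,83965458273,7608292154,4870062],
 [44275821308,163460278007,217109542814,131291193529,36110225558,3680826121,17763],
 [35157056198,95060250775,84250678526,29500239823,3544858314,5399043],
 [12903211236,22662872903,11754330562,1725526227,9888893],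
 [4845553430,4761463293,1021231846,3299865],
 [1073457048,328225129,11560828],
 [143839326,14618967],
 [14715388]]),
(67, [[207729355192,1897124130821,1242765142006,1791786162808,1724060266569,742748675166,227714320767,21022577774],
 [991466385530,4191718635706,10931144560443,7431861657762,2490058628555,545777242660,41492505615],
 [517843096868,1075723443689,734579277702,235545253431,41987839690,2530851991],
 [54411467638,92570688055,43309228544,4764130487,255547411],
 [14917787602,16829206125,3921437572,49020401],
 [3715816736,2060356053,179651330],
 [474033868,102153629],
 [51049522]]),
(58, [[72508579054,357246444461,617240860308,468007837101,155989606112,18455702161,24751858],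
 [68967959798,224898787327,247014932286,108230546343,15628930450,11572083],
 [44674106854,90845318439,54650552890,9271093973,965735],
 [21231356266,22230339733,4556892710,11523322],
 [4140463902,1883708795,74703590],
 [860648260,223790373],
 [117446750]]),
(48, [[118290347796,412760684581,484487702436,223564819107,33584185464,197083579],
 [78895514112,176014748861,115304415176,20905158197,18220240],
 [33420684022,32436867409,6708782794,227767637],
 [9838433748,3996223855,12890838],
 [3256193998,943329557],
 [603770640]]),
(39, [[89835101910,216914543231,150740255484,30408129819,616737874],
 [34741607558,42761389061,12919975046,875964783],
 [14935176866,11218636605,1866359478],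
 [6692462256,1558725583],
 [1109965026]]),
(29, [[86389273626,137975756183,60768168514,7313614007],
 [39314910592,39169771309,7691777814],
 [10768157656,3258560793],
 [2029049254]]),
(19, [[94667036684,103095671845,22091102020],
 [22295366362,8800616137],
 [4193323684]]),
(9, [[55023134800,25554564363],
 [10436179712]]),
(0, [[19440990858]])]
end Kiss

namespace Kiss
section Masks

lemma rep_eq (W s N : ℕ) : rep W s N = W * ∑ i ∈ Finset.range N, (2 ^ s) ^ i := by
  induction N with
  | zero => simp [rep]
  | succ N ih =>
    have : rep W s (N+1) = rep W s N + W <<< (s * N) := rfl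
    rw [this, ih, Finset.sum_range_succ, Nat.shiftLeft_eq, pow_mul]; ring

lemma hpw_eq (s r n : ℕ) : hpw s r n = r * (1 + 2 ^ s) ^ n := by
  induction n with
  | zero => simp [hpw]
  | succ n ih =>
    have : hpw s r (n+1) = hpw s r n + hpw s r n <<< s := rfl
    rw [this, ih, Nat.shiftLeft_eq]; ring

lemma mk0_eq (b n : ℕ) : mk0 b n = maskSpec b n (0 : Fin 3) := by
  simp only [mk0, rep_eq, maskSpec, Fin.prod_univ_two, Finset.sum_range, mul_assoc]
  rfl
lemma mk1_eq (b n : ℕ) : mk1 b n = maskSpec b n (1 : Fin 3) := by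
  simp only [mk1, rep_eq, maskSpec, Fin.prod_univ_two, Finset.sum_range, mul_assoc]
  rfl
lemma mk2_eq (b n : ℕ) : mk2 b n = maskSpec b n (2 : Fin 3) := by
  simp only [mk2, rep_eq, maskSpec, Fin.prod_univ_two, Finset.sum_range, mul_assoc]
  rfl

lemma tp_eq (b n : ℕ) : tp b n = pk b (fun _ : Fin 3 → Fin (n+1) => 2 ^ (b-1)) := by
  simp only [tp, rep_eq, pk]
  rw [← Finset.mul_sum, ← Fintype.piFinset_univ,
    ← Finset.prod_univ_sum (t := fun _ : Fin 3 => (Finset.univ : Finset (Fin (n+1))))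
      (f := fun a i => (2 ^ sg b n (a:ℕ)) ^ (i:ℕ)), Fin.prod_univ_three]
  simp only [Finset.sum_range, mul_assoc]
  rfl

lemma hP_eq (b n : ℕ) : hP b n = pk b (Hc : (Fin 3 → Fin (n+1)) → ℕ) := by
  rw [pk_ev, ev_Hc, Fin.prod_univ_three]
  simp only [hP, hpw_eq, one_mul]
  rfl

end Masks
end Kiss

namespace Kiss
section Slices
variable {n b : ℕ}

lemma mp_eq (f : ℕ → ℕ) (l : List ℕ) : mp f l = l.map f := by
  induction l with
  | nil => rfl
  | cons a l ih => rw [List.map_cons, ← ih]; rfl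

lemma rv_eq (l : List ℕ) : ∀ a, rv l a = l.reverse ++ a := by
  induction l with
  | nil => intro a; rfl
  | cons c l ih =>
    intro a
    have : rv (c :: l) a = rv l (c :: a) := rfl
    rw [this, ih]; simp

lemma stp_len (l : List ℕ) : ∀ c, (stp l c).length = l.length + 1 := by
  induction l with
  | nil => intro c; rfl
  | cons r l ih =>
    intro c
    have : stp (r :: l) c = (c + r) :: stp l (2 * r) := rfl
    rw [this, List.length_cons, ih, List.length_cons]

lemma stp_0 (l : List ℕ) (c : ℕ) : (stp l c).getD 0 0 = c + l.getD 0 0 := by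
  cases l with
  | nil => rfl
  | cons r l => rfl

lemma stp_s (l : List ℕ) : ∀ (c j : ℕ), (stp l c).getD (j+1) 0 = 2 * l.getD j 0 + l.getD (j+1) 0 := by
  induction l with
  | nil => intro c j; simp [stp]
  | cons r l ih =>
    intro c j
    have : stp (r :: l) c = (c + r) :: stp l (2 * r) := rfl
    rw [this, List.getD_cons_succ, List.getD_cons_succ]
    cases j with
    | zero => rw [stp_0, List.getD_cons_zero]
    | succ j => rw [ih, List.getD_cons_succ]

lemma TR_len (l : List ℕ) : (TR l).length = l.length := by
  induction l with
  | nil => rfl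
  | cons c l ih =>
    have : TR (c :: l) = stp (TR l) c := rfl
    rw [this, stp_len, ih, List.length_cons]

lemma TR_get (l : List ℕ) : ∀ j, (TR l).getD j 0 = ∑ i ∈ Finset.range l.length, kR i j * l.getD i 0 := by
  induction l with
  | nil => intro j; simp [TR]
  | cons c l ih =>
    intro j
    have : TR (c :: l) = stp (TR l) c := rfl
    rw [this, List.length_cons, Finset.sum_range_succ']
    cases j with
    | zero => rw [stp_0, ih]; simp [kR, add_comm]
    | succ j =>
      rw [stp_s, ih, ih, Finset.mul_sum, ← Finset.sum_add_distrib]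
      simp only [List.getD_cons_succ]
      have : kR 0 (j+1) = 0 := by simp [kR]
      rw [this, zero_mul, add_zero]
      refine Finset.sum_congr rfl fun i _ => ?_
      simp only [kR, Nat.choose_succ_succ, pow_succ]; ring

lemma ofFn_getD {m : ℕ} (f : Fin m → ℕ) (i : Fin m) : (List.ofFn f).getD i 0 = f i := by
  rw [List.getD_eq_getElem _ _ (by simp)]; simp

lemma TR_ofFn {m : ℕ} (f : Fin m → ℕ) : TR (List.ofFn f) = List.ofFn (fun j : Fin m => ∑ i : Fin m, kR i j * f i) := by
  refine List.ext_getElem (by simp [TR_len]) fun j h1 h2 => ?_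
  rw [← List.getD_eq_getElem _ 0 h1, TR_get, List.getElem_ofFn, List.length_ofFn, Finset.sum_range]
  simp only [ofFn_getD]

lemma ofFn_rev {m : ℕ} (f : Fin m → ℕ) : (List.ofFn f).reverse = List.ofFn (fun i => f i.rev) := by
  refine List.ext_getElem (by simp) fun j h1 h2 => ?_
  simp only [List.getElem_reverse, List.getElem_ofFn, List.length_ofFn]
  congr 1
  ext
  simp [Fin.val_rev]; omega

lemma TL_ofFn (f : Fin (n+1) → ℕ) :
    TL (List.ofFn f) = List.ofFn (fun j : Fin (n+1) => ∑ i : Fin (n+1), kL n i j * f i) := by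
  rw [TL, rv_eq, rv_eq, List.append_nil, List.append_nil, ofFn_rev, TR_ofFn, ofFn_rev]
  congr 1
  funext j
  rw [← Equiv.sum_comp Fin.revPerm]
  refine Finset.sum_congr rfl fun i _ => ?_
  simp only [Fin.revPerm_apply, Fin.rev_rev]
  congr 1
  have h1 := i.2
  have h2 := j.2
  simp only [kR, kL, Fin.val_rev]
  rw [show n + 1 - ((i:ℕ) + 1) = n - i by omega, show n + 1 - ((j:ℕ) + 1) = n - j by omega]
  split
  · rw [← Nat.choose_symm (show n - (j:ℕ) ≤ n - i by omega),
      show n - (i:ℕ) - (n - j) = j - i by omega]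
  · rw [Nat.choose_eq_zero_of_lt (by omega), zero_mul]

def sl (c : (Fin 3 → Fin (n+1)) → ℕ) (i : Fin (n+1)) (e : Fin 2 → Fin (n+1)) : ℕ :=
  c (Fin.snoc (α := fun _ => Fin (n+1)) e i)

lemma slc_sl (b : ℕ) (c : (Fin 3 → Fin (n+1)) → ℕ) (i : Fin (n+1)) : slc b (Fin.last 2) c i = pk b (sl c i) := by
  unfold slc pk sl
  refine Finset.sum_congr rfl fun e _ => ?_
  rw [Fin.insertNth_last']
  simp only [Fin.succAbove_last, Fin.val_castSucc]

lemma sl_TT (K : ℕ → ℕ → ℕ) (a : Fin 2) (c : (Fin 3 → Fin (n+1)) → ℕ) (i : Fin (n+1)) :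
    sl (TT K a.castSucc c) i = TT K a (sl c i) := by
  funext e
  unfold sl TT
  refine Finset.sum_congr rfl fun j _ => ?_
  rw [Fin.insertNth_removeNth, Fin.insertNth_removeNth, ← Fin.snoc_update, Fin.snoc_castSucc]

lemma sl_TT2 (b : ℕ) (K : ℕ → ℕ → ℕ) (c : (Fin 3 → Fin (n+1)) → ℕ) (j : Fin (n+1)) :
    pk b (sl (TT K (Fin.last 2) c) j) = ∑ i : Fin (n+1), K i j * pk b (sl c i) := by
  unfold pk
  simp only [Finset.mul_sum]
  rw [Finset.sum_comm]
  refine Finset.sum_congr rfl fun e _ => ?_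
  rw [sl, TT, Finset.sum_mul]
  refine Finset.sum_congr rfl fun i _ => ?_
  rw [Fin.insertNth_removeNth, Fin.update_snoc_last, Fin.snoc_last, sl]
  ring

def LL (b : ℕ) (c : (Fin 3 → Fin (n+1)) → ℕ) : List ℕ := List.ofFn (fun i => pk b (sl c i))

lemma LL_TR (c : (Fin 3 → Fin (n+1)) → ℕ) : TR (LL b c) = LL b (TT kR 2 c) := by
  unfold LL; rw [TR_ofFn]; congr 1; funext j; exact (sl_TT2 b kR c j).symm
lemma LL_TL (c : (Fin 3 → Fin (n+1)) → ℕ) : TL (LL b c) = LL b (TT (kL n) 2 c) := by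
  unfold LL; rw [TL_ofFn]; congr 1; funext j; exact (sl_TT2 b (kL n) c j).symm

lemma LL_SL (a : Fin 2) (c : (Fin 3 → Fin (n+1)) → ℕ) (hc : ∀ e, c e < 2 ^ b) :
    mp (fun w => SL (sg b n a) (maskSpec b n a) w n) (LL b c) = LL b (TT (kL n) a.castSucc c) := by
  unfold LL; rw [mp_eq, List.map_ofFn]; congr 1; funext j
  rw [sl_TT, ← SL_sound b a (sl c j) (fun e => hc _)]; rfl
lemma LL_SR (a : Fin 2) (c : (Fin 3 → Fin (n+1)) → ℕ) (hc : ∀ e, c e < 2 ^ b) :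
    mp (fun w => SR (sg b n a) (maskSpec b n a) w n n) (LL b c) = LL b (TT kR a.castSucc c) := by
  unfold LL; rw [mp_eq, List.map_ofFn]; congr 1; funext j
  rw [sl_TT, ← SR_sound b a (sl c j) (fun e => hc _)]; rfl

lemma pkl_ofFn (s : ℕ) : ∀ {m : ℕ} (f : Fin m → ℕ), pkl s (List.ofFn f) = ∑ i : Fin m, (2 ^ s) ^ (i:ℕ) * f i := by
  intro m
  induction m with
  | zero => intro f; simp [pkl]
  | succ m ih =>
    intro f
    have : ∀ a l, pkl s (a :: l) = a + pkl s l <<< s := fun _ _ => rfl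
    rw [List.ofFn_succ, this, ih, Fin.sum_univ_succ, Nat.shiftLeft_eq, Finset.sum_mul]
    simp only [Fin.val_zero, pow_zero, one_mul, Fin.val_succ, pow_succ]
    congr 1
    exact Finset.sum_congr rfl fun i _ => by ring

lemma LL_pkl (c : (Fin 3 → Fin (n+1)) → ℕ) : pkl (sg b n 2) (LL b c) = pk b c := by
  rw [LL, pkl_ofFn, pk_slc b (Fin.last 2) c]
  refine Finset.sum_congr rfl fun i _ => ?_
  rw [slc_sl]; rfl

lemma LL_unp (c : (Fin 3 → Fin (n+1)) → ℕ) (hc : ∀ e, c e < 2 ^ b) :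
    unp (sg b n 2) (maskSpec b n (2 : Fin 3)) (pk b c) (List.ofFn fun i : Fin (n+1) => (i:ℕ)) = LL b c := by
  rw [unp, mp_eq, List.map_ofFn, LL]
  congr 1; funext i
  have h := land_mask b (2 : Fin 3) c hc i
  simp only [Function.comp]
  rw [show ((2 : Fin 3) : ℕ) = 2 from rfl] at h
  rw [h, ← slc_sl, ← pow_mul, mul_comm, Nat.shiftRight_eq_div_pow, Nat.mul_div_cancel _ (by positivity)]
  rfl

lemma ms0 (b n : ℕ) : rep (2 ^ b - 1) (sg b n 1) (n+1) = maskSpec b n (0 : Fin 2) := by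
  simp only [rep_eq, maskSpec, Fin.prod_univ_one, Finset.sum_range]; rfl
lemma ms1 (b n : ℕ) : rep (2 ^ b - 1) (sg b n 0) (n+1) = maskSpec b n (1 : Fin 2) := by
  simp only [rep_eq, maskSpec, Fin.prod_univ_one, Finset.sum_range]; rfl

end Slices
end Kiss

namespace Kiss
section TreeSound

def WI (b n M d W : ℕ) (z x : Fin 3 → ℝ) (V : ℝ) : Prop :=
  ∃ c : (Fin 3 → Fin (n+1)) → ℕ, pk b c = W ∧ (∀ e, c e ≤ M * 2 ^ (n * d) * Hc e) ∧ ev c z x = V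

variable {b n M d W : ℕ} {z x : Fin 3 → ℝ} {V : ℝ}

lemma WI.lt (hM : M * 2 ^ (n * d) * 2 ^ (n * 3) < 2 ^ b) {c : (Fin 3 → Fin (n+1)) → ℕ}
    (h : ∀ e, c e ≤ M * 2 ^ (n * d) * Hc e) (e) : c e < 2 ^ b :=
  lt_of_le_of_lt ((h e).trans (Nat.mul_le_mul_left _ (Hc_le e))) hM

lemma stL {c : (Fin 3 → Fin (n+1)) → ℕ} (hc : ∀ e, c e ≤ M * 2 ^ (n * d) * Hc e) (hv : ev c z x = V)
    (a : Fin 3) : (∀ e, TT (kL n) a c e ≤ M * 2 ^ (n * (d+1)) * Hc e) ∧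
      ev (TT (kL n) a c) (Function.update z a ((z a - x a) / 2)) x = V := by
  refine ⟨fun e => ?_, ?_⟩
  · refine (TT_bound (kL n) a c _ hc kL_sum e).trans_eq ?_
    rw [mul_add, pow_add]; ring
  · rw [ev_TT (kL n) a c _ _ _ _ (fun i => kL_poly _ _ i), ← hv]
    congr 1
    · rw [Function.update_idem]; simp only [Function.update_self]
      rw [show 2 * ((z a - x a) / 2) + x a = z a by ring, Function.update_eq_self]
    · rw [Function.update_eq_self]

lemma stR {c : (Fin 3 → Fin (n+1)) → ℕ} (hc : ∀ e, c e ≤ M * 2 ^ (n * d) * Hc e) (hv : ev c z x = V)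
    (a : Fin 3) : (∀ e, TT kR a c e ≤ M * 2 ^ (n * (d+1)) * Hc e) ∧
      ev (TT kR a c) z (Function.update x a ((x a - z a) / 2)) = V := by
  refine ⟨fun e => ?_, ?_⟩
  · refine (TT_bound kR a c _ hc kR_sum e).trans_eq ?_
    rw [mul_add, pow_add]; ring
  · rw [ev_TT kR a c _ _ _ _ (fun i => kR_poly _ _ i), ← hv]
    congr 1
    · rw [Function.update_eq_self]
    · rw [Function.update_idem]; simp only [Function.update_self]
      rw [show 2 * ((x a - z a) / 2) + z a = x a by ring, Function.update_eq_self]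

lemma WI.left (h : WI b n M d W z x V) (hM : M * 2 ^ (n * d) * 2 ^ (n * 3) < 2 ^ b) (a : Fin 3)
    (S : ℕ) (hS : S = sg b n a) (m : ℕ) (hm : m = maskSpec b n a) :
    WI b n M (d+1) (SL S m W n) (Function.update z a ((z a - x a) / 2)) x V := by
  obtain ⟨c, rfl, hc, hv⟩ := h
  exact ⟨TT (kL n) a c, by rw [hm, hS, SL_sound b a c (WI.lt hM hc)], stL hc hv a⟩

lemma WI.right (h : WI b n M d W z x V) (hM : M * 2 ^ (n * d) * 2 ^ (n * 3) < 2 ^ b) (a : Fin 3)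
    (S : ℕ) (hS : S = sg b n a) (m : ℕ) (hm : m = maskSpec b n a) :
    WI b n M (d+1) (SR S m W n n) z (Function.update x a ((x a - z a) / 2)) V := by
  obtain ⟨c, rfl, hc, hv⟩ := h
  exact ⟨TT kR a c, by rw [hm, hS, SR_sound b a c (WI.lt hM hc)], stR hc hv a⟩

lemma WI.leaf (h : WI b n M d W z x V) (hb : 1 ≤ b) (hM : M * 2 ^ (n * d) * 2 ^ (n * 3) < 2 ^ (b-1))
    (hz : ∀ a, 0 ≤ z a) (hx : ∀ a, 0 ≤ x a) (k : ℕ) (hk : k ≤ M * 2 ^ (n * d))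
    (hh : (W + tp b n - k * hP b n) &&& tp b n = tp b n) : (k : ℝ) * ∏ a, (z a + x a) ^ n ≤ V := by
  obtain ⟨c, rfl, hc, rfl⟩ := h
  rw [← ev_Hc, ← ev_smul]
  exact ev_mono _ _ (leaf_sound b k _ hb c hc hM hk _ _ (tp_eq b n) (hP_eq b n) hh) z x hz hx

def WL (b n M d : ℕ) (l : List ℕ) (z x : Fin 3 → ℝ) (V : ℝ) : Prop :=
  ∃ c : (Fin 3 → Fin (n+1)) → ℕ, LL b c = l ∧ (∀ e, c e ≤ M * 2 ^ (n * d) * Hc e) ∧ ev c z x = V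

variable {l : List ℕ}

lemma WL.wi (h : WL b n M d l z x V) : WI b n M d (pkl (sg b n 2) l) z x V := by
  obtain ⟨c, rfl, hc, hv⟩ := h
  exact ⟨c, (LL_pkl c).symm, hc, hv⟩

lemma WI.wl (h : WI b n M d W z x V) (hM : M * 2 ^ (n * d) * 2 ^ (n * 3) < 2 ^ b) :
    WL b n M d (unp (sg b n 2) (maskSpec b n (2 : Fin 3)) W (List.ofFn fun i : Fin (n+1) => (i:ℕ))) z x V := by
  obtain ⟨c, rfl, hc, hv⟩ := h
  exact ⟨c, (LL_unp c (WI.lt hM hc)).symm, hc, hv⟩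

lemma WL.left (h : WL b n M d l z x V) (hM : M * 2 ^ (n * d) * 2 ^ (n * 3) < 2 ^ b) (a : Fin 3)
    (l' : List ℕ) (hl : ∀ c : (Fin 3 → Fin (n+1)) → ℕ, (∀ e, c e < 2 ^ b) → LL b c = l →
      LL b (TT (kL n) a c) = l') :
    WL b n M (d+1) l' (Function.update z a ((z a - x a) / 2)) x V := by
  obtain ⟨c, hl', hc, hv⟩ := h
  exact ⟨TT (kL n) a c, hl c (WI.lt hM hc) hl', stL hc hv a⟩

lemma WL.right (h : WL b n M d l z x V) (hM : M * 2 ^ (n * d) * 2 ^ (n * 3) < 2 ^ b) (a : Fin 3)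
    (l' : List ℕ) (hl : ∀ c : (Fin 3 → Fin (n+1)) → ℕ, (∀ e, c e < 2 ^ b) → LL b c = l →
      LL b (TT kR a c) = l') :
    WL b n M (d+1) l' z (Function.update x a ((x a - z a) / 2)) V := by
  obtain ⟨c, hl', hc, hv⟩ := h
  exact ⟨TT kR a c, hl c (WI.lt hM hc) hl', stR hc hv a⟩

def Bx (X : ℝ) (l j : ℕ) (z x : ℝ) : Prop :=
  X = 3 * l / 2 ^ j + x ∧ z + x = 3 / 2 ^ j ∧ 0 ≤ x ∧ 0 ≤ z ∧ l + 1 ≤ 2 ^ j ∧ (0 < z ∨ l + 1 = 2 ^ j)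

lemma Bx.left {X : ℝ} {l j : ℕ} {z x : ℝ} (h : Bx X l j z x) (hl : x < z) :
    Bx X (2 * l) (j+1) ((z - x) / 2) x := by
  obtain ⟨h1, h2, h3, h4, h5, _⟩ := h
  have e : (3:ℝ) / 2 ^ (j+1) = 3 / 2 ^ j / 2 := by rw [pow_succ]; field_simp
  refine ⟨?_, ?_, h3, by linarith, by rw [pow_succ]; omega, Or.inl (by linarith)⟩
  · rw [h1, pow_succ]; push_cast; field_simp
  · rw [e, ← h2]; ring

lemma Bx.right {X : ℝ} {l j : ℕ} {z x : ℝ} (h : Bx X l j z x) (hl : z ≤ x) :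
    Bx X (2 * l + 1) (j+1) z ((x - z) / 2) := by
  obtain ⟨h1, h2, h3, h4, h5, h6⟩ := h
  have e : (3:ℝ) / 2 ^ (j+1) = 3 / 2 ^ j / 2 := by rw [pow_succ]; field_simp
  refine ⟨?_, ?_, by linarith, h4, by rw [pow_succ]; omega, ?_⟩
  · have : (3:ℝ) * ((2 * l + 1 : ℕ) : ℝ) / 2 ^ (j+1) = 3 * l / 2 ^ j + 3 / 2 ^ j / 2 := by
      rw [pow_succ]; push_cast; field_simp
    rw [this, h1, ← h2]; ring
  · rw [e, ← h2]; ring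
  · rcases h6 with h | h
    · exact Or.inl h
    · right; rw [pow_succ]; omega

lemma Bx.contra {X Y : ℝ} {l j l' j' : ℕ} {z x z' x' : ℝ} (h : Bx X l j z x) (h' : Bx Y l' j' z' x')
    (hk : (l + 1) * 2 ^ j' ≤ l' * 2 ^ j) (hXY : Y ≤ X) : False := by
  obtain ⟨h1, h2, h3, h4, h5, h6⟩ := h
  obtain ⟨g1, g2, g3, g4, g5, g6⟩ := h'
  rcases h6 with h | h
  · have a1 : X < 3 * (l + 1) / 2 ^ j := by
      have : (3:ℝ) * (l + 1) / 2 ^ j = 3 * l / 2 ^ j + 3 / 2 ^ j := by ring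
      rw [this, ← h2, h1]; linarith
    have a2 : (3:ℝ) * (l + 1) / 2 ^ j ≤ 3 * l' / 2 ^ j' := by
      rw [div_le_div_iff₀ (by positivity) (by positivity)]
      have : ((l:ℝ) + 1) * 2 ^ j' ≤ l' * 2 ^ j := by exact_mod_cast hk
      linarith
    linarith
  · rw [h, mul_comm] at hk
    have := Nat.le_of_mul_le_mul_right hk (by positivity)
    omega

structure Inv (s : St) (X : Fin 3 → ℝ) (V Vd : ℝ) (z x : Fin 3 → ℝ) : Prop where
  b0 : Bx (X 0) s.l0 s.j0 (z 0) (x 0)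
  b1 : Bx (X 1) s.l1 s.j1 (z 1) (x 1)
  b2 : Bx (X 2) s.l2 s.j2 (z 2) (x 2)
  w : WL 665 16 (6 * KK) (dep s) s.W z x V
  v : WI 63 2 (2 ^ 11) (dep s) s.V z x Vd

lemma Inv.nn {s : St} {X : Fin 3 → ℝ} {V Vd : ℝ} {z x : Fin 3 → ℝ} (h : Inv s X V Vd z x) :
    (∀ a, 0 ≤ z a) ∧ (∀ a, 0 ≤ x a) :=
  ⟨fun a => by fin_cases a <;> [exact h.b0.2.2.2.1; exact h.b1.2.2.2.1; exact h.b2.2.2.2.1],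
   fun a => by fin_cases a <;> [exact h.b0.2.2.1; exact h.b1.2.2.1; exact h.b2.2.2.1]⟩

lemma Inv.prod {s : St} {X : Fin 3 → ℝ} {V Vd : ℝ} {z x : Fin 3 → ℝ} (h : Inv s X V Vd z x) (n : ℕ) :
    ∏ a, (z a + x a) ^ n = 3 ^ (n * 3) / 2 ^ (n * dep s) := by
  rw [Fin.prod_univ_three, h.b0.2.1, h.b1.2.1, h.b2.2.1]
  rw [← mul_pow, ← mul_pow, pow_mul', pow_mul', ← div_pow]
  congr 1
  simp only [dep, pow_add]
  field_simp

lemma boundA (d : ℕ) (hd : d ≤ 22) : 6 * KK * 2 ^ (16 * d) * 2 ^ (16 * 3) < 2 ^ (665 - 1) := by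
  calc _ ≤ 6 * KK * 2 ^ (16 * 22) * 2 ^ (16 * 3) := by
        gcongr <;> omega
    _ < _ := by decide +kernel
lemma boundB (d : ℕ) (hd : d ≤ 22) : 2 ^ 11 * 2 ^ (2 * d) * 2 ^ (2 * 3) < 2 ^ (63 - 1) := by
  calc _ ≤ 2 ^ 11 * 2 ^ (2 * 22) * 2 ^ (2 * 3) := by
        gcongr <;> omega
    _ < _ := by decide +kernel
lemma boundA' (d : ℕ) (hd : d ≤ 21) : 6 * KK * 2 ^ (16 * d) * 2 ^ (16 * 3) < 2 ^ 665 :=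
  (boundA d (by omega)).trans (Nat.pow_lt_pow_right (by norm_num) (by norm_num))
lemma boundB' (d : ℕ) (hd : d ≤ 21) : 2 ^ 11 * 2 ^ (2 * d) * 2 ^ (2 * 3) < 2 ^ 63 :=
  (boundB d (by omega)).trans (Nat.pow_lt_pow_right (by norm_num) (by norm_num))

variable {s : St} {X : Fin 3 → ℝ} {Vd : ℝ}

lemma A0_eq : A0 = maskSpec 665 16 (0 : Fin 2) := ms0 665 16
lemma B0_eq : B0 = maskSpec 63 2 (0 : Fin 3) := mk0_eq 63 2
lemma A1_eq : A1 = maskSpec 665 16 (1 : Fin 2) := ms1 665 16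
lemma B1_eq : B1 = maskSpec 63 2 (1 : Fin 3) := mk1_eq 63 2
lemma A2_eq : A2 = maskSpec 665 16 (2 : Fin 3) := mk2_eq 665 16
lemma B2_eq : B2 = maskSpec 63 2 (2 : Fin 3) := mk2_eq 63 2

set_option exponentiation.threshold 700

lemma Inv.step0 (h : Inv s X V Vd z x) (hd : dep s ≤ 21) :
    (∃ z x, Inv (L0 s) X V Vd z x) ∨ (∃ z x, Inv (R0 s) X V Vd z x) := by
  rcases lt_or_ge (x 0) (z 0) with hl | hl
  · left
    refine ⟨Function.update z 0 ((z 0 - x 0) / 2), x, ?_, ?_, ?_, ?_, ?_⟩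
    · simpa [L0] using h.b0.left hl
    · simpa [L0] using h.b1
    · simpa [L0] using h.b2
    · change WL 665 16 (6 * KK) (dep (L0 s)) (mp (fun w => SL (sg 665 16 0) A0 w 16) s.W) _ _ _
      rw [show dep (L0 s) = dep s + 1 by simp [dep, L0]; omega]
      exact h.w.left (boundA' _ hd) 0 _ fun c hc e => by
        rw [← e, A0_eq]; exact (LL_SL (n := 16) 0 c hc).symm
    · change WI 63 2 (2 ^ 11) (dep (L0 s)) (SL (sg 63 2 0) B0 s.V 2) _ _ _
      rw [show dep (L0 s) = dep s + 1 by simp [dep, L0]; omega]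
      exact h.v.left (boundB' _ hd) 0 (sg 63 2 0) rfl B0 B0_eq
  · right
    refine ⟨z, Function.update x 0 ((x 0 - z 0) / 2), ?_, ?_, ?_, ?_, ?_⟩
    · simpa [R0] using h.b0.right hl
    · simpa [R0] using h.b1
    · simpa [R0] using h.b2
    · change WL 665 16 (6 * KK) (dep (R0 s)) (mp (fun w => SR (sg 665 16 0) A0 w 16 16) s.W) _ _ _
      rw [show dep (R0 s) = dep s + 1 by simp [dep, R0]; omega]
      exact h.w.right (boundA' _ hd) 0 _ fun c hc e => by
        rw [← e, A0_eq]; exact (LL_SR (n := 16) 0 c hc).symm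
    · change WI 63 2 (2 ^ 11) (dep (R0 s)) (SR (sg 63 2 0) B0 s.V 2 2) _ _ _
      rw [show dep (R0 s) = dep s + 1 by simp [dep, R0]; omega]
      exact h.v.right (boundB' _ hd) 0 (sg 63 2 0) rfl B0 B0_eq

lemma Inv.step1 (h : Inv s X V Vd z x) (hd : dep s ≤ 21) :
    (∃ z x, Inv (L1 s) X V Vd z x) ∨ (∃ z x, Inv (R1 s) X V Vd z x) := by
  rcases lt_or_ge (x 1) (z 1) with hl | hl
  · left
    refine ⟨Function.update z 1 ((z 1 - x 1) / 2), x, ?_, ?_, ?_, ?_, ?_⟩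
    · simpa [L1] using h.b0
    · simpa [L1] using h.b1.left hl
    · simpa [L1] using h.b2
    · change WL 665 16 (6 * KK) (dep (L1 s)) (mp (fun w => SL (sg 665 16 1) A1 w 16) s.W) _ _ _
      rw [show dep (L1 s) = dep s + 1 by simp [dep, L1]; omega]
      exact h.w.left (boundA' _ hd) 1 _ fun c hc e => by
        rw [← e, A1_eq]; exact (LL_SL (n := 16) 1 c hc).symm
    · change WI 63 2 (2 ^ 11) (dep (L1 s)) (SL (sg 63 2 1) B1 s.V 2) _ _ _
      rw [show dep (L1 s) = dep s + 1 by simp [dep, L1]; omega]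
      exact h.v.left (boundB' _ hd) 1 (sg 63 2 1) rfl B1 B1_eq
  · right
    refine ⟨z, Function.update x 1 ((x 1 - z 1) / 2), ?_, ?_, ?_, ?_, ?_⟩
    · simpa [R1] using h.b0
    · simpa [R1] using h.b1.right hl
    · simpa [R1] using h.b2
    · change WL 665 16 (6 * KK) (dep (R1 s)) (mp (fun w => SR (sg 665 16 1) A1 w 16 16) s.W) _ _ _
      rw [show dep (R1 s) = dep s + 1 by simp [dep, R1]; omega]
      exact h.w.right (boundA' _ hd) 1 _ fun c hc e => by
        rw [← e, A1_eq]; exact (LL_SR (n := 16) 1 c hc).symm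
    · change WI 63 2 (2 ^ 11) (dep (R1 s)) (SR (sg 63 2 1) B1 s.V 2 2) _ _ _
      rw [show dep (R1 s) = dep s + 1 by simp [dep, R1]; omega]
      exact h.v.right (boundB' _ hd) 1 (sg 63 2 1) rfl B1 B1_eq

lemma Inv.step2 (h : Inv s X V Vd z x) (hd : dep s ≤ 21) :
    (∃ z x, Inv (L2 s) X V Vd z x) ∨ (∃ z x, Inv (R2 s) X V Vd z x) := by
  rcases lt_or_ge (x 2) (z 2) with hl | hl
  · left
    refine ⟨Function.update z 2 ((z 2 - x 2) / 2), x, ?_, ?_, ?_, ?_, ?_⟩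
    · simpa [L2] using h.b0
    · simpa [L2] using h.b1
    · simpa [L2] using h.b2.left hl
    · change WL 665 16 (6 * KK) (dep (L2 s)) (TL s.W) _ _ _
      rw [show dep (L2 s) = dep s + 1 by simp [dep, L2]; omega]
      exact h.w.left (boundA' _ hd) 2 _ fun c hc e => by rw [← e, LL_TL]
    · change WI 63 2 (2 ^ 11) (dep (L2 s)) (SL (sg 63 2 2) B2 s.V 2) _ _ _
      rw [show dep (L2 s) = dep s + 1 by simp [dep, L2]; omega]
      exact h.v.left (boundB' _ hd) 2 (sg 63 2 2) rfl B2 B2_eq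
  · right
    refine ⟨z, Function.update x 2 ((x 2 - z 2) / 2), ?_, ?_, ?_, ?_, ?_⟩
    · simpa [R2] using h.b0
    · simpa [R2] using h.b1
    · simpa [R2] using h.b2.right hl
    · change WL 665 16 (6 * KK) (dep (R2 s)) (TR s.W) _ _ _
      rw [show dep (R2 s) = dep s + 1 by simp [dep, R2]; omega]
      exact h.w.right (boundA' _ hd) 2 _ fun c hc e => by rw [← e, LL_TR]
    · change WI 63 2 (2 ^ 11) (dep (R2 s)) (SR (sg 63 2 2) B2 s.V 2 2) _ _ _
      rw [show dep (R2 s) = dep s + 1 by simp [dep, R2]; omega]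
      exact h.v.right (boundB' _ hd) 2 (sg 63 2 2) rfl B2 B2_eq

theorem tree_sound (X : Fin 3 → ℝ) (V Vd : ℝ) (h10 : X 1 ≤ X 0) (h21 : X 2 ≤ X 1)
    (hVd : Vd ≤ 2 ^ 10 * 3 ^ 6) (t : Tr) : ∀ s z x, chk t s = true → Inv s X V Vd z x →
    ((3 * KK + KB : ℕ) : ℝ) * 3 ^ 48 ≤ V := by
  induction t with
  | g =>
    intro s z x hc h
    have hc' : (Nat.ble (dep s) 22 && Nat.beq ((pkl (sg 665 16 2) s.W + AT - (3 * KK + KB) * 2 ^ (16 * dep s) * AH) &&& AT) AT) = true := hc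
    rw [Bool.and_eq_true] at hc'
    have hd := Nat.le_of_ble_eq_true hc'.1
    have hh := Nat.eq_of_beq_eq_true hc'.2
    have := h.w.wi.leaf (by norm_num) (boundA _ hd) h.nn.1 h.nn.2 ((3 * KK + KB) * 2 ^ (16 * dep s))
      (Nat.mul_le_mul_right _ (by decide +kernel)) hh
    rw [h.prod] at this
    refine le_trans (le_of_eq ?_) this
    rw [Nat.cast_mul, mul_assoc]
    congr 1
    push_cast
    field_simp
  | d =>
    intro s z x hc h
    have hc' : (Nat.ble (dep s) 22 && Nat.beq ((s.V + BT - (2 ^ 10 * 2 ^ (2 * dep s) + 1) * BH) &&& BT) BT) = true := hc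
    rw [Bool.and_eq_true] at hc'
    have hd := Nat.le_of_ble_eq_true hc'.1
    have hh := Nat.eq_of_beq_eq_true hc'.2
    have hp : 0 < 2 ^ (2 * dep s) := by positivity
    have := h.v.leaf (by norm_num) (boundB _ hd) h.nn.1 h.nn.2 (2 ^ 10 * 2 ^ (2 * dep s) + 1)
      (by omega) hh
    rw [h.prod] at this
    exfalso
    have hq : (0:ℝ) < 3 ^ (2 * 3) / 2 ^ (2 * dep s) := by positivity
    have e : ((2 ^ 10 * 2 ^ (2 * dep s) + 1 : ℕ) : ℝ) * (3 ^ (2 * 3) / 2 ^ (2 * dep s)) =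
      2 ^ 10 * 3 ^ 6 + 3 ^ (2 * 3) / 2 ^ (2 * dep s) := by push_cast; field_simp; ring
    linarith
  | k =>
    intro s z x hc h
    have hc' : (Nat.ble ((s.l0 + 1) * 2 ^ s.j1) (s.l1 * 2 ^ s.j0) ||
      Nat.ble ((s.l1 + 1) * 2 ^ s.j2) (s.l2 * 2 ^ s.j1)) = true := hc
    rw [Bool.or_eq_true] at hc'
    exfalso
    rcases hc' with hc | hc
    · exact h.b0.contra h.b1 (Nat.le_of_ble_eq_true hc) h10
    · exact h.b1.contra h.b2 (Nat.le_of_ble_eq_true hc) h21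
  | a l r il ir =>
    intro s z x hc h
    have hc' : (Nat.ble (dep s) 21 && (chk l (L0 s) && chk r (R0 s))) = true := hc
    rw [Bool.and_eq_true, Bool.and_eq_true] at hc'
    rcases h.step0 (Nat.le_of_ble_eq_true hc'.1) with ⟨z, x, h⟩ | ⟨z, x, h⟩
    · exact il _ z x hc'.2.1 h
    · exact ir _ z x hc'.2.2 h
  | b l r il ir =>
    intro s z x hc h
    have hc' : (Nat.ble (dep s) 21 && (chk l (L1 s) && chk r (R1 s))) = true := hc
    rw [Bool.and_eq_true, Bool.and_eq_true] at hc'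
    rcases h.step1 (Nat.le_of_ble_eq_true hc'.1) with ⟨z, x, h⟩ | ⟨z, x, h⟩
    · exact il _ z x hc'.2.1 h
    · exact ir _ z x hc'.2.2 h
  | c l r il ir =>
    intro s z x hc h
    have hc' : (Nat.ble (dep s) 21 && (chk l (L2 s) && chk r (R2 s))) = true := hc
    rw [Bool.and_eq_true, Bool.and_eq_true] at hc'
    rcases h.step2 (Nat.le_of_ble_eq_true hc'.1) with ⟨z, x, h⟩ | ⟨z, x, h⟩
    · exact il _ z x hc'.2.1 h
    · exact ir _ z x hc'.2.2 h

end TreeSound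
end Kiss

namespace Kiss
theorem chk_a {s : St} {l r : Tr} (h : Nat.ble (dep s) 21 = true) (h1 : chk l (L0 s) = true)
    (h2 : chk r (R0 s) = true) : chk (.a l r) s = true := by
  change (Nat.ble (dep s) 21 && (chk l (L0 s) && chk r (R0 s))) = true
  rw [h, h1, h2]; rfl
theorem chk_b {s : St} {l r : Tr} (h : Nat.ble (dep s) 21 = true) (h1 : chk l (L1 s) = true)
    (h2 : chk r (R1 s) = true) : chk (.b l r) s = true := by
  change (Nat.ble (dep s) 21 && (chk l (L1 s) && chk r (R1 s))) = true
  rw [h, h1, h2]; rfl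
theorem chk_c {s : St} {l r : Tr} (h : Nat.ble (dep s) 21 = true) (h1 : chk l (L2 s) = true)
    (h2 : chk r (R2 s) = true) : chk (.c l r) s = true := by
  change (Nat.ble (dep s) 21 && (chk l (L2 s) && chk r (R2 s))) = true
  rw [h, h1, h2]; rfl
end Kiss

namespace Kiss
section Three

lemma MR_symm (z1 x1 z2 x2 : ℝ) (l : List (List ℕ)) : MR z1 x1 z2 x2 l = MR z2 x2 z1 x1 l := by
  induction l with
  | nil => rfl
  | cons a l ih => simp only [MR]; rw [ih]; ring

lemma fR_symm (z1 x1 z2 x2 z3 x3 : ℝ) (k : ℕ) (D : List (ℕ × List (List ℕ))) :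
    fR z1 x1 z2 x2 z3 x3 k D = fR z2 x2 z1 x1 z3 x3 k D := by
  have hs : sR z1 x1 z2 x2 z3 x3 = sR z2 x2 z1 x1 z3 x3 := by unfold sR; ring
  have hw : wR z1 x1 z2 x2 z3 x3 = wR z2 x2 z1 x1 z3 x3 := by unfold wR; ring
  induction D generalizing k with
  | nil => rfl
  | cons a l ih => simp only [fR]; rw [ih, MR_symm, hs, hw]

lemma f3_symm (D : List (ℕ × List (List ℕ))) (u v t : ℝ) : f3 D u v t = f3 D v u t := fR_symm _ _ _ _ _ _ _ _

lemma DD_len : DD.length = 17 := by decide +kernel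
lemma DD_ok : DOK DD = true := by decide +kernel
lemma DD_1 : (FD DD 0 0 0).1 ≤ 3 * KK := by decide +kernel
lemma DD_2 : (FD DD 0 0 0).2 ≤ 3 * KK := by decide +kernel
lemma det_1 : (detD 0 0 0).1 ≤ 2 ^ 10 := by decide +kernel
lemma det_2 : (detD 0 0 0).2 ≤ 2 ^ 10 := by decide +kernel

attribute [local irreducible] FD fD DD KK wf hP detD KB sg

lemma wf_eq (p : ℕ × ℕ) : wf p = 3 * KK * hP 665 16 + p.2 - p.1 := by rw [wf, AH]

lemma root_w' (D : List (ℕ × List (List ℕ))) (D_ok : DOK D = true) (D_len : D.length = 17)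
    (D_1 : (FD D 0 0 0).1 ≤ 3 * KK) (D_2 : (FD D 0 0 0).2 ≤ 3 * KK) (z x : Fin 3 → ℝ) (hzx : ∀ a, z a + x a = 3) : WI 665 16 (6 * KK) 0
    (wf (FD D (sg 665 16 0) (sg 665 16 1) (sg 665 16 2))) z x
    (3 * KK * 3 ^ 48 - FRs D z x) := by
  have h := Rel.F z x D D_ok D_len
  have h' := Rel.root z x h (3 * KK)
  have hh := h' D_1 D_2 665
  clear h' h
  obtain ⟨c, hc⟩ := hh
  have h1 := hc.1
  have h2 := hc.2.1
  have h3 := hc.2.2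
  refine ⟨c, ?_, fun e => ?_, ?_⟩
  · rw [h2, ← hP_eq]
    simp only [wf_eq, Fin.val_zero, Fin.val_one, Fin.val_two]
  · have := h1 e
    rw [mul_zero, pow_zero, mul_one]
    rw [← mul_assoc] at this
    exact this
  · rw [h3]; simp only [hzx, Fin.prod_univ_three]
    rw [← mul_pow, ← mul_pow]
    rw [show ((3:ℝ) * 3 * 3) ^ 16 = 3 ^ 48 by norm_num]
    push_cast; ring

lemma root_w2 (D : List (ℕ × List (List ℕ))) (W : ℕ)
    (hW : wf (FD D (sg 665 16 0) (sg 665 16 1) (sg 665 16 2)) = W) : (root D).W =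
    unp (sg 665 16 2) (maskSpec 665 16 (2 : Fin 3)) W (List.ofFn fun i : Fin (16+1) => (i:ℕ)) := by
  have e : (List.ofFn fun i : Fin (16+1) => (i:ℕ)) =
    [0, 1, 2, 3, 4, 5, 6, 7, 8, 9, 10, 11, 12, 13, 14, 15, 16] := by decide
  rw [e, ← A2_eq, ← hW, root]

lemma root_w (z x : Fin 3 → ℝ) (hzx : ∀ a, z a + x a = 3) : WL 665 16 (6 * KK) 0 (root DD).W z x
    (3 * KK * 3 ^ 48 - FRs DD z x) := by
  rw [root_w2 DD _ rfl]
  exact (root_w' DD DD_ok DD_len DD_1 DD_2 z x hzx).wl (boundA' 0 (by norm_num))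

lemma root_v (z x : Fin 3 → ℝ) (hzx : ∀ a, z a + x a = 3) : WI 63 2 (2 ^ 11) 0 (root DD).V z x
    (2 ^ 10 * 3 ^ 6 - detR z x) := by
  have h := Rel.det z x
  have h' := Rel.root z x h (2 ^ 10)
  have hh := h' det_1 det_2 63
  clear h' h
  obtain ⟨c, hc⟩ := hh
  have h1 := hc.1
  have h2 := hc.2.1
  have h3 := hc.2.2
  refine ⟨c, ?_, fun e => ?_, ?_⟩
  · rw [h2, ← hP_eq, root, BH]
    simp only [Fin.val_zero, Fin.val_one, Fin.val_two]
  · have := h1 e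
    rw [mul_zero, pow_zero, mul_one, pow_succ' 2 10]
    exact this
  · rw [h3]; simp only [hzx, Fin.prod_univ_three]; norm_num

lemma sorted3 (hT : ∃ t, chk t (root DD) = true) (u v t : ℝ) (hu : u ≤ 1 / 2) (ht : -1 ≤ t) (huv : v ≤ u)
    (hvt : t ≤ v) (hd : 0 ≤ 1 + 2 * u * v * t - u ^ 2 - v ^ 2 - t ^ 2) :
    f3 DD u v t + (f3 DD u t v + f3 DD v t u) ≤ - ((KB : ℝ) * 3 ^ 48) := by
  obtain ⟨tr, hT⟩ := hT
  set z : Fin 3 → ℝ := ![1 - 2 * u, 1 - 2 * v, 1 - 2 * t] with hz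
  set x : Fin 3 → ℝ := ![2 + 2 * u, 2 + 2 * v, 2 + 2 * t] with hx
  have hzx : ∀ a, z a + x a = 3 := by intro a; fin_cases a <;> simp [z, x] <;> ring
  have hw := root_w z x hzx
  have hv := root_v z x hzx
  have z0 : z 0 = 1 - 2 * u := rfl
  have z1 : z 1 = 1 - 2 * v := rfl
  have z2 : z 2 = 1 - 2 * t := rfl
  have x0 : x 0 = 2 + 2 * u := rfl
  have x1 : x 1 = 2 + 2 * v := rfl
  have x2 : x 2 = 2 + 2 * t := rfl
  have hB : ∀ a, 0 ≤ x a → 0 ≤ z a → Bx (x a) 0 0 (z a) (x a) := fun a h1 h2 =>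
    ⟨by simp, by rw [hzx]; simp, h1, h2, by norm_num, Or.inr (by norm_num)⟩
  have inv : Inv (root DD) x _ _ z x :=
    ⟨hB 0 (by rw [x0]; linarith) (by rw [z0]; linarith),
     hB 1 (by rw [x1]; linarith) (by rw [z1]; linarith),
     hB 2 (by rw [x2]; linarith) (by rw [z2]; linarith), hw, hv⟩
  have hdet : 0 ≤ detR z x := by
    have : detR z x = 4 * 3 ^ 6 * (1 + 2 * u * v * t - u ^ 2 - v ^ 2 - t ^ 2) := by
      unfold detR
      simp only [z0, z1, z2, x0, x1, x2]; ring
    rw [this]; positivity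
  have := tree_sound x _ _ (by rw [x0, x1]; linarith) (by rw [x2, x1]; linarith) (by linarith) tr
    (root DD) z x hT inv
  have hF : FRs DD z x = f3 DD u v t + (f3 DD u t v + f3 DD v t u) := by
    unfold FRs f3
    rw [z0, z1, z2, x0, x1, x2]
  rw [hF] at this
  have e : ((3 * KK + KB : ℕ) : ℝ) = 3 * (KK : ℝ) + KB := by push_cast; ring
  rw [e] at this
  clear_value z x
  linarith

lemma all3 (hT : ∃ t, chk t (root DD) = true) (u v t : ℝ) (hu : u ≤ 1 / 2) (hv : v ≤ 1 / 2) (ht : t ≤ 1 / 2)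
    (hu' : -1 ≤ u) (hv' : -1 ≤ v) (ht' : -1 ≤ t)
    (hd : 0 ≤ 1 + 2 * u * v * t - u ^ 2 - v ^ 2 - t ^ 2) :
    f3 DD u v t + f3 DD u t v + f3 DD v t u ≤ - ((KB : ℝ) * 3 ^ 48) := by
  have s1 := f3_symm DD u v t
  have s2 := f3_symm DD u t v
  have s3 := f3_symm DD v t u
  rcases le_total u v with h1 | h1 <;> rcases le_total v t with h2 | h2 <;> rcases le_total u t with h3 | h3
  · have := sorted3 hT t v u ht hu' h2 h1 (by linarith); linarith
  · have := sorted3 hT t v u ht hu' h2 h1 (by linarith); linarith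
  · have := sorted3 hT v t u hv hu' h2 h3 (by linarith); linarith
  · have := sorted3 hT v u t hv ht' h1 h3 (by linarith); linarith
  · have := sorted3 hT t u v ht hv' h3 h1 (by linarith); linarith
  · have := sorted3 hT u t v hu hv' h3 h2 (by linarith); linarith
  · have := sorted3 hT u v t hu ht' h1 h2 (by linarith); linarith
  · have := sorted3 hT u v t hu ht' h1 h2 (by linarith); linarith

end Three
end Kiss

namespace Kiss
def AL : List ℕ := [4820128472400211068712690966073211987748645288858468810486215344128,
  149456612224430616290946545038162974326110855889865102513565335552,
  768359083017294342334110827101334625219925212499079732704464338944,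
  1157172180552067287328912925398689133483408413268745941764014080,
  741786873507324361484263924668235474781222728967849965539819520,
  1841548935981804850284685207487873798174283480052222130126848,
  86174957013726451123707980623450534286062645974795187912704,
  217374242083942750537424412437328618773731485633260552192,
  1550843597796350346319205637461437579718254613311258624,
  41428366245995799095388245438576041298483299716431872,
  2952613891925982018385976810654932716642444798590976,
  86543646198925788827957611952210361765307975991296,
  893408621202952826845351493987260547215453585408,
  11329141982421428118179123766586104773487886336,
  255416247674839449636428002406294963437436928,
  6559591285663031922202522616092749083967488]
def GN : ℕ := 1079734414371010838898346471688065979602751684626906496812947333851984286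
def K1 : ℕ := 2 ^ 292
end Kiss

namespace Kiss
section OneD

inductive T1 where
  | g | s (l r : T1)

def H1 : ℕ := hpw 520 1 32
def TP1 : ℕ := rep (2 ^ 519) 520 33
def ok1 (W d : ℕ) : Bool :=
  Nat.ble d 6 && Nat.beq ((W + TP1 - (K1 - GN) * 2 ^ (32 * d) * H1) &&& TP1) TP1
noncomputable def chk1 (t : T1) : ℕ → ℕ → Bool :=
  T1.rec (motive := fun _ => ℕ → ℕ → Bool) ok1
    (fun _ _ l r W d => Nat.ble d 5 && (l (SL 520 (2 ^ 520 - 1) W 32) (d + 1)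
      && r (SR 520 (2 ^ 520 - 1) W 32 32) (d + 1))) t

def hpC (l : List ℕ) : ℕ × ℕ := match l with
  | [] => (0, 0)
  | a :: l => dA (if l.length % 2 = 0 then decD a else dN (decD a)) (dS 4 (hpC l))
def McD (s : ℕ) (l : List (List ℕ)) : ℕ × ℕ := match l with
  | [] => (0, 0)
  | l :: ls => dA (dM (hpD s l) (hpC l)) (dX s (dS 4 (McD s ls)))
def McC (l : List (List ℕ)) : ℕ × ℕ := match l with
  | [] => (0, 0)
  | l :: ls => dA (dM (hpC l) (hpC l)) (dS 16 (McC ls))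
def g1D (s : ℕ) (D : List (ℕ × List (List ℕ))) (p : ℕ × ℕ) (r k : ℕ) : ℕ × ℕ := match D with
  | [] => (0, 0)
  | d :: rest => dA (dX d.1 (dS (3 ^ rest.length * r) (dM (MD s s d.2) p)))
      (g1D s rest (dS 9 (dQ s p)) (r * (k + 11)) (k + 1))
def aD (s : ℕ) (L : List ℕ) (k : ℕ) (P Q : ℕ × ℕ) : ℕ × ℕ := match L with
  | [] => (0, 0)
  | a :: rest => dA (dS a (dHn s P (16 + rest.length)))
      (aD s rest (k + 1) (dA (dS (2 * k + 12) (dP s P)) (dN (dS (4 * (k * (k + 11))) (dH s (dH s Q))))) P)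
def aC (L : List ℕ) (k r : ℕ) : ℕ := match L with
  | [] => 0
  | a :: rest => a * 3 ^ (16 + rest.length) * (r * 6 ^ k) + aC rest (k + 1) (r * (k + 12))
def totD (s : ℕ) (D : List (ℕ × List (List ℕ))) (d : ℕ × List (List ℕ)) (L : List ℕ) : ℕ × ℕ :=
  dA (dS (3 ^ 16) (dA (g1D s D (1, 0) 1 0) (dS 2 (dX d.1 (dHn s (McD s d.2) 16)))))
    (aD s L 1 (dS 12 (dP s (1, 0))) (1, 0))
def D0 : ℕ × List (List ℕ) := DD.headD (0, [])
def rt1 : ℕ := K1 * H1 + (totD 520 DD D0 AL).2 - (totD 520 DD D0 AL).1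
def tr1 : T1 := .s (.s (.s (.s .g .g) .g) .g) (.s .g (.s .g (.s .g (.s .g (.s .g .g)))))

lemma chk1_ok : chk1 tr1 rt1 0 = true := by decide +kernel
lemma tot_1 : (totD 0 DD D0 AL).1 ≤ K1 := by decide +kernel
lemma tot_2 : (totD 0 DD D0 AL).2 ≤ K1 := by decide +kernel
lemma AL_len : AL.length = 16 := by decide +kernel
lemma final_num : 3 * (3 ^ 16 * (2 ^ D0.1 * 3 ^ 16 * (McC D0.2).1) + aC AL 1 12) + 3 * 3183 * (GN * 3 ^ 32)
    < 3 ^ 64 * KB * 3183 * 3182 + 3 * (3 ^ 16 * (2 ^ D0.1 * 3 ^ 16 * (McC D0.2).2)) := by decide +kernel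
end OneD
end Kiss

namespace Kiss
section OneDSound

set_option exponentiation.threshold 700

def W1 (d W : ℕ) (z x : Fin 1 → ℝ) (V : ℝ) : Prop :=
  ∃ c : (Fin 1 → Fin (32+1)) → ℕ, pk 520 c = W ∧ (∀ e, c e ≤ 2 * K1 * 2 ^ (32 * d) * Hc e) ∧ ev c z x = V

lemma H1_eq : H1 = pk 520 (Hc : (Fin 1 → Fin (32+1)) → ℕ) := by
  rw [pk_ev, ev_Hc, H1, hpw_eq]
  simp [sg]

lemma TP1_eq : TP1 = pk 520 (fun _ : Fin 1 → Fin (32+1) => 2 ^ (520-1)) := by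
  rw [TP1, rep_eq, pk, ← Finset.mul_sum, ← Fintype.piFinset_univ,
    ← Finset.prod_univ_sum (t := fun _ : Fin 1 => (Finset.univ : Finset (Fin (32+1))))
      (f := fun a i => (2 ^ sg 520 32 (a:ℕ)) ^ (i:ℕ)), Finset.sum_range, Fin.prod_univ_one]
  simp only [sg, Fin.val_zero, pow_zero, mul_one]

lemma mask1 : 2 ^ 520 - 1 = maskSpec 520 32 (0 : Fin 1) := by
  simp [maskSpec]

lemma bound1 (d : ℕ) (hd : d ≤ 6) : 2 * K1 * 2 ^ (32 * d) * 2 ^ (32 * 1) < 2 ^ (520 - 1) := by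
  calc _ ≤ 2 * K1 * 2 ^ (32 * 6) * 2 ^ (32 * 1) := by gcongr <;> omega
    _ < _ := by decide +kernel

lemma W1.lt {d : ℕ} (hd : d ≤ 6) {c : (Fin 1 → Fin (32+1)) → ℕ}
    (h : ∀ e, c e ≤ 2 * K1 * 2 ^ (32 * d) * Hc e) (e) : c e < 2 ^ 520 :=
  lt_of_le_of_lt ((h e).trans (Nat.mul_le_mul_left _ (Hc_le e)))
    ((bound1 d hd).trans (Nat.pow_lt_pow_right (by norm_num) (by norm_num)))

lemma sg1 : 520 = sg 520 32 ((0 : Fin 1) : ℕ) := by simp [sg]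

lemma W1.left {d W : ℕ} {z x : Fin 1 → ℝ} {V : ℝ} (h : W1 d W z x V) (hd : d ≤ 6) :
    W1 (d+1) (SL 520 (2 ^ 520 - 1) W 32) (fun _ => (z 0 - x 0) / 2) x V := by
  obtain ⟨c, rfl, hc, hv⟩ := h
  refine ⟨TT (kL 32) 0 c, ?_, fun e => ?_, ?_⟩
  · rw [mask1, ← SL_sound 520 0 c (W1.lt hd hc), ← sg1]
  · refine (TT_bound (kL 32) 0 c _ hc kL_sum e).trans_eq ?_
    rw [mul_add, pow_add]; ring
  · rw [ev_TT (kL 32) 0 c _ _ _ _ (fun i => kL_poly _ _ i), ← hv]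
    congr 1
    · funext a; obtain rfl : a = (0 : Fin 1) := Subsingleton.elim (α := Fin 1) a 0; rw [Function.update_self]; ring
    · rw [Function.update_eq_self]

lemma W1.right {d W : ℕ} {z x : Fin 1 → ℝ} {V : ℝ} (h : W1 d W z x V) (hd : d ≤ 6) :
    W1 (d+1) (SR 520 (2 ^ 520 - 1) W 32 32) z (fun _ => (x 0 - z 0) / 2) V := by
  obtain ⟨c, rfl, hc, hv⟩ := h
  refine ⟨TT kR 0 c, ?_, fun e => ?_, ?_⟩
  · rw [mask1, ← SR_sound 520 0 c (W1.lt hd hc), ← sg1]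
  · refine (TT_bound kR 0 c _ hc kR_sum e).trans_eq ?_
    rw [mul_add, pow_add]; ring
  · rw [ev_TT kR 0 c _ _ _ _ (fun i => kR_poly _ _ i), ← hv]
    congr 1
    · rw [Function.update_eq_self]
    · funext a; obtain rfl : a = (0 : Fin 1) := Subsingleton.elim (α := Fin 1) a 0; rw [Function.update_self]; ring

lemma tree1 (V : ℝ) (t : T1) : ∀ W d z x, chk1 t W d = true → W1 d W z x V → 0 ≤ z 0 → 0 ≤ x 0 →
    z 0 + x 0 = 3 / 2 ^ d → ((K1 - GN : ℕ) : ℝ) * 3 ^ 32 ≤ V := by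
  induction t with
  | g =>
    intro W d z x hc h hz hx hzx
    have hc' : (Nat.ble d 6 && Nat.beq ((W + TP1 - (K1 - GN) * 2 ^ (32 * d) * H1) &&& TP1) TP1) = true := hc
    rw [Bool.and_eq_true] at hc'
    have hd := Nat.le_of_ble_eq_true hc'.1
    have he := Nat.eq_of_beq_eq_true hc'.2
    obtain ⟨c, rfl, hcb, rfl⟩ := h
    have hk : (K1 - GN) * 2 ^ (32 * d) ≤ 2 * K1 * 2 ^ (32 * d) := Nat.mul_le_mul_right _ (by omega)
    have := ev_mono _ _ (leaf_sound 520 _ _ (by norm_num) c hcb (bound1 d hd) hk _ _ TP1_eq H1_eq he) z x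
      (fun a => by rw [Subsingleton.elim a 0]; exact hz) (fun a => by rw [Subsingleton.elim a 0]; exact hx)
    rw [ev_smul, ev_Hc, Fin.prod_univ_one, hzx, div_pow, ← pow_mul', Nat.cast_mul, mul_assoc] at this
    refine le_trans (le_of_eq ?_) this
    congr 1
    push_cast
    field_simp
  | s l r il ir =>
    intro W d z x hc h hz hx hzx
    have hc' : (Nat.ble d 5 && (chk1 l (SL 520 (2 ^ 520 - 1) W 32) (d + 1)
      && chk1 r (SR 520 (2 ^ 520 - 1) W 32 32) (d + 1))) = true := hc
    rw [Bool.and_eq_true, Bool.and_eq_true] at hc'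
    have hd := Nat.le_of_ble_eq_true hc'.1
    have e : (3:ℝ) / 2 ^ (d+1) = 3 / 2 ^ d / 2 := by rw [pow_succ]; field_simp
    rcases le_total (x 0) (z 0) with hl | hl
    · exact il _ _ _ _ hc'.2.1 (h.left (by omega)) (by beta_reduce; linarith) hx
        (by beta_reduce; rw [e, ← hzx]; ring)
    · exact ir _ _ _ _ hc'.2.2 (h.right (by omega)) hz (by beta_reduce; linarith)
        (by beta_reduce; rw [e, ← hzx]; ring)

/-! real programs -/
lemma decR_eq (a : ℕ) : decR a = ((decD a).1 : ℝ) - (decD a).2 := rfl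

lemma hpC_eq (l : List ℕ) : hpR (-1) 4 l = ((hpC l).1 : ℝ) - (hpC l).2 := by
  induction l with
  | nil => simp [hpR, hpC]
  | cons a l ih =>
    simp only [hpR, hpC]
    rw [ih, decR_eq]
    split
    · rename_i h
      rw [Even.neg_one_pow (Nat.even_iff.2 h)]
      simp only [dA, dS]; push_cast; ring
    · rename_i h
      rw [Odd.neg_one_pow (Nat.not_even_iff_odd.1 (fun h' => h (Nat.even_iff.1 h')))]
      simp only [dA, dS, dN]; push_cast; ring

lemma McC_eq (l : List (List ℕ)) : MR (-1) 4 (-1) 4 l = ((McC l).1 : ℝ) - (McC l).2 := by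
  induction l with
  | nil => simp [MR, McC]
  | cons a l ih =>
    simp only [MR, McC]
    rw [ih, hpC_eq]
    simp only [dA, dS, dM]; push_cast; ring

lemma RR_sq (m : ℕ) (s : ℝ) (rr : ℕ → ℕ) (h0 : rr 0 = 1) (h1 : ∀ k, (rr (k+1) : ℝ) = rr k * (k + m - 2)) (k : ℕ) :
    RR m s (s ^ 2) k = rr k * s ^ k := by
  induction k using Nat.strong_induction_on with
  | _ k ih =>
    match k with
    | 0 => simp [RR, h0]
    | 1 => simp only [RR]; rw [h1 0, h0]; push_cast; ring
    | (k+2) =>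
      simp only [RR, ih (k+1) (by omega), ih k (by omega)]
      rw [h1 (k+1), h1 k]; push_cast; ring

def rr (m : ℕ) : ℕ → ℕ
  | 0 => 1
  | k+1 => rr m k * (k + m)

lemma RR13 (s : ℝ) (k : ℕ) : RR 13 s (s ^ 2) k = rr 11 k * s ^ k :=
  RR_sq 13 s (rr 11) rfl (fun k => by simp only [rr]; push_cast; ring) k
lemma RR14 (s : ℝ) (k : ℕ) : RR 14 s (s ^ 2) k = rr 12 k * s ^ k :=
  RR_sq 14 s (rr 12) rfl (fun k => by simp only [rr]; push_cast; ring) k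

lemma RR00 (k : ℕ) : RR 13 0 0 (k+1) = 0 := by
  have := RR13 0 (k+1)
  simpa using this

lemma fR_zero (z1 x1 z2 x2 z3 x3 : ℝ) (hs : sR z1 x1 z2 x2 z3 x3 = 0) (hw : wR z1 x1 z2 x2 z3 x3 = 0) (k : ℕ)
    (D : List (ℕ × List (List ℕ))) : fR z1 x1 z2 x2 z3 x3 (k+1) D = 0 := by
  induction D generalizing k with
  | nil => rfl
  | cons d D ih => simp only [fR]; rw [ih, hs, hw, RR00]; ring

noncomputable def g1R (z x : ℝ) : List (ℕ × List (List ℕ)) → ℝ → ℕ → ℕ → ℝ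
  | [], _, _, _ => 0
  | d :: rest, p, r, k => 2 ^ d.1 * (((3 ^ rest.length * r : ℕ) : ℝ) * (MR z x z x d.2 * p))
      + g1R z x rest (((9 : ℕ) : ℝ) * ((4 * z + x) * x * p)) (r * (k + 11)) (k + 1)

lemma g1R_eq (z x : ℝ) (D : List (ℕ × List (List ℕ))) (hzx : z + x = 3) (k : ℕ) :
    fR z x z x (-1) 4 k D = g1R z x D ((9 * x * (4 * z + x)) ^ k) (rr 11 k) k := by
  have hs : sR z x z x (-1) 4 = 9 * x * (4 * z + x) := by
    unfold sR; ring
  have hw : wR z x z x (-1) 4 = (9 * x * (4 * z + x)) ^ 2 := by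
    unfold wR; ring
  induction D generalizing k with
  | nil => rfl
  | cons d D ih =>
    simp only [fR, g1R]
    rw [ih, hs, hw, RR13]
    congr 1
    · push_cast
      rw [show (-1 : ℝ) + 4 = 3 by norm_num]; ring
    · congr 1
      rw [pow_succ]; push_cast; ring

lemma f_one (z x : ℝ) (D : List (ℕ × List (List ℕ))) (hD : D.length = 17) :
    fR z x (-1) 4 z x 0 D = 2 ^ (D.headD (0, [])).1 * ((z + x) ^ 16 * MR z x (-1) 4 (D.headD (0, [])).2) := by
  cases D with
  | nil => simp at hD
  | cons d D =>
    simp only [List.length_cons] at hD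
    simp only [fR, List.headD_cons]
    rw [fR_zero _ _ _ _ _ _ (by unfold sR; ring) (by unfold wR; ring), show D.length = 16 by omega]
    simp only [RR]; ring

variable {z x : Fin 1 → ℝ}

lemma Rel.Mc (ls : List (List ℕ)) (m : ℕ) (hm : rowsOK ls m = true) :
    Rel z x (m • sing 0) (MR (z 0) (x 0) (-1) 4 ls) (fun s => McD (s 0) ls) := by
  induction ls generalizing m with
  | nil => exact Rel.zero _
  | cons l ls ih =>
    simp only [rowsOK, Bool.and_eq_true, beq_iff_eq] at hm
    have h1 := ((Rel.hp (z := z) (x := x) 0 l m (Or.inr hm.1)).mul (Rel.const (hpC l))).cast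
      (add_zero _) rfl
    have h2 : Rel z x (m • sing 0) (x 0 * (((4:ℕ):ℝ) * MR (z 0) (x 0) (-1) 4 ls))
        (fun s => dX (s 0) (dS 4 (McD (s 0) ls))) := by
      cases m with
      | zero =>
        have : ls = [] := by simpa using hm.2
        subst this
        have e : (fun s : Fin 1 → ℕ => dX (s 0) (dS 4 (McD (s 0) []))) = fun _ => (0, 0) := by
          funext s; simp [McD, dX, dS]
        rw [e]
        exact (Rel.zero _).cast rfl (by simp [MR])
      | succ m => exact (((ih m hm.2).smul 4).mx 0).cast (by rw [succ_nsmul]; abel) rfl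
    exact (h1.add h2).cast rfl (by simp only [MR]; rw [hpC_eq]; push_cast; ring)

lemma Rel.g1 (D : List (ℕ × List (List ℕ))) (hD : DOK D = true) (p : ℝ) (w : (Fin 1 → ℕ) → ℕ × ℕ)
    (r k : ℕ) (hk : k + D.length = 17) (h : Rel z x ((2 * k) • sing 0) p w) :
    Rel z x ((32:ℕ) • sing 0) (g1R (z 0) (x 0) D p r k) (fun s => g1D (s 0) D (w s) r k) := by
  induction D generalizing p w r k with
  | nil => exact Rel.zero _
  | cons d D ih =>
    simp only [DOK, Bool.and_eq_true] at hD
    simp only [List.length_cons] at hk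
    have h1 := ((((Rel.M (z := z) (x := x) 0 0 d.2 D.length hD.1).mul h).smul (3 ^ D.length * r)).shl d.1).cast
      (d' := (32:ℕ) • sing 0) (by
        rw [← two_nsmul, smul_smul, ← add_smul]; congr 1; omega) rfl
    have h2 := ih hD.2 _ _ (r * (k+11)) (k+1) (by omega) (((h.mq 0).smul 9).cast
      (d' := (2 * (k+1)) • sing 0) (by rw [← add_smul]; congr 1; omega) rfl)
    exact (h1.add h2).cast rfl (by simp only [g1R])

lemma Rel.aa (L : List ℕ) (P Q : (Fin 1 → ℕ) → ℕ × ℕ) (k : ℕ) (hk : k + 1 + L.length = 17)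
    (hP : Rel z x ((k+1) • sing 0) (RR 14 (x 0 - 2 * z 0) (4 * ((z 0 + x 0) * (z 0 + x 0))) (k+1)) P)
    (hQ : Rel z x (k • sing 0) (RR 14 (x 0 - 2 * z 0) (4 * ((z 0 + x 0) * (z 0 + x 0))) k) Q) :
    Rel z x ((32:ℕ) • sing 0) (aR (z 0) (x 0) (k+1) L) (fun s => aD (s 0) L (k+1) (P s) (Q s)) := by
  induction L generalizing P Q k with
  | nil => exact Rel.zero _
  | cons a L ih =>
    simp only [List.length_cons] at hk
    have h1 := ((hP.mhn 0 (16 + L.length)).smul a).cast (d' := (32:ℕ) • sing 0)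
      (by rw [← add_smul]; congr 1; omega) rfl
    have h2 := ((hP.mp 0).smul (2 * (k+1) + 12)).cast (d' := (k+2) • sing 0)
      (by rw [succ_nsmul _ (k+1)]; abel) rfl
    have h3 := (((hQ.mh 0).mh 0).smul (4 * ((k+1) * (k+1+11)))).neg.cast (d' := (k+2) • sing 0)
      (by rw [succ_nsmul _ (k+1), succ_nsmul]; abel) rfl
    have h4 := ih _ _ (k+1) (by omega) ((h2.add h3).cast rfl (by
      rw [RR_step 14 _ _ (k+1), Nat.add_sub_cancel]; push_cast; ring)) hP
    exact (h1.add h4).cast rfl (by simp only [aR]; ring)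

lemma AL_eq (z x : ℝ) : aR z x 0 (0 :: AL) = aR z x 1 AL := by simp [aR]

noncomputable def totR (z x : ℝ) : ℝ :=
  3 ^ 16 * (fR z x z x (-1) 4 0 DD + 2 * fR z x (-1) 4 z x 0 DD) + aR z x 0 (0 :: AL)

lemma D0_ok : rowsOK D0.2 16 = true := by decide +kernel

attribute [local irreducible] DD AL D0 K1 GN g1D aD McD hpw rep

lemma Rel.tot (hzx : z 0 + x 0 = 3) : Rel z x (fun _ => 32) (totR (z 0) (x 0)) (fun s => totD (s 0) DD D0 AL) := by
  have one : Rel z x 0 1 (fun _ => (1, 0)) := (Rel.const (1, 0)).cast rfl (by simp)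
  have h1 := Rel.g1 DD DD_ok 1 (fun _ => (1, 0)) 1 0 (by rw [DD_len]) (one.cast (by simp) rfl)
  have h2 := ((((Rel.Mc (z := z) (x := x) D0.2 16 D0_ok).mhn 0 16).shl D0.1).smul 2).cast
    (d' := (32:ℕ) • sing 0) (by rw [← add_smul]) rfl
  have h3 := Rel.aa (z := z) (x := x) AL _ _ 0 (by rw [AL_len])
    (((one.mp 0).smul 12).cast (by simp) (by simp only [RR]; push_cast; ring))
    (one.cast (by simp) (by simp [RR]))
  refine (((h1.add h2).smul (3 ^ 16)).add h3).cast (by funext a; rw [Subsingleton.elim a 0]; simp) ?_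
  rw [totR, AL_eq, g1R_eq _ _ _ hzx, f_one _ _ _ DD_len, ← D0.eq_def]
  simp only [rr, pow_zero]
  push_cast
  ring

lemma W1_root (hzx : z 0 + x 0 = 3) : W1 0 rt1 z x (K1 * 3 ^ 32 - totR (z 0) (x 0)) := by
  have h := Rel.tot hzx
  have h' := Rel.root z x h K1
  have hh := h' tot_1 tot_2 520
  clear h' h
  obtain ⟨c, hc⟩ := hh
  refine ⟨c, ?_, ?_, ?_⟩
  · rw [hc.2.1, rt1, ← H1_eq]; beta_reduce; rw [← sg1]
  · simpa using hc.1
  · rw [hc.2.2, Fin.prod_univ_one, hzx]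

lemma GN_le : GN ≤ K1 := by decide +kernel

lemma one_pt (u : ℝ) (h1 : -1 ≤ u) (h2 : u ≤ 1 / 2) :
    3 ^ 16 * (f3 DD u u 1 + 2 * f3 DD u 1 u) + a2 (0 :: AL) u ≤ GN * 3 ^ 32 := by
  have hzx : (fun _ : Fin 1 => 1 - 2 * u) 0 + (fun _ : Fin 1 => 2 + 2 * u) 0 = 3 := by ring
  have := tree1 _ tr1 rt1 0 (fun _ => 1 - 2 * u) (fun _ => 2 + 2 * u) chk1_ok
    (W1_root (z := fun _ => 1 - 2 * u) (x := fun _ => 2 + 2 * u) hzx) (by beta_reduce; linarith) (by beta_reduce; linarith)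
    (by rw [hzx]; norm_num)
  rw [Nat.cast_sub GN_le] at this
  have e : totR (1 - 2 * u) (2 + 2 * u) = 3 ^ 16 * (f3 DD u u 1 + 2 * f3 DD u 1 u) + a2 (0 :: AL) u := by
    unfold totR f3 a2
    rw [show (1:ℝ) - 2 * 1 = -1 by norm_num, show (2:ℝ) + 2 * 1 = 4 by norm_num]
  rw [← e]
  linarith

lemma aC_eq (L : List ℕ) (k : ℕ) : aR (-1) 4 k L = aC L k (rr 12 k) := by
  induction L generalizing k with
  | nil => simp [aR, aC]
  | cons a L ih =>
    simp only [aR, aC]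
    rw [ih, show (4:ℝ) - 2 * (-1) = 6 by norm_num, show (4:ℝ) * ((-1 + 4) * (-1 + 4)) = 6 ^ 2 by norm_num,
      RR14, show (-1:ℝ) + 4 = 3 by norm_num]
    push_cast
    rfl

lemma final_ineq : 3 * (3 ^ 16 * f3 DD 1 1 1 + a2 (0 :: AL) 1) + 3 * 3183 * (GN * 3 ^ 32)
    < 3 ^ 16 * (KB * 3 ^ 48) * 3183 * 3182 := by
  have e1 : f3 DD 1 1 1 = 2 ^ D0.1 * 3 ^ 16 * (((McC D0.2).1 : ℝ) - (McC D0.2).2) := by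
    unfold f3
    rw [show (1:ℝ) - 2 * 1 = -1 by norm_num, show (2:ℝ) + 2 * 1 = 4 by norm_num, f_one _ _ _ DD_len,
      ← D0.eq_def, McC_eq, show (-1:ℝ) + 4 = 3 by norm_num]
    ring
  have e2 : a2 (0 :: AL) 1 = aC AL 1 12 := by
    unfold a2
    rw [show (1:ℝ) - 2 * 1 = -1 by norm_num, show (2:ℝ) + 2 * 1 = 4 by norm_num, AL_eq, aC_eq]
    rfl
  have := final_num
  have : ((3 * (3 ^ 16 * (2 ^ D0.1 * 3 ^ 16 * (McC D0.2).1) + aC AL 1 12) + 3 * 3183 * (GN * 3 ^ 32) : ℕ) : ℝ)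
    < ((3 ^ 64 * KB * 3183 * 3182 + 3 * (3 ^ 16 * (2 ^ D0.1 * 3 ^ 16 * (McC D0.2).2)) : ℕ) : ℝ) := by
    exact_mod_cast this
  push_cast at this
  rw [e1, e2]
  linarith

end OneDSound
end Kiss

namespace Kiss
noncomputable def rt : St := root DD
def t0 : Tr := (.b .d .k)
def t1 : Tr := (.c .d .k)
def t2 : Tr := (.c (.c .d (.a .d (.b .d .g))) (.a (.b .g .k) (.b (.b .g (.a .g (.c .g (.b .g (.c
  .g (.b .g (.a .g (.c .g .g)))))))) (.c .g (.a (.b (.a (.b .g .k) (.b .g .g)) .k) (.b (.c .g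
  (.b (.b (.c .g .g) .g) .g)) .g))))))
def t3 : Tr := (.b (.a (.c (.a .g (.b .g (.c .g .g))) .k) (.c (.b (.c .g .k) (.c (.a (.b .g .g)
  .g) (.a (.b (.c (.a .g (.b .g (.c .g .g))) .k) (.c .g .g)) (.c (.b .g .g) .g)))) .k)) (.c (.a
  .k (.a (.b (.c (.a (.b .g .k) .g) .g) .k) .g)) (.a .k (.a (.c (.b .g .k) (.b .k .k)) (.c (.b
  .g .g) (.b .k .g))))))
def t4 : Tr := .k
def t5 : Tr := .k
def t6 : Tr := (.c (.b (.c (.b (.c .d .k) (.c (.a .d (.b .d .g)) .g)) .k) (.c (.c (.a .d (.b (.a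
  .g (.b (.a .g (.c .d .g)) (.a .g (.c (.a .g (.c .d .g)) .g)))) (.a .g (.a .g (.c (.a .g (.c
  (.b (.a .d (.c .d .g)) (.a .g (.a .g (.c (.b .d (.a .g (.c .d .g))) .g)))) .g)) .g))))) .g)
  (.a .g (.a (.b .g (.c .g (.a (.c .g (.b .k (.a .g (.a (.b .g .g) .g)))) .g))) (.b .g .g)))))
  .k)
def t7 : Tr := (.a (.b (.c (.a .d (.b (.c .d .g) .g)) .g) .g) (.b (.a .g (.c (.a .g (.c (.b .g
  .g) (.b .g .g))) (.a .g (.b .g .g)))) (.a .g (.c .g (.a .g (.a .g (.a .g (.b .g .g))))))))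
def t8 : Tr := (.a (.b .g (.a (.c .g (.b .g (.c .g (.a (.b .g (.c .g .g)) .g)))) (.c .g (.b .g
  (.a .g .g))))) (.a (.c .g (.b (.a (.b (.a .g .g) .g) .g) (.a (.c .g (.a .g .g)) .g))) (.a .g
  (.c .g .g))))
def t9 : Tr := (.a (.c .g (.b (.a (.c (.b .g .g) (.b (.a (.c (.b .g .g) .g) (.b .g (.c .g .g)))
  (.a .g (.a (.c .g .g) .g)))) (.c .g (.b (.a .g .g) .g))) (.a (.c .g (.a .g (.a .g .g))) (.c
  (.a .g .g) (.a .g .g))))) (.a (.c (.a (.b (.c .g (.a .g .g)) .g) .g) (.a (.a (.b .g .g) (.b .g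
  (.c .g .g))) (.b .g (.c .g .g)))) (.a .g (.a .g (.a .g (.c (.b .g .g) .g))))))
def t10 : Tr := (.c (.b (.a (.b .g (.c .g (.a .g (.c .g (.b .k .g))))) (.b (.c .g .k) (.b .g (.a
  (.c .g .g) .g)))) (.a (.b (.c (.b .g (.a .g (.a .g .g))) (.a .g (.b (.c .g (.b .g .g)) (.a .g
  .g)))) (.c (.a .g (.a .g .g)) (.a .g .g))) (.b (.b (.a (.c (.b (.a .g .g) (.a .g .g)) .g) .g)
  .g) .g))) (.b .k (.a (.b (.c (.a (.b (.c .g .k) (.c .g .g)) .g) .k) (.c .g .g)) (.a (.c (.b .g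
  .g) (.b .k .g)) (.c (.b .g .g) .g)))))
def t11 : Tr := (.a (.c (.b (.a (.b (.c (.a .g (.b .g .g)) .k) (.c (.a .g .g) .g)) .g) (.c (.a
  (.a .g (.b .g .g)) .g) (.a (.b .g .g) .g))) (.b .k (.a (.c (.b .g .g) (.a .g .g)) (.b .g
  .g)))) (.a (.c (.b .g .g) .g) (.a .g (.b (.c .g .k) (.c .g .g)))))
def t12 : Tr := .k
def t13 : Tr := (.b (.c (.c (.c (.a .g (.b .g (.a (.c (.b .g .k) (.b .g .k)) (.b .g .g)))) (.a
  .g (.b .g .g))) (.c (.b .g (.a .k .g)) (.b (.a (.c .g (.a (.b .g .k) (.b .g .g))) (.b (.c .g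
  (.a .g .g)) .g)) (.a .k (.a (.b (.c .g .g) .k) .g))))) (.c (.a (.b (.c (.a (.b .g .k) .g) (.a
  (.b .g .k) .g)) .k) (.c (.b .g .g) (.b (.a (.b .g .g) .g) .g))) (.b (.a (.c (.a .g .g) .g) (.c
  (.b .g .g) (.b .g .g))) (.a .k .g)))) .k)
def t14 : Tr := (.c (.a (.c .g (.b (.c .g (.a (.a .g (.c .g .g)) .g)) (.a (.c .g (.a .g (.b .g
  (.a .g .g)))) .g))) (.c (.a .g (.b .g .g)) (.a .g (.b .g .g)))) (.a (.c (.a (.b (.c (.a .g (.b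
  .g .g)) .g) (.a (.c .g .g) .g)) (.b (.c .g .g) .g)) (.b (.a (.a .g .g) .g) (.a .g .g))) (.a
  (.c .g .g) (.a .g (.c (.a .g (.c (.b .g .g) (.b .g .g))) (.b .g (.a .g (.c .g (.b .g
  .g)))))))))
def t15 : Tr := (.a (.b (.c (.c (.b (.a (.b (.a .g (.c (.a (.b .g .d) .d) .g)) (.a .k (.c .d
  .g))) .g) (.a .k .g)) .g) (.c (.c .g (.a (.b .g .k) .g)) (.a (.b (.c (.a (.b .g .k) .g) (.a
  (.b .g .k) .g)) .k) (.b .g .g)))) .k) (.b (.c .g (.a .g (.c .g (.b (.a .g (.a .g (.b (.a .g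
  (.c .g .g)) .g))) .g)))) (.c .g .g)))
def t16 : Tr := (.a (.b (.a (.c (.b (.c .g (.a (.b .g .k) .g)) .k) (.b (.c (.a (.b .g .k) .g)
  .g) .k)) (.b (.c (.c .g .g) (.c .g .g)) (.c .g (.c .g (.b (.a (.c .g .g) .g) .g))))) .k) (.b
  (.a (.b (.c .g .g) .g) (.b (.a .g (.c (.a .g (.c (.b .g .g) (.b .g .g))) (.c (.a .g (.c (.b .g
  .g) (.a .g (.b .g .g)))) .g))) (.a .g (.c .g (.c .g .g))))) (.c .g .g)))
def t17 : Tr := (.b (.c (.a (.b (.c (.a (.c .g .g) (.c .g .g)) .k) .k) (.c (.b (.c (.b .g .g)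
  .g) .g) (.b .k (.b (.c (.a .g .g) .k) .g)))) .k) .k)
def t18 : Tr := (.c (.a (.b (.c (.a .g .g) .k) (.c (.a (.a .g .g) .g) (.a (.c (.a .g .g) .g)
  .g))) (.a (.b .g (.c .g .g)) (.b (.c .g .k) (.c .g .g)))) .k)
def t19 : Tr := (.b (.a (.b (.c (.a (.b .g .g) .g) (.a (.b (.c .g .g) (.a .k (.c .g (.c .g (.b
  .g .g))))) .g)) (.a .k .g)) (.a .g (.a .g (.b (.c .g .g) (.c .g .g))))) (.a .k (.c (.b .g (.a
  .k (.c (.b .g (.a .k (.c .g .g))) (.a .g (.b .g (.a .g (.b .g (.a .g (.b .g (.c .g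
  .g)))))))))) (.b .g (.a .k (.a .g (.b .g (.c .g (.b .g (.a .k (.c .g .g)))))))))))
def t20 : Tr := (.a (.b (.c (.b (.c (.a (.b (.c .g .k) (.c .g .g)) .g) .k) (.c (.a .k .g) .g))
  .k) .k) (.b (.c (.a .g (.a .g (.c (.a .g (.b .g .g)) (.b .k .g)))) .k) (.c (.a .g (.b .g (.a
  .g (.b .g (.c .g .g))))) (.a .g (.b .g (.c .g (.c .g (.a .g (.b .k (.a .g (.b .g (.c .g (.a .g
  (.b .g (.c .g (.a .g .g))))))))))))))))
theorem c_all : ∃ t, chk t rt = true := by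
  have c0 : chk t0 (L0 (L2 (L1 (L0 rt)))) = true := by decide +kernel
  have c1 : chk t1 (L1 (R0 (L2 (L1 (L0 rt))))) = true := by decide +kernel
  have c2 : chk t2 (L2 (R1 (R0 (L2 (L1 (L0 rt)))))) = true := by decide +kernel
  have c3 : chk t3 (R2 (R1 (R0 (L2 (L1 (L0 rt)))))) = true := by decide +kernel
  have c4 : chk t4 (R2 (L1 (L0 rt))) = true := by decide +kernel
  have c5 : chk t5 (R1 (L0 rt)) = true := by decide +kernel
  have c6 : chk t6 (L1 (L2 (L1 (R0 rt)))) = true := by decide +kernel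
  have c7 : chk t7 (L2 (L2 (R1 (L2 (L1 (R0 rt)))))) = true := by decide +kernel
  have c8 : chk t8 (L1 (R2 (L2 (R1 (L2 (L1 (R0 rt))))))) = true := by decide +kernel
  have c9 : chk t9 (R1 (R2 (L2 (R1 (L2 (L1 (R0 rt))))))) = true := by decide +kernel
  have c10 : chk t10 (L0 (R2 (R1 (L2 (L1 (R0 rt)))))) = true := by decide +kernel
  have c11 : chk t11 (R0 (R2 (R1 (L2 (L1 (R0 rt)))))) = true := by decide +kernel
  have c12 : chk t12 (R2 (L1 (R0 rt))) = true := by decide +kernel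
  have c13 : chk t13 (L0 (L2 (R1 (R0 rt)))) = true := by decide +kernel
  have c14 : chk t14 (L1 (R0 (L2 (R1 (R0 rt))))) = true := by decide +kernel
  have c15 : chk t15 (L2 (R1 (R0 (L2 (R1 (R0 rt)))))) = true := by decide +kernel
  have c16 : chk t16 (R2 (R1 (R0 (L2 (R1 (R0 rt)))))) = true := by decide +kernel
  have c17 : chk t17 (L0 (R2 (R1 (R0 rt)))) = true := by decide +kernel
  have c18 : chk t18 (L1 (R0 (R2 (R1 (R0 rt))))) = true := by decide +kernel
  have c19 : chk t19 (L2 (R1 (R0 (R2 (R1 (R0 rt)))))) = true := by decide +kernel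
  have c20 : chk t20 (R2 (R1 (R0 (R2 (R1 (R0 rt)))))) = true := by decide +kernel
  exact ⟨_, (chk_a rfl (chk_b rfl (chk_c rfl (chk_a rfl c0 (chk_b rfl c1 (chk_c rfl c2 c3))) c4)
  c5) (chk_b rfl (chk_c rfl (chk_b rfl c6 (chk_c rfl (chk_c rfl c7 (chk_b rfl c8 c9)) (chk_a rfl
  c10 c11))) c12) (chk_c rfl (chk_a rfl c13 (chk_b rfl c14 (chk_c rfl c15 c16))) (chk_a rfl c17
  (chk_b rfl c18 (chk_c rfl c19 c20))))))⟩
end Kiss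

namespace Kiss
attribute [local irreducible] DD AL D0 K1 GN KB root chk

lemma final (hT : ∃ t, chk t (root DD) = true) (S : Finset (EuclideanSpace ℝ (Fin 14)))
    (hnorm : ∀ x ∈ S, ‖x‖ = 1)
    (hdist : ∀ x ∈ S, ∀ y ∈ S, x ≠ y → 1 ≤ dist x y) (hc : S.card = 3184) : False := by
  have lo : ∀ x ∈ S, ∀ y ∈ S, -1 ≤ inner ℝ x y := by
    intro x hx y hy
    have := abs_real_inner_le_norm x y
    rw [hnorm x hx, hnorm y hy] at this
    have := (abs_le.1 this).1
    linarith
  have hi : ∀ x ∈ S, ∀ y ∈ S, x ≠ y → inner ℝ x y ≤ 1 / 2 := by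
    intro x hx y hy hxy
    have h1 := hdist x hx y hy hxy
    have h2 := norm_sub_sq_real x y
    rw [hnorm x hx, hnorm y hy, ← dist_eq_norm] at h2
    nlinarith
  have key := combine S (fun x y => inner ℝ x y) (fun x y => real_inner_comm y x)
    (fun x hx => by
      beta_reduce; rw [real_inner_self_eq_norm_sq, hnorm x hx]; norm_num)
    (fun a b t => 3 ^ 16 * f3 DD a b t) (fun a b t => by beta_reduce; rw [f3_symm]) (a2 (0 :: AL))
    (3 ^ 16 * (KB * 3 ^ 48)) (-(GN * 3 ^ 32))
    (by
      apply Finset.sum_nonneg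
      intro x hx
      have h := fR_psd x (hnorm x hx) S hnorm 0 DD
      have h' := mul_nonneg (show (0:ℝ) ≤ 3 ^ 16 by positivity) h
      simp only [Finset.mul_sum] at h'
      exact h')
    (aR_psd S hnorm 0 (0 :: AL))
    (by
      intro x hx y hy z hz hxy hxz hyz
      have h := all3 hT (inner ℝ x y) (inner ℝ x z) (inner ℝ y z) (hi x hx y hy hxy) (hi x hx z hz hxz)
        (hi y hy z hz hyz) (lo x hx y hy) (lo x hx z hz) (lo y hy z hz)
        (det_nonneg x y z (hnorm x hx) (hnorm y hy) (hnorm z hz))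
      beta_reduce
      linarith)
    (by
      intro x hx z hz hxz
      have h := one_pt (inner ℝ x z) (lo x hx z hz) (hi x hx z hz hxz)
      beta_reduce
      linarith)
  have fin := final_ineq
  rw [hc] at key
  have := nonneg_of_mul_nonneg_right key (by norm_num)
  push_cast at this
  linarith

end Kiss

theorem kissing_number_dim14_le_3183
    (S : Finset (EuclideanSpace ℝ (Fin 14)))
    (hnorm : ∀ x ∈ S, ‖x‖ = 1)
    (hdist : ∀ x ∈ S, ∀ y ∈ S, x ≠ y → 1 ≤ dist x y) :
    S.card ≤ 3183 := by
  by_contra h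
  obtain ⟨T, hT, hc⟩ := Finset.exists_subset_card_eq (show 3184 ≤ S.card by omega)
  exact Kiss.final Kiss.c_all T (fun x hx => hnorm x (hT hx))
    (fun x hx y hy => hdist x (hT hx) y (hT hy)) hc
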